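/- arXiv:1403.3642 — 2 statements merged into one kernel-verified Lean document; each statement's English description precedes it below -/
import Mathlib

section
/- Let E₀ = { (−cos φ, 0, sin φ) : φ ∈ [−π/2, π/2] } ⊆ S² be a closed half great circle. Then Λ(E₀) = 3/4, and the infimum defining Λ(E₀) is attained by the restriction to S² ∖ E₀ of the function f(x,y,z) = √ρ · sin(θ/2), where (ρ,θ) with ρ = √(x²+y²) and θ ∈ (−π,π) are the polar coordinates of (x,y) (equivalently f(x,y,z) = Im √(x+iy) for the principal branch of the square root): this f satisfies ∫_{S²} f dH² = 0, 0 < ∫_{S²} f² dH² < ∞ and ∫_{S² ∖ E₀} |∇_τ f|² dH² = (3/4) ∫_{S²} f² dH², while every admissible u satisfies ∫_{S² ∖ E₀} |∇_τ u|² dH² ≥ (3/4) ∫_{S²} u² dH². -/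
open MeasureTheory Metric Set Filter
open scoped ENNReal NNReal Topology

noncomputable section

/-- `ℝ^N` as a Euclidean space. -/
abbrev Rn (N : ℕ) := EuclideanSpace ℝ (Fin N)

/-- `u` is locally Lipschitz on the set `s` (neighborhoods taken within `s`). -/
def LocLipOn (N : ℕ) (u : Rn N → ℝ) (s : Set (Rn N)) : Prop :=
  ∀ x ∈ s, ∃ t ∈ nhdsWithin x s, ∃ C : ℝ≥0, LipschitzOnWith C u t

/-- The unit sphere `S² ⊆ ℝ³`. -/
def S2 : Set (Rn 3) := sphere (0 : Rn 3) 1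

/-- The open cone (with vertex removed) over a subset `U` of the sphere. -/
def coneOver (U : Set (Rn 3)) : Set (Rn 3) :=
  {z | ∃ t : ℝ, 0 < t ∧ ∃ y ∈ U, z = t • y}

/-- Admissible test functions for the Rayleigh quotient on `S² ∖ K`: a locally Lipschitz
function on `S² ∖ K` is encoded by its radially `0`-homogeneous extension `g` (so that
the ambient gradient of `g` at points of the sphere is the tangential gradient `∇_τ`),
with `0 < ∫_{S²} g² dH² < ∞`, finite tangential energy on `S² ∖ K`, and zero mean. -/
def SphAdmissible (K : Set (Rn 3)) (g : Rn 3 → ℝ) : Prop :=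
  (∀ (y : Rn 3) (t : ℝ), 0 < t → g (t • y) = g y) ∧
  LocLipOn 3 g (coneOver (S2 \ K)) ∧
  0 < (∫⁻ y in S2, ENNReal.ofReal ((g y) ^ 2) ∂μH[(2 : ℝ)]) ∧
  (∫⁻ y in S2, ENNReal.ofReal ((g y) ^ 2) ∂μH[(2 : ℝ)]) < ⊤ ∧
  (∫⁻ y in S2 \ K, ENNReal.ofReal (‖gradient g y‖ ^ 2) ∂μH[(2 : ℝ)]) < ⊤ ∧
  (∫ y in S2, g y ∂μH[(2 : ℝ)]) = 0

/-- `Λ(K)`: the infimum of the Rayleigh quotients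
`∫_{S² ∖ K} |∇_τ u|² dH² / ∫_{S²} u² dH²` over admissible `u`; for `S² ∖ K` connected
this is the first nonzero Neumann eigenvalue of the Laplace–Beltrami operator
on `S² ∖ K`. -/
def Lam (K : Set (Rn 3)) : ℝ≥0∞ :=
  sInf { q : ℝ≥0∞ | ∃ g : Rn 3 → ℝ, SphAdmissible K g ∧
    q = (∫⁻ y in S2 \ K, ENNReal.ofReal (‖gradient g y‖ ^ 2) ∂μH[(2 : ℝ)]) /
        (∫⁻ y in S2, ENNReal.ofReal ((g y) ^ 2) ∂μH[(2 : ℝ)]) }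

/-- The closed half great circle `E₀ = {(-cos φ, 0, sin φ) : φ ∈ [-π/2, π/2]} ⊆ S²`. -/
def halfCircle : Set (Rn 3) :=
  {x | ∃ φ : ℝ, φ ∈ Icc (-(Real.pi / 2)) (Real.pi / 2) ∧
    x 0 = -Real.cos φ ∧ x 1 = 0 ∧ x 2 = Real.sin φ}

/-- The cracktip function `f(x, y, z) = √ρ sin(θ/2) = Im √(x + iy)` (principal branch),
where `(ρ, θ)` are the polar coordinates of `(x, y)`. -/
def cracktip (x : Rn 3) : ℝ :=
  (((x 0 : ℂ) + (x 1 : ℂ) * Complex.I) ^ ((1 : ℂ) / 2)).im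

/-- The radially `0`-homogeneous extension of the restriction of the cracktip function
to the unit sphere (this agrees with `cracktip` on `S²`). -/
def cracktip0 (x : Rn 3) : ℝ := cracktip (‖x‖⁻¹ • x)


theorem ftc_lip {f f' : ℝ → ℝ} {a b : ℝ} {K : ℝ≥0} (hab : a ≤ b)
    (hf : LipschitzOnWith K f (Icc a b))
    (h : ∀ᵐ t, t ∈ Ioo a b → HasDerivAt f (f' t) t) :
    IntervalIntegrable f' volume a b ∧ ∫ t in a..b, f' t = f b - f a := by
  have hac : AbsolutelyContinuousOnInterval f a b := by
    apply LipschitzOnWith.absolutelyContinuousOnInterval (K := K)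
    rwa [uIcc_of_le hab]
  have he : ∀ᵐ t, t ∈ uIoc a b → deriv f t = f' t := by
    have hb : ∀ᵐ t : ℝ, t ≠ b := by
      simp [ae_iff, measure_singleton]
    filter_upwards [h, hb] with t ht htb hm
    rw [uIoc_of_le hab] at hm
    exact (ht ⟨hm.1, lt_of_le_of_ne hm.2 htb⟩).deriv
  constructor
  · refine hac.intervalIntegrable_deriv.congr_ae ?_
    exact (ae_restrict_iff' measurableSet_uIoc).2 he
  · rw [← hac.integral_deriv_eq_sub]
    exact (intervalIntegral.integral_congr_ae he).symm


theorem cs_lint {f g : ℝ → ℝ≥0∞} {μ : Measure ℝ} (hf : AEMeasurable f μ) (hg : AEMeasurable g μ) :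
    (∫⁻ t, f t * g t ∂μ) ^ 2 ≤ (∫⁻ t, f t ^ 2 ∂μ) * ∫⁻ t, g t ^ 2 ∂μ := by
  have h := ENNReal.lintegral_mul_le_Lp_mul_Lq μ Real.HolderConjugate.two_two hf hg
  have h2 : (∫⁻ t, f t * g t ∂μ) ^ 2 ≤
    ((∫⁻ t, f t ^ (2:ℝ) ∂μ) ^ (1 / (2:ℝ)) * (∫⁻ t, g t ^ (2:ℝ) ∂μ) ^ (1 / (2:ℝ))) ^ 2 :=
    pow_le_pow_left₀ (zero_le) h 2
  refine h2.trans (le_of_eq ?_)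
  rw [mul_pow]
  simp only [← ENNReal.rpow_natCast, ← ENNReal.rpow_mul]
  norm_num

theorem cs_step {A B ψ ψ' : ℝ → ℝ} {x y : ℝ} (hxy : x < y) (hB : Measurable B)
    (hψ : ∀ t, HasDerivAt ψ (ψ' t) t) (hψ'c : Continuous ψ')
    (hpos : ∀ t ∈ Ioo x y, 0 < ψ' t)
    (h : ENNReal.ofReal |A y - A x| ≤ ∫⁻ t in Ioo x y, ENNReal.ofReal |B t|) :
    ENNReal.ofReal ((A y - A x) ^ 2) ≤
      (∫⁻ t in Ioo x y, ENNReal.ofReal (B t ^ 2 / ψ' t)) * ENNReal.ofReal (ψ y - ψ x) := by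
  have h1 : ENNReal.ofReal ((A y - A x) ^ 2) = ENNReal.ofReal |A y - A x| ^ 2 := by
    rw [← ENNReal.ofReal_pow (abs_nonneg _), sq_abs]
  have h2 : ENNReal.ofReal (ψ y - ψ x) = ∫⁻ t in Ioo x y, ENNReal.ofReal (ψ' t) := by
    rw [← intervalIntegral.integral_eq_sub_of_hasDerivAt (fun t _ => hψ t)
      (hψ'c.intervalIntegrable x y), intervalIntegral.integral_of_le hxy.le,
      integral_Ioc_eq_integral_Ioo, ofReal_integral_eq_lintegral_ofReal]
    · exact (hψ'c.integrableOn_Icc).mono_set Ioo_subset_Icc_self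
    · exact (ae_restrict_iff' measurableSet_Ioo).2 (ae_of_all _ fun t ht => (hpos t ht).le)
  rw [h1, h2]
  have hm : Measurable ψ' := hψ'c.measurable
  refine (pow_le_pow_left₀ zero_le h 2).trans ?_
  have e : ∫⁻ t in Ioo x y, ENNReal.ofReal |B t| = ∫⁻ t in Ioo x y,
      ENNReal.ofReal (|B t| / √(ψ' t)) * ENNReal.ofReal (√(ψ' t)) := by
    refine setLIntegral_congr_fun measurableSet_Ioo fun t ht => ?_
    have := hpos t ht
    rw [← ENNReal.ofReal_mul (by positivity), div_mul_cancel₀]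
    exact (Real.sqrt_pos.2 this).ne'
  rw [e]
  refine (cs_lint ?_ ?_).trans (le_of_eq ?_)
  · exact (by fun_prop : Measurable _).aemeasurable
  · exact (by fun_prop : Measurable _).aemeasurable
  · congr 1
    · refine setLIntegral_congr_fun measurableSet_Ioo fun t ht => ?_
      have := hpos t ht
      rw [← ENNReal.ofReal_pow (by positivity), div_pow, sq_abs, Real.sq_sqrt this.le]
    · refine setLIntegral_congr_fun measurableSet_Ioo fun t ht => ?_
      have := hpos t ht
      rw [← ENNReal.ofReal_pow (by positivity), Real.sq_sqrt this.le]

/-- one–sided kernel -/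
theorem poinc_half {A B ψ ψ' m W : ℝ → ℝ} {α β : ℝ} {P : ℝ → Prop} (hB : Measurable B)
    (hψ : ∀ t, HasDerivAt ψ (ψ' t) t) (hψ'c : Continuous ψ')
    (hpos : ∀ t ∈ Ioo α β, 0 < ψ' t) (hm : Continuous m) (hm0 : ∀ t ∈ Ioo α β, 0 ≤ m t)
    (hQ : ∀ t ∈ Ioo α β, (∫⁻ x in Ioo α β, ∫⁻ y in Ioo α β, (if x < t ∧ t < y then
      ENNReal.ofReal ((ψ y - ψ x) * (m x * m y)) else 0)) ≤ ENNReal.ofReal (ψ' t * W t))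
    (hP : ∀ᵐ x, x ∈ Ioo α β → P x)
    (h : ∀ x ∈ Ioo α β, ∀ y ∈ Ioo α β, P x → P y → x < y →
      ENNReal.ofReal |A y - A x| ≤ ∫⁻ t in Ioo x y, ENNReal.ofReal |B t|) :
    (∫⁻ x in Ioo α β, ∫⁻ y in Ioo α β, (if x < y then
      ENNReal.ofReal ((A y - A x) ^ 2 * (m x * m y)) else 0)) ≤
      ∫⁻ t in Ioo α β, ENNReal.ofReal (B t ^ 2 * W t) := by
  have hψc : Continuous ψ := continuous_iff_continuousAt.2 fun t => (hψ t).continuousAt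
  have hPr : ∀ᵐ x ∂(volume.restrict (Ioo α β)), x ∈ Ioo α β ∧ P x := by
    rw [ae_restrict_iff' measurableSet_Ioo]
    filter_upwards [hP] with x hx hxI using ⟨hxI, hx hxI⟩
  -- the kernel
  let k : ℝ → ℝ → ℝ → ℝ≥0∞ := fun x y t => if x < t ∧ t < y then
      ENNReal.ofReal ((ψ y - ψ x) * (m x * m y)) else 0
  have hk : Measurable (fun p : ℝ × ℝ × ℝ => k p.1 p.2.1 p.2.2) := by
    apply Measurable.ite
    · have m1 : MeasurableSet {p : ℝ × ℝ × ℝ | p.1 < p.2.2} :=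
        measurableSet_lt (by fun_prop) (by fun_prop)
      have m2 : MeasurableSet {p : ℝ × ℝ × ℝ | p.2.2 < p.2.1} :=
        measurableSet_lt (by fun_prop) (by fun_prop)
      exact m1.inter m2
    · have := hψc.measurable; have := hm.measurable
      fun_prop
    · fun_prop
  let b : ℝ → ℝ≥0∞ := fun t => ENNReal.ofReal (B t ^ 2 / ψ' t)
  have hb : Measurable b := by
    have := hψ'c.measurable
    fun_prop
  have step : (∫⁻ x in Ioo α β, ∫⁻ y in Ioo α β, (if x < y then
      ENNReal.ofReal ((A y - A x) ^ 2 * (m x * m y)) else 0)) ≤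
      ∫⁻ x in Ioo α β, ∫⁻ y in Ioo α β, ∫⁻ t in Ioo α β, b t * k x y t := by
    refine lintegral_mono_ae ?_
    filter_upwards [hPr] with x hx
    refine lintegral_mono_ae ?_
    filter_upwards [hPr] with y hy
    split_ifs with hxy
    · have hsub : Ioo x y ⊆ Ioo α β := Ioo_subset_Ioo hx.1.1.le hy.1.2.le
      have c := cs_step (A := A) hxy hB hψ hψ'c (fun t ht => hpos t (hsub ht))
        (h x hx.1 y hy.1 hx.2 hy.2 hxy)
      have hmm : 0 ≤ m x * m y := mul_nonneg (hm0 x hx.1) (hm0 y hy.1)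
      rw [ENNReal.ofReal_mul (sq_nonneg _)]
      calc _ ≤ ((∫⁻ t in Ioo x y, b t) * ENNReal.ofReal (ψ y - ψ x)) * ENNReal.ofReal (m x * m y) := by
            gcongr
        _ = ∫⁻ t in Ioo x y, b t * ENNReal.ofReal ((ψ y - ψ x) * (m x * m y)) := by
            rw [lintegral_mul_const _ hb, ENNReal.ofReal_mul' hmm, mul_assoc]
        _ = ∫⁻ t in Ioo x y, b t * k x y t := by
            refine setLIntegral_congr_fun measurableSet_Ioo fun t ht => ?_
            simp only [k]
            rw [if_pos ⟨ht.1, ht.2⟩]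
        _ ≤ _ := lintegral_mono_set hsub
    · exact zero_le
  refine step.trans ?_
  have sw : (∫⁻ x in Ioo α β, ∫⁻ y in Ioo α β, ∫⁻ t in Ioo α β, b t * k x y t) =
      ∫⁻ t in Ioo α β, b t * ∫⁻ x in Ioo α β, ∫⁻ y in Ioo α β, k x y t := by
    have e1 : ∀ x, (∫⁻ y in Ioo α β, ∫⁻ t in Ioo α β, b t * k x y t) =
        ∫⁻ t in Ioo α β, ∫⁻ y in Ioo α β, b t * k x y t := by
      intro x
      refine lintegral_lintegral_swap ?_
      have : Measurable (fun p : ℝ × ℝ => k x p.1 p.2) :=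
        hk.comp (by fun_prop : Measurable (fun p : ℝ × ℝ => (x, p.1, p.2)))
      exact ((hb.comp measurable_snd).mul this).aemeasurable
    simp_rw [e1]
    have hm2 : Measurable (fun p : (ℝ × ℝ) × ℝ => k p.1.1 p.2 p.1.2) :=
      hk.comp (by fun_prop : Measurable (fun p : (ℝ × ℝ) × ℝ => (p.1.1, p.2, p.1.2)))
    rw [lintegral_lintegral_swap]
    · refine lintegral_congr fun t => ?_
      have hy : ∀ x, Measurable (fun y => k x y t) := fun x =>
        hk.comp (by fun_prop : Measurable (fun y : ℝ => (x, y, t)))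
      rw [← lintegral_const_mul]
      · refine lintegral_congr fun x => ?_
        rw [lintegral_const_mul _ (hy x)]
      · have : Measurable (fun p : ℝ × ℝ => k p.1 p.2 t) :=
          hk.comp (by fun_prop : Measurable (fun p : ℝ × ℝ => (p.1, p.2, t)))
        exact Measurable.lintegral_prod_right' (f := fun p : ℝ × ℝ => k p.1 p.2 t) this
    · have : Measurable (fun p : (ℝ × ℝ) × ℝ => b p.1.2 * k p.1.1 p.2 p.1.2) :=
        (hb.comp (by fun_prop)).mul hm2
      exact (Measurable.lintegral_prod_right' this).aemeasurable
  rw [sw]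
  refine setLIntegral_mono_ae' measurableSet_Ioo (ae_of_all _ fun t ht => ?_)
  calc _ ≤ b t * ENNReal.ofReal (ψ' t * W t) := by gcongr; exact hQ t ht
    _ = _ := by
      have := hpos t ht
      simp only [b]
      rw [← ENNReal.ofReal_mul (by positivity)]
      congr 1
      field_simp


theorem lint_deriv {F f : ℝ → ℝ} {a b : ℝ} (hab : a ≤ b) (hF : ∀ t, HasDerivAt F (f t) t)
    (hf : Continuous f) (h0 : ∀ t ∈ Ioo a b, 0 ≤ f t) :
    ∫⁻ t in Ioo a b, ENNReal.ofReal (f t) = ENNReal.ofReal (F b - F a) := by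
  rw [← intervalIntegral.integral_eq_sub_of_hasDerivAt (fun t _ => hF t)
      (hf.intervalIntegrable a b), intervalIntegral.integral_of_le hab,
      integral_Ioc_eq_integral_Ioo, ofReal_integral_eq_lintegral_ofReal]
  · exact (hf.integrableOn_Icc).mono_set Ioo_subset_Icc_self
  · exact (ae_restrict_iff' measurableSet_Ioo).2 (ae_of_all _ fun t ht => h0 t ht)

theorem Q_calc {ψ m M N : ℝ → ℝ} {α β : ℝ} (hψ : Continuous ψ) (hm : Continuous m)
    (hmono : MonotoneOn ψ (Icc α β)) (hm0 : ∀ t ∈ Ioo α β, 0 ≤ m t)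
    (hM : ∀ t, HasDerivAt M (m t) t) (hN : ∀ t, HasDerivAt N (ψ t * m t) t) :
    ∀ t ∈ Ioo α β, (∫⁻ x in Ioo α β, ∫⁻ y in Ioo α β, (if x < t ∧ t < y then
      ENNReal.ofReal ((ψ y - ψ x) * (m x * m y)) else 0)) =
      ENNReal.ofReal ((N β - N t) * (M t - M α) - (N t - N α) * (M β - M t)) := by
  intro t ht
  have h1 : ∀ x ∈ Ioo α t, (∫⁻ y in Ioo t β, ENNReal.ofReal ((ψ y - ψ x) * (m x * m y))) =
      ENNReal.ofReal ((N β - N t) * m x - ψ x * m x * (M β - M t)) := by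
    intro x hx
    have hxI : x ∈ Ioo α β := ⟨hx.1, hx.2.trans ht.2⟩
    rw [lint_deriv (F := fun y => N y * m x - ψ x * m x * M y) ht.2.le]
    · congr 1; ring
    · intro y
      have := ((hN y).mul_const (m x)).sub ((hM y).const_mul (ψ x * m x))
      exact this.congr_deriv (by ring)
    · fun_prop
    · intro y hy
      have hyI : y ∈ Ioo α β := ⟨ht.1.trans hy.1, hy.2⟩
      refine mul_nonneg (sub_nonneg.2 (hmono (Ioo_subset_Icc_self hxI) (Ioo_subset_Icc_self hyI)
        (hx.2.trans hy.1).le)) (mul_nonneg (hm0 _ hxI) (hm0 _ hyI))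
  have hnn : ∀ x ∈ Ioo α t, 0 ≤ (N β - N t) * m x - ψ x * m x * (M β - M t) := by
    intro x hx
    have hxI : x ∈ Ioo α β := ⟨hx.1, hx.2.trans ht.2⟩
    have : 0 ≤ ∫ y in t..β, ((ψ y - ψ x) * (m x * m y)) := by
      refine intervalIntegral.integral_nonneg_of_ae_restrict ht.2.le ?_
      refine (ae_restrict_iff' measurableSet_Icc).2 ?_
      have hb : ∀ᵐ t : ℝ, t ≠ β := by simp [ae_iff, measure_singleton]
      filter_upwards [hb] with y hyb hy
      have hyI : y ∈ Ioo α β := ⟨ht.1.trans_le hy.1, lt_of_le_of_ne hy.2 hyb⟩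
      refine mul_nonneg (sub_nonneg.2 (hmono (Ioo_subset_Icc_self hxI) (Ioo_subset_Icc_self hyI)
        (hx.2.trans_le hy.1).le)) (mul_nonneg (hm0 _ hxI) (hm0 _ hyI))
    rw [intervalIntegral.integral_eq_sub_of_hasDerivAt
      (f := fun y => N y * m x - ψ x * m x * M y)] at this
    · linarith
    · intro y _
      have := ((hN y).mul_const (m x)).sub ((hM y).const_mul (ψ x * m x))
      exact this.congr_deriv (by ring)
    · exact Continuous.intervalIntegrable (by fun_prop) _ _
  have h2 : (∫⁻ x in Ioo α β, ∫⁻ y in Ioo α β, (if x < t ∧ t < y then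
      ENNReal.ofReal ((ψ y - ψ x) * (m x * m y)) else 0)) =
      ∫⁻ x in Ioo α t, ∫⁻ y in Ioo t β, ENNReal.ofReal ((ψ y - ψ x) * (m x * m y)) := by
    have e1 : Ioo α t = Ioo α β ∩ Iio t := by
      ext x; simp only [mem_Ioo, mem_inter_iff, mem_Iio]
      constructor
      · rintro ⟨a, b⟩; exact ⟨⟨a, b.trans ht.2⟩, b⟩
      · rintro ⟨⟨a, _⟩, b⟩; exact ⟨a, b⟩
    have e2 : Ioo t β = Ioo α β ∩ Ioi t := by
      ext x; simp only [mem_Ioo, mem_inter_iff, mem_Ioi]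
      constructor
      · rintro ⟨a, b⟩; exact ⟨⟨ht.1.trans a, b⟩, a⟩
      · rintro ⟨⟨_, a⟩, b⟩; exact ⟨b, a⟩
    rw [e1, e2, inter_comm, inter_comm _ (Ioi t), ← setLIntegral_indicator measurableSet_Iio]
    refine lintegral_congr fun x => ?_
    by_cases hx : x < t
    · rw [indicator_of_mem (show x ∈ Iio t from hx), ← setLIntegral_indicator measurableSet_Ioi]
      refine lintegral_congr fun y => ?_
      simp [indicator, hx]
    · rw [indicator_of_notMem (show x ∉ Iio t from hx)]
      simp [hx]
  rw [h2, setLIntegral_congr_fun measurableSet_Ioo h1,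
    lint_deriv (F := fun x => (N β - N t) * M x - N x * (M β - M t)) ht.1.le]
  · congr 1; ring
  · intro x
    exact ((hM x).const_mul _).sub ((hN x).mul_const _)
  · fun_prop
  · exact hnn

theorem poinc_full {A B ψ ψ' m M N W : ℝ → ℝ} {α β : ℝ} {P : ℝ → Prop}
    (hA : Measurable A) (hB : Measurable B)
    (hψ : ∀ t, HasDerivAt ψ (ψ' t) t) (hψ'c : Continuous ψ')
    (hpos : ∀ t ∈ Ioo α β, 0 < ψ' t) (hm : Continuous m) (hm0 : ∀ t ∈ Ioo α β, 0 ≤ m t)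
    (hM : ∀ t, HasDerivAt M (m t) t) (hN : ∀ t, HasDerivAt N (ψ t * m t) t)
    (hW : ∀ t, (N β - N t) * (M t - M α) - (N t - N α) * (M β - M t) = ψ' t * W t)
    (hP : ∀ᵐ x, x ∈ Ioo α β → P x)
    (h : ∀ x ∈ Ioo α β, ∀ y ∈ Ioo α β, P x → P y → x < y →
      ENNReal.ofReal |A y - A x| ≤ ∫⁻ t in Ioo x y, ENNReal.ofReal |B t|) :
    (∫⁻ x in Ioo α β, ∫⁻ y in Ioo α β,
      ENNReal.ofReal ((A y - A x) ^ 2 * (m x * m y))) ≤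
      2 * ∫⁻ t in Ioo α β, ENNReal.ofReal (B t ^ 2 * W t) := by
  have hψc : Continuous ψ := continuous_iff_continuousAt.2 fun t => (hψ t).continuousAt
  have hmono : MonotoneOn ψ (Icc α β) := by
    refine monotoneOn_of_deriv_nonneg (convex_Icc _ _) hψc.continuousOn
      (fun t _ => (hψ t).differentiableAt.differentiableWithinAt) fun t ht => ?_
    rw [interior_Icc] at ht
    rw [(hψ t).deriv]
    exact (hpos t ht).le
  have key := poinc_half (A := A) (W := W) hB hψ hψ'c hpos hm hm0 (fun t ht => by
    rw [Q_calc hψc hm hmono hm0 hM hN t ht, hW t]) hP h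
  have hmm := hm.measurable
  let F : ℝ → ℝ → ℝ≥0∞ := fun x y => if x < y then
      ENNReal.ofReal ((A y - A x) ^ 2 * (m x * m y)) else 0
  have hF : Measurable (fun p : ℝ × ℝ => F p.1 p.2) := by
    apply Measurable.ite (measurableSet_lt measurable_fst measurable_snd)
    · fun_prop
    · fun_prop
  have e : (∫⁻ x in Ioo α β, ∫⁻ y in Ioo α β,
      ENNReal.ofReal ((A y - A x) ^ 2 * (m x * m y))) =
      ∫⁻ x in Ioo α β, ∫⁻ y in Ioo α β, (F x y + F y x) := by
    refine lintegral_congr fun x => ?_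
    refine lintegral_congr_ae ?_
    have hb : ∀ᵐ t ∂(volume.restrict (Ioo α β)), t ≠ x :=
      ae_restrict_of_ae (by simp [ae_iff, measure_singleton])
    filter_upwards [hb] with y hy
    rcases lt_or_gt_of_ne hy with h | h
    · simp only [F, h, h.not_gt, if_true, if_false, zero_add]
      congr 1; ring
    · simp only [F, h, h.not_gt, if_true, if_false, add_zero]
  have e2 : (∫⁻ x in Ioo α β, ∫⁻ y in Ioo α β, (F x y + F y x)) =
      (∫⁻ x in Ioo α β, ∫⁻ y in Ioo α β, F x y) + ∫⁻ x in Ioo α β, ∫⁻ y in Ioo α β, F y x := by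
    rw [← lintegral_add_left]
    · refine lintegral_congr fun x => ?_
      rw [lintegral_add_left]
      exact hF.comp (by fun_prop : Measurable (fun y : ℝ => (x, y)))
    · exact Measurable.lintegral_prod_right' hF
  have e3 : (∫⁻ x in Ioo α β, ∫⁻ y in Ioo α β, F y x) =
      ∫⁻ x in Ioo α β, ∫⁻ y in Ioo α β, F x y :=
    (lintegral_lintegral_swap hF.aemeasurable).symm
  rw [e, e2, e3, two_mul]
  exact add_le_add key key

theorem poinc_theta {A B : ℝ → ℝ} {P : ℝ → Prop}
    (hA : Measurable A) (hB : Measurable B)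
    (hP : ∀ᵐ x, x ∈ Ioo (-Real.pi) Real.pi → P x)
    (h : ∀ x ∈ Ioo (-Real.pi) Real.pi, ∀ y ∈ Ioo (-Real.pi) Real.pi, P x → P y → x < y →
      ENNReal.ofReal |A y - A x| ≤ ∫⁻ t in Ioo x y, ENNReal.ofReal |B t|) :
    (∫⁻ x in Ioo (-Real.pi) Real.pi, ∫⁻ y in Ioo (-Real.pi) Real.pi,
      ENNReal.ofReal ((A y - A x) ^ 2)) ≤
      ENNReal.ofReal (16 * Real.pi) *
        ∫⁻ t in Ioo (-Real.pi) Real.pi, ENNReal.ofReal (B t ^ 2) := by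
  have := poinc_full (ψ := fun t => Real.sin (t / 2)) (ψ' := fun t => Real.cos (t / 2) / 2)
    (m := fun _ => 1) (M := fun t => t) (N := fun t => - 2 * Real.cos (t / 2))
    (W := fun _ => 8 * Real.pi) hA hB (fun t => by
      have := ((hasDerivAt_id t).div_const 2).sin
      exact this.congr_deriv (by simp only [id]; ring)) (by fun_prop) (fun t ht => by
      have := Real.cos_pos_of_mem_Ioo (x := t / 2) ⟨by linarith [ht.1], by linarith [ht.2]⟩
      positivity) (by fun_prop) (fun _ _ => zero_le_one) (fun t => hasDerivAt_id t) (fun t => by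
      have := (((hasDerivAt_id t).div_const 2).cos).const_mul (-2)
      exact this.congr_deriv (by simp only [id]; ring)) (fun t => by
        rw [neg_div, Real.cos_neg, Real.cos_pi_div_two]; ring) hP h
  simp only [mul_one] at this
  refine this.trans (le_of_eq ?_)
  rw [← lintegral_const_mul _ (by fun_prop), ← lintegral_const_mul _ (by fun_prop)]
  refine lintegral_congr fun t => ?_
  rw [show (2:ℝ≥0∞) = ENNReal.ofReal 2 by simp, ← ENNReal.ofReal_mul (by norm_num),
    ← ENNReal.ofReal_mul (by positivity)]
  congr 1; ring

theorem poinc_phi {A B : ℝ → ℝ} {P : ℝ → Prop}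
    (hA : Measurable A) (hB : Measurable B)
    (hP : ∀ᵐ x, x ∈ Ioo (-(Real.pi / 2)) (Real.pi / 2) → P x)
    (h : ∀ x ∈ Ioo (-(Real.pi / 2)) (Real.pi / 2), ∀ y ∈ Ioo (-(Real.pi / 2)) (Real.pi / 2),
      P x → P y → x < y →
      ENNReal.ofReal |A y - A x| ≤ ∫⁻ t in Ioo x y, ENNReal.ofReal |B t|) :
    (∫⁻ x in Ioo (-(Real.pi / 2)) (Real.pi / 2), ∫⁻ y in Ioo (-(Real.pi / 2)) (Real.pi / 2),
      ENNReal.ofReal ((A y - A x) ^ 2 * (Real.cos x * Real.cos y))) ≤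
      2 * ∫⁻ t in Ioo (-(Real.pi / 2)) (Real.pi / 2), ENNReal.ofReal (B t ^ 2 * Real.cos t) := by
  refine poinc_full (ψ := Real.sin) (ψ' := Real.cos)
    (m := Real.cos) (M := Real.sin) (N := fun t => Real.sin t ^ 2 / 2)
    (W := Real.cos) hA hB Real.hasDerivAt_sin Real.continuous_cos
    (fun t ht => Real.cos_pos_of_mem_Ioo ht) Real.continuous_cos
    (fun t ht => (Real.cos_pos_of_mem_Ioo ht).le) Real.hasDerivAt_sin (fun t => by
      have := ((Real.hasDerivAt_sin t).pow 2).div_const 2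
      exact this.congr_deriv (by ring)) (fun t => by
        rw [Real.sin_neg, Real.sin_pi_div_two]
        have := Real.sin_sq_add_cos_sq t
        linear_combination (-1) * this) hP h


theorem freq_end {D : ℝ → ℝ}
    (hint : IntegrableOn (fun t => D t ^ 2 / (4 * Real.cos t)) (Ioo (-(Real.pi / 2)) (Real.pi / 2)))
    {ε c : ℝ} (hε : 0 < ε) (hc : c < Real.pi / 2) :
    ∃ b ∈ Ioo c (Real.pi / 2), D b ^ 2 < ε := by
  by_contra hcon
  push Not at hcon
  set d := max c (-(Real.pi / 2)) with hd
  have hpi := Real.pi_pos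
  have hdlt : d < Real.pi / 2 := max_lt hc (by linarith)
  have h1 : IntegrableOn (fun t : ℝ => (t - Real.pi / 2)⁻¹) (Ioo d (Real.pi / 2)) := by
    have h2 : IntegrableOn (fun t => (4 / ε) * (D t ^ 2 / (4 * Real.cos t))) (Ioo d (Real.pi / 2)) :=
      (hint.mono_set (Ioo_subset_Ioo_left (le_max_right _ _))).const_mul _
    refine Integrable.mono' h2 (by fun_prop : Measurable _).aestronglyMeasurable ?_
    refine (ae_restrict_iff' measurableSet_Ioo).2 (ae_of_all _ fun t ht => ?_)
    have ht1 : c < t := (le_max_left _ _).trans_lt ht.1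
    have ht2 : -(Real.pi / 2) < t := (le_max_right _ _).trans_lt ht.1
    have hcos : 0 < Real.cos t := Real.cos_pos_of_mem_Ioo ⟨ht2, ht.2⟩
    have hle : Real.cos t ≤ Real.pi / 2 - t := by
      rw [← Real.sin_pi_div_two_sub]
      exact Real.sin_le (by linarith [ht.2])
    have hD := hcon t ⟨ht1, ht.2⟩
    have hpos : 0 < Real.pi / 2 - t := by linarith [ht.2]
    rw [Real.norm_eq_abs, abs_inv, abs_sub_comm, abs_of_pos hpos]
    calc (Real.pi / 2 - t)⁻¹ ≤ (Real.cos t)⁻¹ := inv_anti₀ hcos hle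
      _ = (4 / ε) * (ε / (4 * Real.cos t)) := by field_simp
      _ ≤ _ := by gcongr
  have h3 : IntervalIntegrable (fun t : ℝ => (t - Real.pi / 2)⁻¹) volume d (Real.pi / 2) := by
    rw [intervalIntegrable_iff_integrableOn_Ioo_of_le hdlt.le]; exact h1
  rw [intervalIntegrable_sub_inv_iff] at h3
  rcases h3 with h3 | h3
  · exact hdlt.ne h3
  · exact h3 right_mem_uIcc

theorem contDiff_aux : ContDiff ℝ 1 (fun p : ℝ × ℝ => Real.sin p.1 * p.2 ^ 2 / 2) := by
  fun_prop

theorem lip_sin_sq {D : ℝ → ℝ} {a b : ℝ} {K : ℝ≥0} (hK : LipschitzOnWith K D (Icc a b)) :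
    ∃ C, LipschitzOnWith C (fun t => Real.sin t * (D t) ^ 2 / 2) (Icc a b) := by
  have h1 : LocallyLipschitz (fun p : ℝ × ℝ => Real.sin p.1 * p.2 ^ 2 / 2) :=
    contDiff_aux.locallyLipschitz
  have hcD : ContinuousOn D (Icc a b) := hK.continuousOn
  have hcpt : IsCompact ((fun t => (t, D t)) '' Icc a b) :=
    isCompact_Icc.image_of_continuousOn (continuousOn_id.prodMk hcD)
  have h3 : LocallyLipschitzOn ((fun t => (t, D t)) '' Icc a b)
    (fun p : ℝ × ℝ => Real.sin p.1 * p.2 ^ 2 / 2) := h1.locallyLipschitzOn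
  obtain ⟨C, hC⟩ := h3.exists_lipschitzOnWith_of_compact hcpt
  have h2 : LipschitzOnWith (max 1 K) (fun t => (t, D t)) (Icc a b) :=
    (LipschitzWith.id.lipschitzOnWith).prodMk hK
  have h4 := hC.comp h2 (mapsTo_image (fun t => (t, D t)) (Icc a b))
  refine ⟨C * max 1 K, ?_⟩
  intro x hx y hy
  exact h4 hx hy

theorem hardy {D D' : ℝ → ℝ} (hDm : Measurable D) (hD'm : Measurable D')
    (hL : ∀ a b, Icc a b ⊆ Ioo (-(Real.pi / 2)) (Real.pi / 2) → ∃ K, LipschitzOnWith K D (Icc a b))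
    (hd : ∀ᵐ t, t ∈ Ioo (-(Real.pi / 2)) (Real.pi / 2) → HasDerivAt D (D' t) t) :
    (∫⁻ t in Ioo (-(Real.pi / 2)) (Real.pi / 2), ENNReal.ofReal (3 / 4 * (D t ^ 2 * Real.cos t))) ≤
    (∫⁻ t in Ioo (-(Real.pi / 2)) (Real.pi / 2), ENNReal.ofReal (D' t ^ 2 * Real.cos t)) +
    ∫⁻ t in Ioo (-(Real.pi / 2)) (Real.pi / 2), ENNReal.ofReal (D t ^ 2 / (4 * Real.cos t)) := by
  set I := Ioo (-(Real.pi / 2)) (Real.pi / 2) with hI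
  have hIm : MeasurableSet I := measurableSet_Ioo
  have hcos : ∀ t ∈ I, 0 < Real.cos t := fun t ht => Real.cos_pos_of_mem_Ioo ht
  by_cases hf1 : (∫⁻ t in I, ENNReal.ofReal (D' t ^ 2 * Real.cos t)) = ⊤
  · rw [hf1, top_add]; exact le_top
  by_cases hf2 : (∫⁻ t in I, ENNReal.ofReal (D t ^ 2 / (4 * Real.cos t))) = ⊤
  · rw [hf2, add_top]; exact le_top
  have n1 : 0 ≤ᵐ[volume.restrict I] fun t => D' t ^ 2 * Real.cos t :=
    (ae_restrict_iff' hIm).2 (ae_of_all _ fun t ht => by have := hcos t ht; positivity)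
  have n2 : 0 ≤ᵐ[volume.restrict I] fun t => D t ^ 2 / (4 * Real.cos t) :=
    (ae_restrict_iff' hIm).2 (ae_of_all _ fun t ht => by have := hcos t ht; positivity)
  have n3 : 0 ≤ᵐ[volume.restrict I] fun t => 3 / 4 * (D t ^ 2 * Real.cos t) :=
    (ae_restrict_iff' hIm).2 (ae_of_all _ fun t ht => by have := hcos t ht; positivity)
  have i1 : IntegrableOn (fun t => D' t ^ 2 * Real.cos t) I :=
    (lintegral_ofReal_ne_top_iff_integrable
      (by fun_prop : Measurable _).aestronglyMeasurable n1).1 hf1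
  have i2 : IntegrableOn (fun t => D t ^ 2 / (4 * Real.cos t)) I :=
    (lintegral_ofReal_ne_top_iff_integrable
      (by fun_prop : Measurable _).aestronglyMeasurable n2).1 hf2
  have i3 : IntegrableOn (fun t => 3 / 4 * (D t ^ 2 * Real.cos t)) I := by
    refine Integrable.mono' (i2.const_mul 3) (by fun_prop : Measurable _).aestronglyMeasurable ?_
    refine (ae_restrict_iff' hIm).2 (ae_of_all _ fun t ht => ?_)
    have hc := hcos t ht
    rw [Real.norm_eq_abs, abs_of_nonneg (by positivity)]
    have : Real.cos t ≤ (Real.cos t)⁻¹ := by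
      have h1 := Real.cos_le_one t
      exact h1.trans ((one_le_inv₀ hc).2 h1)
    calc 3 / 4 * (D t ^ 2 * Real.cos t) ≤ 3 / 4 * (D t ^ 2 * (Real.cos t)⁻¹) := by gcongr
      _ = _ := by field_simp
  set F : ℝ → ℝ := fun t => D' t ^ 2 * Real.cos t + D t ^ 2 / (4 * Real.cos t)
    - 3 / 4 * (D t ^ 2 * Real.cos t) with hF
  have iF : IntegrableOn F I := (i1.add i2).sub i3
  have key : ∀ a ∈ I, ∀ b ∈ I, a ≤ b → -(D a ^ 2 + D b ^ 2) ≤ ∫ t in Ioo a b, F t := by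
    intro a ha b hb hab
    have hsub : Icc a b ⊆ I := fun t ht => ⟨ha.1.trans_le ht.1, ht.2.trans_lt hb.2⟩
    obtain ⟨K, hK⟩ := hL a b hsub
    -- G = sin * D^2 / 2 is Lipschitz
    obtain ⟨C, hC⟩ : ∃ C, LipschitzOnWith C (fun t => Real.sin t * (D t) ^ 2 / 2) (Icc a b) := lip_sin_sq hK
    have hder : ∀ᵐ t, t ∈ Ioo a b → HasDerivAt (fun t => Real.sin t * (D t) ^ 2 / 2)
        ((Real.cos t * D t ^ 2 + Real.sin t * (2 * D t * D' t)) / 2) t := by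
      filter_upwards [hd] with t ht htab
      have h := ht (hsub (Ioo_subset_Icc_self htab))
      have := ((Real.hasDerivAt_sin t).mul (h.pow 2)).div_const 2
      exact this.congr_deriv (by simp)
    obtain ⟨hii, hint⟩ := ftc_lip hab hC hder
    rw [intervalIntegral.integral_of_le hab, integral_Ioc_eq_integral_Ioo] at hint
    rw [intervalIntegrable_iff_integrableOn_Ioo_of_le hab] at hii
    have hmono : ∫ t in Ioo a b, -((Real.cos t * D t ^ 2 + Real.sin t * (2 * D t * D' t)) / 2) ≤
        ∫ t in Ioo a b, F t := by
      refine setIntegral_mono_on hii.neg (iF.mono_set (Ioo_subset_Icc_self.trans hsub))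
        measurableSet_Ioo fun t ht => ?_
      have hc := hcos t (hsub (Ioo_subset_Icc_self ht))
      have hs := Real.sin_sq_add_cos_sq t
      have : F t - (-((Real.cos t * D t ^ 2 + Real.sin t * (2 * D t * D' t)) / 2)) =
          Real.cos t * (D' t + Real.sin t * D t / (2 * Real.cos t)) ^ 2 := by
        simp only [hF]
        field_simp
        linear_combination (D t ^ 2) * (-4) * hs
      have h0 : 0 ≤ Real.cos t * (D' t + Real.sin t * D t / (2 * Real.cos t)) ^ 2 := by positivity
      linarith
    rw [integral_neg, hint] at hmono
    have s1 := Real.sin_le_one b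
    have s2 := Real.neg_one_le_sin a
    nlinarith [sq_nonneg (D a), sq_nonneg (D b)]
  have hpi := Real.pi_pos
  have hnn : 0 ≤ ∫ t in I, F t := by
    have eb : ∀ n : ℕ, ∃ b ∈ Ioo (max 0 (Real.pi / 2 - 1 / ((n:ℝ) + 1))) (Real.pi / 2),
        D b ^ 2 < 1 / ((n:ℝ) + 1) := fun n =>
      freq_end i2 (by positivity) (max_lt (by positivity) (by
        have : 0 < 1 / ((n:ℝ) + 1) := by positivity
        linarith))
    have i2' : IntegrableOn (fun t => D (-t) ^ 2 / (4 * Real.cos t)) I := by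
      have := ((Measure.measurePreserving_neg (volume : Measure ℝ)).integrableOn_comp_preimage
        (MeasurableEquiv.neg ℝ).measurableEmbedding (s := I)
        (f := fun t => D t ^ 2 / (4 * Real.cos t))).2 i2
      have e : (Neg.neg ⁻¹' I : Set ℝ) = I := by
        simp [hI]
      rw [e] at this
      refine this.congr_fun (fun t _ => ?_) hIm
      simp [Function.comp]
    have ea : ∀ n : ℕ, ∃ a ∈ Ioo (max 0 (Real.pi / 2 - 1 / ((n:ℝ) + 1))) (Real.pi / 2),
        D (-a) ^ 2 < 1 / ((n:ℝ) + 1) := fun n =>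
      freq_end (D := fun t => D (-t)) i2' (by positivity)
        (max_lt (by positivity) (by
        have : 0 < 1 / ((n:ℝ) + 1) := by positivity
        linarith))
    choose b hb hbD using eb
    choose a ha haD using ea
    have lim0 : Tendsto (fun n : ℕ => 1 / ((n:ℝ) + 1)) atTop (𝓝 0) :=
      tendsto_one_div_add_atTop_nhds_zero_nat
    have lim1 : Tendsto (fun n : ℕ => Real.pi / 2 - 1 / ((n:ℝ) + 1)) atTop (𝓝 (Real.pi / 2)) := by
      simpa using lim0.const_sub (Real.pi / 2)
    have tb : Tendsto b atTop (𝓝 (Real.pi / 2)) :=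
      tendsto_of_tendsto_of_tendsto_of_le_of_le lim1 tendsto_const_nhds
        (fun n => (le_max_right _ _).trans (hb n).1.le) (fun n => (hb n).2.le)
    have ta : Tendsto a atTop (𝓝 (Real.pi / 2)) :=
      tendsto_of_tendsto_of_tendsto_of_le_of_le lim1 tendsto_const_nhds
        (fun n => (le_max_right _ _).trans (ha n).1.le) (fun n => (ha n).2.le)
    have cov : AECover (volume.restrict I) atTop (fun n => Ioo (-(a n)) (b n)) :=
      aecover_Ioo_of_Ioo ta.neg tb
    have lim := cov.integral_tendsto_of_countably_generated iF
    have e : ∀ n, ∫ t in Ioo (-(a n)) (b n), F t ∂(volume.restrict I) =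
        ∫ t in Ioo (-(a n)) (b n), F t := by
      intro n
      rw [Measure.restrict_restrict measurableSet_Ioo, inter_eq_left.2]
      exact Ioo_subset_Ioo (by linarith [(ha n).2]) (hb n).2.le
    simp only [e] at lim
    have lim2 : Tendsto (fun n : ℕ => -(1 / ((n:ℝ) + 1) + 1 / ((n:ℝ) + 1))) atTop (𝓝 0) := by
      simpa using (lim0.add lim0).neg
    refine le_of_tendsto_of_tendsto' lim2 lim fun n => ?_
    have b0 : 0 < b n := (le_max_left _ _).trans_lt (hb n).1
    have a0 : 0 < a n := (le_max_left _ _).trans_lt (ha n).1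
    have := key (-(a n)) ⟨by linarith [(ha n).2], by linarith⟩ (b n) ⟨by linarith, (hb n).2⟩
      (by linarith)
    have h1 := haD n
    have h2 := hbD n
    linarith
  have hsum : ∫ t in I, F t = (∫ t in I, D' t ^ 2 * Real.cos t) +
      (∫ t in I, D t ^ 2 / (4 * Real.cos t)) - ∫ t in I, 3 / 4 * (D t ^ 2 * Real.cos t) := by
    rw [← integral_add i1 i2, ← integral_sub (by exact i1.add i2) i3]
  rw [← ofReal_integral_eq_lintegral_ofReal i1 n1, ← ofReal_integral_eq_lintegral_ofReal i2 n2,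
    ← ofReal_integral_eq_lintegral_ofReal i3 n3, ← ENNReal.ofReal_add
      (integral_nonneg_of_ae n1) (integral_nonneg_of_ae n2)]
  apply ENNReal.ofReal_le_ofReal
  linarith


theorem var_w {μ : Measure ℝ} [SFinite μ] {f w : ℝ → ℝ} (hf : Measurable f) (hw : Measurable w)
    (hw0 : ∀ᵐ x ∂μ, 0 ≤ w x) (iw : Integrable w μ) (ifw : Integrable (fun x => f x ^ 2 * w x) μ) :
    Integrable (fun x => f x * w x) μ ∧
    (∫⁻ x, ∫⁻ y, ENNReal.ofReal ((f y - f x) ^ 2 * (w x * w y)) ∂μ ∂μ) =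
      ENNReal.ofReal (2 * ((∫ x, w x ∂μ) * (∫ x, f x ^ 2 * w x ∂μ) - (∫ x, f x * w x ∂μ) ^ 2)) := by
  have i1 : Integrable (fun x => f x * w x) μ := by
    refine Integrable.mono' (iw.add ifw) (by fun_prop : Measurable _).aestronglyMeasurable ?_
    filter_upwards [hw0] with x hx
    simp only [Pi.add_apply]
    rw [norm_mul, Real.norm_eq_abs, Real.norm_eq_abs, abs_of_nonneg hx]
    have : |f x| ≤ 1 + f x ^ 2 := by
      rw [← sq_abs]; nlinarith [sq_nonneg (|f x| - 1), abs_nonneg (f x)]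
    nlinarith
  refine ⟨i1, ?_⟩
  set L := ∫ x, w x ∂μ
  set S := ∫ x, f x ^ 2 * w x ∂μ
  set m := ∫ x, f x * w x ∂μ
  have inner : ∀ x, Integrable (fun y => (f y - f x) ^ 2 * (w x * w y)) μ ∧
      ∫ y, (f y - f x) ^ 2 * (w x * w y) ∂μ = S * w x - 2 * m * (f x * w x) + L * (f x ^ 2 * w x) := by
    intro x
    have e : (fun y => (f y - f x) ^ 2 * (w x * w y)) = fun y =>
        (w x * (f y ^ 2 * w y) - (2 * f x * w x) * (f y * w y)) + (f x ^ 2 * w x) * w y := by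
      funext y; ring
    rw [e]
    have j1 := ifw.const_mul (w x)
    have j2 := i1.const_mul (2 * f x * w x)
    have j3 := iw.const_mul (f x ^ 2 * w x)
    refine ⟨(j1.sub j2).add j3, ?_⟩
    rw [integral_add (by exact j1.sub j2) j3, integral_sub j1 j2, integral_const_mul,
      integral_const_mul, integral_const_mul]
    ring
  have h1 : (∫⁻ x, ∫⁻ y, ENNReal.ofReal ((f y - f x) ^ 2 * (w x * w y)) ∂μ ∂μ) =
      ∫⁻ x, ENNReal.ofReal (∫ y, (f y - f x) ^ 2 * (w x * w y) ∂μ) ∂μ := by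
    refine lintegral_congr_ae ?_
    filter_upwards [hw0] with x hx
    rw [ofReal_integral_eq_lintegral_ofReal (inner x).1]
    filter_upwards [hw0] with y hy
    simp only [Pi.zero_apply]
    positivity
  have j1 := iw.const_mul S
  have j2 := i1.const_mul (2 * m)
  have j3 := ifw.const_mul L
  have e2 : (fun x => ∫ y, (f y - f x) ^ 2 * (w x * w y) ∂μ) =
    fun x => S * w x - 2 * m * (f x * w x) + L * (f x ^ 2 * w x) := funext fun x => (inner x).2
  rw [h1, ← ofReal_integral_eq_lintegral_ofReal]
  · rw [e2, integral_add (by exact j1.sub j2) j3, integral_sub j1 j2, integral_const_mul,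
      integral_const_mul, integral_const_mul]
    congr 1
    simp only [L, S, m]
    ring
  · rw [e2]; exact (j1.sub j2).add j3
  · filter_upwards [hw0] with x hx
    refine integral_nonneg_of_ae ?_
    filter_upwards [hw0] with y hy
    simp only [Pi.zero_apply]
    positivity

theorem var_J {f : ℝ → ℝ} (hf : Measurable f)
    (hfin : (∫⁻ x in Ioo (-Real.pi) Real.pi, ENNReal.ofReal (f x ^ 2)) ≠ ⊤) :
    IntegrableOn f (Ioo (-Real.pi) Real.pi) ∧
    (∫⁻ x in Ioo (-Real.pi) Real.pi, ∫⁻ y in Ioo (-Real.pi) Real.pi,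
      ENNReal.ofReal ((f y - f x) ^ 2)) +
      ENNReal.ofReal (2 * (∫ x in Ioo (-Real.pi) Real.pi, f x) ^ 2) =
      ENNReal.ofReal (4 * Real.pi) * ∫⁻ x in Ioo (-Real.pi) Real.pi, ENNReal.ofReal (f x ^ 2) := by
  have hpi := Real.pi_pos
  have i2 : Integrable (fun x => f x ^ 2) (volume.restrict (Ioo (-Real.pi) Real.pi)) :=
    (lintegral_ofReal_ne_top_iff_integrable
      (by fun_prop : Measurable _).aestronglyMeasurable (ae_of_all _ fun x => sq_nonneg _)).1 hfin
  obtain ⟨h1, h2⟩ := var_w (μ := volume.restrict (Ioo (-Real.pi) Real.pi)) (w := fun _ => 1) hf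
    (by fun_prop) (ae_of_all _ fun _ => zero_le_one) (integrable_const _) (by simpa using i2)
  simp only [mul_one] at h1 h2
  refine ⟨h1, ?_⟩
  have hL : (∫ x in Ioo (-Real.pi) Real.pi, (1:ℝ)) = 2 * Real.pi := by
    simp [hpi.le]; ring
  have hS : 0 ≤ ∫ x in Ioo (-Real.pi) Real.pi, f x ^ 2 := integral_nonneg fun _ => sq_nonneg _
  rw [hL] at h2
  have hnn : 0 ≤ 2 * Real.pi * (∫ x in Ioo (-Real.pi) Real.pi, f x ^ 2) -
      (∫ x in Ioo (-Real.pi) Real.pi, f x) ^ 2 := by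
    set a := (∫ x in Ioo (-Real.pi) Real.pi, f x) / (2 * Real.pi) with ha
    have h0 : 0 ≤ ∫ x in Ioo (-Real.pi) Real.pi, (f x - a) ^ 2 := integral_nonneg fun _ => sq_nonneg _
    have e : (fun x => (f x - a) ^ 2) = fun x => (f x ^ 2 - (2 * a) * f x) + a ^ 2 * 1 := by
      funext x; ring
    rw [e, integral_add (by exact i2.sub (h1.const_mul _)) (integrable_const _),
      integral_sub i2 (h1.const_mul _), integral_const_mul, integral_const_mul, hL] at h0
    have e3 : (∫ x in Ioo (-Real.pi) Real.pi, f x) = 2 * Real.pi * a := by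
      rw [ha]; field_simp
    rw [e3] at h0 ⊢
    nlinarith
  rw [h2, ← ofReal_integral_eq_lintegral_ofReal i2 (ae_of_all _ fun x => sq_nonneg _),
    ← ENNReal.ofReal_mul (by positivity), ← ENNReal.ofReal_add (by positivity) (by positivity)]
  congr 1; ring


theorem swap3 {μ ν : Measure ℝ} [SFinite μ] [SFinite ν] {F : ℝ → ℝ → ℝ → ℝ≥0∞}
    (hF : Measurable (fun z : ℝ × ℝ × ℝ => F z.1 z.2.1 z.2.2)) :
    (∫⁻ x, ∫⁻ y, ∫⁻ t, F t x y ∂μ ∂ν ∂ν) = ∫⁻ t, ∫⁻ x, ∫⁻ y, F t x y ∂ν ∂ν ∂μ := by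
  have e1 : ∀ x, (∫⁻ y, ∫⁻ t, F t x y ∂μ ∂ν) = ∫⁻ t, ∫⁻ y, F t x y ∂ν ∂μ := by
    intro x
    refine lintegral_lintegral_swap (f := fun y t => F t x y) ?_
    exact (hF.comp (by fun_prop : Measurable (fun p : ℝ × ℝ => (p.2, x, p.1)))).aemeasurable
  simp_rw [e1]
  refine lintegral_lintegral_swap (f := fun x t => ∫⁻ y, F t x y ∂ν) ?_
  have : Measurable (fun p : (ℝ × ℝ) × ℝ => F p.1.2 p.1.1 p.2) :=
    hF.comp (by fun_prop : Measurable (fun p : (ℝ × ℝ) × ℝ => (p.1.2, p.1.1, p.2)))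
  exact (Measurable.lintegral_prod_right' this).aemeasurable

theorem lip_abs {f f' : ℝ → ℝ} {α β : ℝ}
    (hL : ∀ a b, Icc a b ⊆ Ioo α β → ∃ K, LipschitzOnWith K f (Icc a b))
    (hd : ∀ᵐ t, t ∈ Ioo α β → HasDerivAt f (f' t) t) {x y : ℝ} (hx : x ∈ Ioo α β) (hy : y ∈ Ioo α β)
    (hxy : x < y) : (IntegrableOn f' (Ioo x y) ∧ ∫ t in Ioo x y, f' t = f y - f x) ∧
      ENNReal.ofReal |f y - f x| ≤ ∫⁻ t in Ioo x y, ENNReal.ofReal |f' t| := by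
  have hsub : Icc x y ⊆ Ioo α β := fun t ht => ⟨hx.1.trans_le ht.1, ht.2.trans_lt hy.2⟩
  obtain ⟨K, hK⟩ := hL x y hsub
  obtain ⟨h1, h2⟩ := ftc_lip (f' := f') hxy.le hK (by
    filter_upwards [hd] with t ht htm using ht (hsub (Ioo_subset_Icc_self htm)))
  rw [intervalIntegrable_iff_integrableOn_Ioo_of_le hxy.le] at h1
  rw [intervalIntegral.integral_of_le hxy.le, integral_Ioc_eq_integral_Ioo] at h2
  refine ⟨⟨h1, h2⟩, ?_⟩
  rw [← h2, ← Real.enorm_eq_ofReal_abs]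
  refine (enorm_integral_le_lintegral_enorm _).trans (le_of_eq ?_)
  simp only [Real.enorm_eq_ofReal_abs]

theorem two_d_a {v p q : ℝ → ℝ → ℝ}
    (hv : Measurable (fun z : ℝ × ℝ => v z.1 z.2)) (hp : Measurable (fun z : ℝ × ℝ => p z.1 z.2))
    (hq : Measurable (fun z : ℝ × ℝ => q z.1 z.2))
    (hLφ : ∀ θ ∈ Ioo (-Real.pi) Real.pi, ∀ a b, Icc a b ⊆ Ioo (-(Real.pi / 2)) (Real.pi / 2) →
      ∃ K, LipschitzOnWith K (fun φ => v φ θ) (Icc a b))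
    (hLθ : ∀ φ ∈ Ioo (-(Real.pi / 2)) (Real.pi / 2), ∀ a b, Icc a b ⊆ Ioo (-Real.pi) Real.pi →
      ∃ K, LipschitzOnWith K (fun θ => v φ θ) (Icc a b))
    (hdφ : ∀ᵐ θ, θ ∈ Ioo (-Real.pi) Real.pi → ∀ᵐ φ, φ ∈ Ioo (-(Real.pi / 2)) (Real.pi / 2) →
      HasDerivAt (fun φ => v φ θ) (p φ θ) φ)
    (hdθ : ∀ᵐ φ, φ ∈ Ioo (-(Real.pi / 2)) (Real.pi / 2) → ∀ᵐ θ, θ ∈ Ioo (-Real.pi) Real.pi →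
      HasDerivAt (fun θ => v φ θ) (q φ θ) θ) :
    (∫⁻ φ in Ioo (-(Real.pi / 2)) (Real.pi / 2), ENNReal.ofReal (3 / 4 * Real.cos φ) *
      ∫⁻ x in Ioo (-Real.pi) Real.pi, ∫⁻ y in Ioo (-Real.pi) Real.pi,
        ENNReal.ofReal ((v φ y - v φ x) ^ 2)) ≤
    (∫⁻ φ in Ioo (-(Real.pi / 2)) (Real.pi / 2), ENNReal.ofReal (Real.cos φ) *
      ∫⁻ x in Ioo (-Real.pi) Real.pi, ∫⁻ y in Ioo (-Real.pi) Real.pi,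
        ENNReal.ofReal ((p φ y - p φ x) ^ 2)) +
    ENNReal.ofReal (4 * Real.pi) * ∫⁻ φ in Ioo (-(Real.pi / 2)) (Real.pi / 2),
      ∫⁻ θ in Ioo (-Real.pi) Real.pi, ENNReal.ofReal (q φ θ ^ 2 / Real.cos φ) := by
  have hpi := Real.pi_pos
  set I := Ioo (-(Real.pi / 2)) (Real.pi / 2) with hI
  set J := Ioo (-Real.pi) Real.pi with hJ
  have hcos : ∀ t ∈ I, 0 < Real.cos t := fun t ht => Real.cos_pos_of_mem_Ioo ht
  have vm : ∀ θ, Measurable (fun φ => v φ θ) := fun θ =>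
    hv.comp (by fun_prop : Measurable fun φ : ℝ => (φ, θ))
  have pm : ∀ θ, Measurable (fun φ => p φ θ) := fun θ =>
    hp.comp (by fun_prop : Measurable fun φ : ℝ => (φ, θ))
  have vm' : ∀ φ, Measurable (fun θ => v φ θ) := fun φ =>
    hv.comp (by fun_prop : Measurable fun θ : ℝ => (φ, θ))
  have pm' : ∀ φ, Measurable (fun θ => p φ θ) := fun φ =>
    hp.comp (by fun_prop : Measurable fun θ : ℝ => (φ, θ))
  have qm' : ∀ φ, Measurable (fun θ => q φ θ) := fun φ =>
    hq.comp (by fun_prop : Measurable fun θ : ℝ => (φ, θ))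
  -- triple measurability
  have v3 : Measurable (fun z : ℝ × ℝ × ℝ => v z.1 z.2.2 - v z.1 z.2.1) :=
    (hv.comp (by fun_prop : Measurable fun z : ℝ × ℝ × ℝ => (z.1, z.2.2))).sub
      (hv.comp (by fun_prop : Measurable fun z : ℝ × ℝ × ℝ => (z.1, z.2.1)))
  have p3 : Measurable (fun z : ℝ × ℝ × ℝ => p z.1 z.2.2 - p z.1 z.2.1) :=
    (hp.comp (by fun_prop : Measurable fun z : ℝ × ℝ × ℝ => (z.1, z.2.2))).sub
      (hp.comp (by fun_prop : Measurable fun z : ℝ × ℝ × ℝ => (z.1, z.2.1)))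
  have mF1 : Measurable (fun z : ℝ × ℝ × ℝ => ENNReal.ofReal
    (3 / 4 * ((v z.1 z.2.2 - v z.1 z.2.1) ^ 2 * Real.cos z.1))) := by fun_prop
  have mF2 : Measurable (fun z : ℝ × ℝ × ℝ => ENNReal.ofReal
    ((p z.1 z.2.2 - p z.1 z.2.1) ^ 2 * Real.cos z.1)) := by fun_prop
  have mF3 : Measurable (fun z : ℝ × ℝ × ℝ => ENNReal.ofReal
    ((v z.1 z.2.2 - v z.1 z.2.1) ^ 2 / (4 * Real.cos z.1))) := by fun_prop
  have hJr : ∀ᵐ θ ∂(volume.restrict J), θ ∈ J ∧ ∀ᵐ φ, φ ∈ I →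
      HasDerivAt (fun φ => v φ θ) (p φ θ) φ := by
    rw [ae_restrict_iff' measurableSet_Ioo]
    filter_upwards [hdφ] with θ h1 h2 using ⟨h2, h1 h2⟩
  have hardyInt : (∫⁻ x in J, ∫⁻ y in J, ∫⁻ φ in I,
        ENNReal.ofReal (3 / 4 * ((v φ y - v φ x) ^ 2 * Real.cos φ))) ≤
      ∫⁻ x in J, ∫⁻ y in J, ((∫⁻ φ in I, ENNReal.ofReal ((p φ y - p φ x) ^ 2 * Real.cos φ)) +
        ∫⁻ φ in I, ENNReal.ofReal ((v φ y - v φ x) ^ 2 / (4 * Real.cos φ))) := by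
    refine lintegral_mono_ae ?_
    filter_upwards [hJr] with x hx
    refine lintegral_mono_ae ?_
    filter_upwards [hJr] with y hy
    refine hardy (D := fun φ => v φ y - v φ x) (D' := fun φ => p φ y - p φ x)
      ((vm y).sub (vm x)) ((pm y).sub (pm x)) ?_ ?_
    · intro a b hab
      obtain ⟨K1, h1⟩ := hLφ y hy.1 a b hab
      obtain ⟨K2, h2⟩ := hLφ x hx.1 a b hab
      exact ⟨K1 + K2, h1.sub h2⟩
    · filter_upwards [hx.2, hy.2] with t h1 h2 ht
      exact (h2 ht).sub (h1 ht)
  have inner_add : (∫⁻ x in J, ∫⁻ y in J, ((∫⁻ φ in I, ENNReal.ofReal ((p φ y - p φ x) ^ 2 * Real.cos φ)) +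
        ∫⁻ φ in I, ENNReal.ofReal ((v φ y - v φ x) ^ 2 / (4 * Real.cos φ)))) =
      ∫⁻ φ in I, ∫⁻ x in J, ∫⁻ y in J, (ENNReal.ofReal ((p φ y - p φ x) ^ 2 * Real.cos φ) +
        ENNReal.ofReal ((v φ y - v φ x) ^ 2 / (4 * Real.cos φ))) := by
    rw [← swap3 (F := fun φ x y => ENNReal.ofReal ((p φ y - p φ x) ^ 2 * Real.cos φ) +
        ENNReal.ofReal ((v φ y - v φ x) ^ 2 / (4 * Real.cos φ))) (mF2.add mF3)]
    refine lintegral_congr fun x => lintegral_congr fun y => ?_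
    rw [lintegral_add_left]
    exact mF2.comp (by fun_prop : Measurable fun φ : ℝ => (φ, x, y))
  rw [inner_add, swap3 (F := fun φ x y =>
    ENNReal.ofReal (3 / 4 * ((v φ y - v φ x) ^ 2 * Real.cos φ))) mF1] at hardyInt
  have dv : ∀ φ, Measurable (fun z : ℝ × ℝ => ENNReal.ofReal ((v φ z.2 - v φ z.1) ^ 2)) := fun φ => by
    have := vm' φ
    fun_prop
  have dp : ∀ φ, Measurable (fun z : ℝ × ℝ => ENNReal.ofReal ((p φ z.2 - p φ z.1) ^ 2)) := fun φ => by
    have := pm' φ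
    fun_prop
  have pull : ∀ (c : ℝ≥0∞) (G : ℝ → ℝ → ℝ≥0∞), Measurable (fun z : ℝ × ℝ => G z.1 z.2) →
      c * (∫⁻ x in J, ∫⁻ y in J, G x y) = ∫⁻ x in J, ∫⁻ y in J, c * G x y := by
    intro c G hG
    rw [← lintegral_const_mul _ (Measurable.lintegral_prod_right' hG)]
    refine lintegral_congr fun x => ?_
    rw [lintegral_const_mul]
    exact hG.comp (by fun_prop : Measurable fun y : ℝ => (x, y))
  calc _ = ∫⁻ φ in I, ∫⁻ x in J, ∫⁻ y in J,
        ENNReal.ofReal (3 / 4 * ((v φ y - v φ x) ^ 2 * Real.cos φ)) := by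
        refine setLIntegral_congr_fun measurableSet_Ioo fun φ hφ => ?_
        have hc := hcos φ hφ
        rw [pull _ (fun x y => ENNReal.ofReal ((v φ y - v φ x) ^ 2)) (dv φ)]
        refine lintegral_congr fun x => lintegral_congr fun y => ?_
        rw [← ENNReal.ofReal_mul (by positivity)]
        congr 1; ring
    _ ≤ _ := hardyInt
    _ ≤ ∫⁻ φ in I, ((ENNReal.ofReal (Real.cos φ) *
          ∫⁻ x in J, ∫⁻ y in J, ENNReal.ofReal ((p φ y - p φ x) ^ 2)) +
          ENNReal.ofReal (4 * Real.pi) * ∫⁻ θ in J, ENNReal.ofReal (q φ θ ^ 2 / Real.cos φ)) := by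
        refine lintegral_mono_ae ((ae_restrict_iff' measurableSet_Ioo).2 ?_)
        filter_upwards [hdθ] with φ hφd hφ
        have hc := hcos φ hφ
        have s : (∫⁻ x in J, ∫⁻ y in J, (ENNReal.ofReal ((p φ y - p φ x) ^ 2 * Real.cos φ) +
            ENNReal.ofReal ((v φ y - v φ x) ^ 2 / (4 * Real.cos φ)))) =
            (ENNReal.ofReal (Real.cos φ) * ∫⁻ x in J, ∫⁻ y in J, ENNReal.ofReal ((p φ y - p φ x) ^ 2)) +
            ENNReal.ofReal (1 / (4 * Real.cos φ)) *
              ∫⁻ x in J, ∫⁻ y in J, ENNReal.ofReal ((v φ y - v φ x) ^ 2) := by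
          rw [pull _ (fun x y => ENNReal.ofReal ((p φ y - p φ x) ^ 2)) (dp φ),
            pull _ (fun x y => ENNReal.ofReal ((v φ y - v φ x) ^ 2)) (dv φ), ← lintegral_add_left]
          · refine lintegral_congr fun x => ?_
            rw [← lintegral_add_left]
            · refine lintegral_congr fun y => ?_
              rw [← ENNReal.ofReal_mul (by positivity), ← ENNReal.ofReal_mul (by positivity)]
              congr 2 <;> ring
            · have := pm' φ
              fun_prop
          · exact Measurable.lintegral_prod_right' ((dp φ).const_mul _)
        rw [s]
        refine add_le_add le_rfl ?_
        have pt := poinc_theta (A := fun θ => v φ θ) (B := fun θ => q φ θ) (P := fun _ => True)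
          (vm' φ) (qm' φ) (ae_of_all _ fun _ _ => trivial) (fun x hx y hy _ _ hxy =>
            (lip_abs (hLθ φ hφ) (hφd hφ) hx hy hxy).2)
        calc _ ≤ ENNReal.ofReal (1 / (4 * Real.cos φ)) * (ENNReal.ofReal (16 * Real.pi) *
              ∫⁻ t in J, ENNReal.ofReal (q φ t ^ 2)) := by gcongr
          _ = ENNReal.ofReal (4 * Real.pi) *
              ∫⁻ θ in J, ENNReal.ofReal (q φ θ ^ 2 / Real.cos φ) := by
            rw [← mul_assoc, ← ENNReal.ofReal_mul (by positivity), ← lintegral_const_mul _ (by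
              have := qm' φ; fun_prop), ← lintegral_const_mul _ (by
              have := qm' φ; fun_prop)]
            refine lintegral_congr fun θ => ?_
            rw [← ENNReal.ofReal_mul (by positivity), ← ENNReal.ofReal_mul (by positivity)]
            congr 1; field_simp; ring
    _ = _ := by
        have mq : Measurable (fun z : ℝ × ℝ => ENNReal.ofReal (q z.1 z.2 ^ 2 / Real.cos z.1)) := by
          fun_prop
        have mq1 := Measurable.lintegral_prod_right' (ν := volume.restrict J) mq
        rw [lintegral_add_right _ (mq1.const_mul _), lintegral_const_mul _ mq1]


theorem two_d_b0 {A B : ℝ → ℝ} {P : ℝ → Prop} (Am : Measurable A) (Bm : Measurable B)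
    (hP : ∀ᵐ x, x ∈ Ioo (-(Real.pi / 2)) (Real.pi / 2) → P x)
    (hkey : ∀ x ∈ Ioo (-(Real.pi / 2)) (Real.pi / 2), ∀ y ∈ Ioo (-(Real.pi / 2)) (Real.pi / 2),
      P x → P y → x < y →
      ENNReal.ofReal |A y - A x| ≤ ∫⁻ t in Ioo x y, ENNReal.ofReal |B t|)
    (hA2 : IntegrableOn (fun φ => A φ ^ 2 * Real.cos φ) (Ioo (-(Real.pi / 2)) (Real.pi / 2)))
    (hmean : ∫ φ in Ioo (-(Real.pi / 2)) (Real.pi / 2), A φ * Real.cos φ = 0) :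
    2 * (∫⁻ φ in Ioo (-(Real.pi / 2)) (Real.pi / 2), ENNReal.ofReal (A φ ^ 2 * Real.cos φ)) ≤
    ∫⁻ φ in Ioo (-(Real.pi / 2)) (Real.pi / 2), ENNReal.ofReal (B φ ^ 2 * Real.cos φ) := by
  have hpi := Real.pi_pos
  have hcos : ∀ t ∈ Ioo (-(Real.pi / 2)) (Real.pi / 2), 0 < Real.cos t :=
    fun t ht => Real.cos_pos_of_mem_Ioo ht
  have key := poinc_phi Am Bm hP hkey
  have iw : Integrable Real.cos (volume.restrict (Ioo (-(Real.pi / 2)) (Real.pi / 2))) :=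
    IntegrableOn.mono_set (t := Icc (-(Real.pi / 2)) (Real.pi / 2))
      (Real.continuous_cos.integrableOn_Icc) Ioo_subset_Icc_self
  have hw0 : ∀ᵐ x ∂(volume.restrict (Ioo (-(Real.pi / 2)) (Real.pi / 2))), 0 ≤ Real.cos x :=
    (ae_restrict_iff' measurableSet_Ioo).2 (ae_of_all _ fun t ht => (hcos t ht).le)
  have hvar := (var_w (μ := volume.restrict (Ioo (-(Real.pi / 2)) (Real.pi / 2))) Am Real.measurable_cos hw0 iw hA2).2
  rw [hvar, hmean] at key
  have hL : ∫ x in Ioo (-(Real.pi / 2)) (Real.pi / 2), Real.cos x = 2 := by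
    rw [← integral_Ioc_eq_integral_Ioo, ← intervalIntegral.integral_of_le (by linarith),
      integral_cos]
    simp; norm_num
  rw [hL] at key
  have hn : 0 ≤ᵐ[volume.restrict (Ioo (-(Real.pi / 2)) (Real.pi / 2))] fun φ => A φ ^ 2 * Real.cos φ := by
    filter_upwards [hw0] with x hx
    simp only [Pi.zero_apply]; positivity
  rw [← ofReal_integral_eq_lintegral_ofReal hA2 hn]
  have e4 : ENNReal.ofReal (2 * (2 * (∫ x in Ioo (-(Real.pi / 2)) (Real.pi / 2), A x ^ 2 * Real.cos x) - 0 ^ 2)) =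
      2 * (2 * ENNReal.ofReal (∫ x in Ioo (-(Real.pi / 2)) (Real.pi / 2), A x ^ 2 * Real.cos x)) := by
    rw [show (2:ℝ≥0∞) = ENNReal.ofReal 2 by simp, ← ENNReal.ofReal_mul (by norm_num),
      ← ENNReal.ofReal_mul (by norm_num)]
    congr 1; ring
  rw [e4] at key
  exact (ENNReal.mul_le_mul_iff_right (by norm_num) (by norm_num)).1 key

theorem two_d_b1 {v p : ℝ → ℝ → ℝ}
    (hp : Measurable (fun z : ℝ × ℝ => p z.1 z.2))
    (hLφ : ∀ θ ∈ Ioo (-Real.pi) Real.pi, ∀ a b, Icc a b ⊆ Ioo (-(Real.pi / 2)) (Real.pi / 2) →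
      ∃ K, LipschitzOnWith K (fun φ => v φ θ) (Icc a b))
    (hdφ : ∀ᵐ θ, θ ∈ Ioo (-Real.pi) Real.pi → ∀ᵐ φ, φ ∈ Ioo (-(Real.pi / 2)) (Real.pi / 2) →
      HasDerivAt (fun φ => v φ θ) (p φ θ) φ)
    (hpI : Integrable (fun z : ℝ × ℝ => p z.1 z.2 ^ 2 * Real.cos z.1)
      ((volume.restrict (Ioo (-(Real.pi / 2)) (Real.pi / 2))).prod
        (volume.restrict (Ioo (-Real.pi) Real.pi))))
    (x : ℝ) (hx : x ∈ Ioo (-(Real.pi / 2)) (Real.pi / 2)) (y : ℝ) (hy : y ∈ Ioo (-(Real.pi / 2)) (Real.pi / 2))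
    (px : IntegrableOn (fun θ => v x θ) (Ioo (-Real.pi) Real.pi))
    (py : IntegrableOn (fun θ => v y θ) (Ioo (-Real.pi) Real.pi)) (hxy : x < y) :
    ENNReal.ofReal |(∫ θ in Ioo (-Real.pi) Real.pi, v y θ) - ∫ θ in Ioo (-Real.pi) Real.pi, v x θ| ≤
      ∫⁻ t in Ioo x y, ENNReal.ofReal |∫ θ in Ioo (-Real.pi) Real.pi, p t θ| := by
  have hpi := Real.pi_pos
  have hcos : ∀ t ∈ Ioo (-(Real.pi / 2)) (Real.pi / 2), 0 < Real.cos t := fun t ht => Real.cos_pos_of_mem_Ioo ht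
  have hsub : Icc x y ⊆ Ioo (-(Real.pi / 2)) (Real.pi / 2) := fun t ht => ⟨hx.1.trans_le ht.1, ht.2.trans_lt hy.2⟩
  obtain ⟨t0, ht0, hmin⟩ := (isCompact_Icc (a := x) (b := y)).exists_isMinOn
    (nonempty_Icc.2 hxy.le) Real.continuous_cos.continuousOn
  have hδ : 0 < Real.cos t0 := hcos t0 (hsub ht0)
  have hpint : Integrable (fun z : ℝ × ℝ => p z.1 z.2)
      ((volume.restrict (Ioo x y)).prod (volume.restrict (Ioo (-Real.pi) Real.pi))) := by
    have h1 : Integrable (fun z : ℝ × ℝ => p z.1 z.2 ^ 2 * Real.cos z.1)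
        ((volume.restrict (Ioo x y)).prod (volume.restrict (Ioo (-Real.pi) Real.pi))) := by
      rw [Measure.prod_restrict] at hpI ⊢
      exact IntegrableOn.mono_set hpI
        (prod_mono (Ioo_subset_Icc_self.trans hsub) subset_rfl)
    have h2 : Integrable (fun _ : ℝ × ℝ => (1:ℝ))
        ((volume.restrict (Ioo x y)).prod (volume.restrict (Ioo (-Real.pi) Real.pi))) := integrable_const _
    refine Integrable.mono' (h2.add (h1.const_mul (Real.cos t0)⁻¹)) hp.aestronglyMeasurable ?_
    rw [Measure.prod_restrict]
    refine (ae_restrict_iff' (measurableSet_Ioo.prod measurableSet_Ioo)).2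
      (ae_of_all _ fun z hz => ?_)
    have hc : Real.cos t0 ≤ Real.cos z.1 := hmin (Ioo_subset_Icc_self hz.1)
    simp only [Pi.add_apply, Real.norm_eq_abs]
    have h3 : 1 ≤ (Real.cos t0)⁻¹ * Real.cos z.1 := by
      rw [inv_mul_eq_div, le_div_iff₀ hδ]; linarith
    have h4 : |p z.1 z.2| ≤ 1 + p z.1 z.2 ^ 2 := by
      rw [← sq_abs]; nlinarith [sq_nonneg (|p z.1 z.2| - 1), abs_nonneg (p z.1 z.2)]
    have h5 : p z.1 z.2 ^ 2 * 1 ≤ p z.1 z.2 ^ 2 * ((Real.cos t0)⁻¹ * Real.cos z.1) := by gcongr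
    linarith
  have e : (∫ θ in Ioo (-Real.pi) Real.pi, v y θ) - (∫ θ in Ioo (-Real.pi) Real.pi, v x θ) = ∫ t in Ioo x y, ∫ θ in Ioo (-Real.pi) Real.pi, p t θ := by
    rw [← integral_sub py px, integral_integral_swap hpint]
    refine setIntegral_congr_ae measurableSet_Ioo ?_
    filter_upwards [hdφ] with θ hθ hθJ
    exact ((lip_abs (hLφ θ hθJ) (hθ hθJ) hx hy hxy).1.2).symm
  rw [e, ← Real.enorm_eq_ofReal_abs]
  refine (enorm_integral_le_lintegral_enorm _).trans (le_of_eq ?_)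
  simp only [Real.enorm_eq_ofReal_abs]

theorem two_d_b {v p : ℝ → ℝ → ℝ}
    (hv : Measurable (fun z : ℝ × ℝ => v z.1 z.2)) (hp : Measurable (fun z : ℝ × ℝ => p z.1 z.2))
    (hLφ : ∀ θ ∈ Ioo (-Real.pi) Real.pi, ∀ a b, Icc a b ⊆ Ioo (-(Real.pi / 2)) (Real.pi / 2) →
      ∃ K, LipschitzOnWith K (fun φ => v φ θ) (Icc a b))
    (hdφ : ∀ᵐ θ, θ ∈ Ioo (-Real.pi) Real.pi → ∀ᵐ φ, φ ∈ Ioo (-(Real.pi / 2)) (Real.pi / 2) →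
      HasDerivAt (fun φ => v φ θ) (p φ θ) φ)
    (hvI : ∀ᵐ φ, φ ∈ Ioo (-(Real.pi / 2)) (Real.pi / 2) →
      IntegrableOn (fun θ => v φ θ) (Ioo (-Real.pi) Real.pi))
    (hpI : Integrable (fun z : ℝ × ℝ => p z.1 z.2 ^ 2 * Real.cos z.1)
      ((volume.restrict (Ioo (-(Real.pi / 2)) (Real.pi / 2))).prod
        (volume.restrict (Ioo (-Real.pi) Real.pi))))
    (hA2 : IntegrableOn (fun φ => (∫ θ in Ioo (-Real.pi) Real.pi, v φ θ) ^ 2 * Real.cos φ)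
      (Ioo (-(Real.pi / 2)) (Real.pi / 2)))
    (hmean : ∫ φ in Ioo (-(Real.pi / 2)) (Real.pi / 2),
      (∫ θ in Ioo (-Real.pi) Real.pi, v φ θ) * Real.cos φ = 0) :
    2 * (∫⁻ φ in Ioo (-(Real.pi / 2)) (Real.pi / 2),
      ENNReal.ofReal ((∫ θ in Ioo (-Real.pi) Real.pi, v φ θ) ^ 2 * Real.cos φ)) ≤
    ∫⁻ φ in Ioo (-(Real.pi / 2)) (Real.pi / 2),
      ENNReal.ofReal ((∫ θ in Ioo (-Real.pi) Real.pi, p φ θ) ^ 2 * Real.cos φ) :=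
  two_d_b0 (P := fun φ => IntegrableOn (fun θ => v φ θ) (Ioo (-Real.pi) Real.pi))
    (StronglyMeasurable.integral_prod_right' (ν := volume.restrict (Ioo (-Real.pi) Real.pi))
      hv.stronglyMeasurable).measurable
    (StronglyMeasurable.integral_prod_right' (ν := volume.restrict (Ioo (-Real.pi) Real.pi))
      hp.stronglyMeasurable).measurable (hvI.mono fun _ h => h) (two_d_b1 hp hLφ hdφ hpI) hA2 hmean

theorem two_d {v p q : ℝ → ℝ → ℝ}
    (hv : Measurable (fun z : ℝ × ℝ => v z.1 z.2)) (hp : Measurable (fun z : ℝ × ℝ => p z.1 z.2))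
    (hq : Measurable (fun z : ℝ × ℝ => q z.1 z.2))
    (hLφ : ∀ θ ∈ Ioo (-Real.pi) Real.pi, ∀ a b, Icc a b ⊆ Ioo (-(Real.pi / 2)) (Real.pi / 2) →
      ∃ K, LipschitzOnWith K (fun φ => v φ θ) (Icc a b))
    (hLθ : ∀ φ ∈ Ioo (-(Real.pi / 2)) (Real.pi / 2), ∀ a b, Icc a b ⊆ Ioo (-Real.pi) Real.pi →
      ∃ K, LipschitzOnWith K (fun θ => v φ θ) (Icc a b))
    (hdφ : ∀ᵐ θ, θ ∈ Ioo (-Real.pi) Real.pi → ∀ᵐ φ, φ ∈ Ioo (-(Real.pi / 2)) (Real.pi / 2) →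
      HasDerivAt (fun φ => v φ θ) (p φ θ) φ)
    (hdθ : ∀ᵐ φ, φ ∈ Ioo (-(Real.pi / 2)) (Real.pi / 2) → ∀ᵐ θ, θ ∈ Ioo (-Real.pi) Real.pi →
      HasDerivAt (fun θ => v φ θ) (q φ θ) θ)
    (hv2 : Integrable (fun z : ℝ × ℝ => v z.1 z.2 ^ 2 * Real.cos z.1)
      ((volume.restrict (Ioo (-(Real.pi / 2)) (Real.pi / 2))).prod
        (volume.restrict (Ioo (-Real.pi) Real.pi))))
    (hp2 : Integrable (fun z : ℝ × ℝ => p z.1 z.2 ^ 2 * Real.cos z.1)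
      ((volume.restrict (Ioo (-(Real.pi / 2)) (Real.pi / 2))).prod
        (volume.restrict (Ioo (-Real.pi) Real.pi))))
    (hmean : ∫ φ in Ioo (-(Real.pi / 2)) (Real.pi / 2),
      (∫ θ in Ioo (-Real.pi) Real.pi, v φ θ) * Real.cos φ = 0) :
    ENNReal.ofReal (3 / 4) * (∫⁻ φ in Ioo (-(Real.pi / 2)) (Real.pi / 2),
      ∫⁻ θ in Ioo (-Real.pi) Real.pi, ENNReal.ofReal (v φ θ ^ 2 * Real.cos φ)) ≤
    (∫⁻ φ in Ioo (-(Real.pi / 2)) (Real.pi / 2),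
      ∫⁻ θ in Ioo (-Real.pi) Real.pi, ENNReal.ofReal (p φ θ ^ 2 * Real.cos φ)) +
    ∫⁻ φ in Ioo (-(Real.pi / 2)) (Real.pi / 2),
      ∫⁻ θ in Ioo (-Real.pi) Real.pi, ENNReal.ofReal (q φ θ ^ 2 / Real.cos φ) := by
  have hpi := Real.pi_pos
  have step1 := two_d_a hv hp hq hLφ hLθ hdφ hdθ
  set I := Ioo (-(Real.pi / 2)) (Real.pi / 2) with hI
  set J := Ioo (-Real.pi) Real.pi with hJ
  have hcos : ∀ t ∈ I, 0 < Real.cos t := fun t ht => Real.cos_pos_of_mem_Ioo ht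
  set A : ℝ → ℝ := fun φ => ∫ θ in J, v φ θ with hA
  set B : ℝ → ℝ := fun φ => ∫ θ in J, p φ θ with hB
  have Am : Measurable A :=
    (StronglyMeasurable.integral_prod_right' (ν := volume.restrict J) hv.stronglyMeasurable).measurable
  have Bm : Measurable B :=
    (StronglyMeasurable.integral_prod_right' (ν := volume.restrict J) hp.stronglyMeasurable).measurable
  have vm' : ∀ φ, Measurable (fun θ => v φ θ) := fun φ =>
    hv.comp (by fun_prop : Measurable fun θ : ℝ => (φ, θ))
  have pm' : ∀ φ, Measurable (fun θ => p φ θ) := fun φ =>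
    hp.comp (by fun_prop : Measurable fun θ : ℝ => (φ, θ))
  have fin : ∀ (u : ℝ → ℝ → ℝ), (∀ φ, Measurable (fun θ => u φ θ)) →
      Integrable (fun z : ℝ × ℝ => u z.1 z.2 ^ 2 * Real.cos z.1)
      ((volume.restrict I).prod (volume.restrict J)) → ∀ᵐ φ ∂(volume.restrict I),
      φ ∈ I ∧ (∫⁻ x in J, ENNReal.ofReal (u φ x ^ 2)) ≠ ⊤ := by
    intro u um hu
    filter_upwards [hu.prod_right_ae, ae_restrict_mem measurableSet_Ioo] with φ h1 h2
    refine ⟨h2, ?_⟩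
    have hc := hcos φ h2
    have h3 : Integrable (fun θ => u φ θ ^ 2) (volume.restrict J) := by
      have := h1.mul_const (Real.cos φ)⁻¹
      refine this.congr (ae_of_all _ fun θ => ?_)
      simp only
      field_simp
    exact (lintegral_ofReal_ne_top_iff_integrable h3.aestronglyMeasurable
      (ae_of_all _ fun x => sq_nonneg _)).2 h3
  have fv := fin v vm' hv2
  have fp := fin p pm' hp2
  have pullc : ∀ (u : ℝ → ℝ → ℝ), (∀ φ, Measurable (fun θ => u φ θ)) → ∀ φ ∈ I,
      (∫⁻ θ in J, ENNReal.ofReal (u φ θ ^ 2 * Real.cos φ)) =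
      ENNReal.ofReal (Real.cos φ) * ∫⁻ θ in J, ENNReal.ofReal (u φ θ ^ 2) := by
    intro u um φ hφ
    have hc := hcos φ hφ
    have := um φ
    rw [← lintegral_const_mul _ (by fun_prop)]
    refine lintegral_congr fun θ => ?_
    rw [← ENNReal.ofReal_mul hc.le, mul_comm]
  -- integrability of A^2 cos
  have hA2 : IntegrableOn (fun φ => A φ ^ 2 * Real.cos φ) I := by
    refine Integrable.mono' ((hv2.integral_prod_left).const_mul (2 * Real.pi))
      (by fun_prop : Measurable _).aestronglyMeasurable ?_
    filter_upwards [fv] with φ hφ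
    have hc := hcos φ hφ.1
    obtain ⟨h1, h2⟩ := var_J (vm' φ) hφ.2
    have i2 : Integrable (fun x => v φ x ^ 2) (volume.restrict J) :=
      (lintegral_ofReal_ne_top_iff_integrable ((vm' φ).pow_const 2).aestronglyMeasurable
        (ae_of_all _ fun x => sq_nonneg _)).1 hφ.2
    have h3 : ENNReal.ofReal (2 * A φ ^ 2) ≤ ENNReal.ofReal (4 * Real.pi * ∫ x in J, v φ x ^ 2) := by
      rw [ENNReal.ofReal_mul (p := 4 * Real.pi) (by positivity), ofReal_integral_eq_lintegral_ofReal i2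
        (ae_of_all _ fun x => sq_nonneg _), ← h2]
      exact le_add_self
    have hS : 0 ≤ ∫ x in J, v φ x ^ 2 := integral_nonneg fun _ => sq_nonneg _
    rw [ENNReal.ofReal_le_ofReal_iff (by positivity)] at h3
    rw [Real.norm_eq_abs, abs_of_nonneg (by positivity), integral_mul_const]
    nlinarith
  have step2 := two_d_b hv hp hLφ hdφ (by
    rw [← ae_restrict_iff' measurableSet_Ioo]
    filter_upwards [fv] with φ hφ
    exact (var_J (vm' φ) hφ.2).1) hp2 hA2 hmean
  set T1 : ℝ → ℝ≥0∞ := fun φ => ∫⁻ x in J, ∫⁻ y in J, ENNReal.ofReal ((v φ y - v φ x) ^ 2) with hT1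
  set T2 : ℝ → ℝ≥0∞ := fun φ => ∫⁻ x in J, ∫⁻ y in J, ENNReal.ofReal ((p φ y - p φ x) ^ 2) with hT2
  set M := ∫⁻ φ in I, ∫⁻ θ in J, ENNReal.ofReal (v φ θ ^ 2 * Real.cos φ) with hM
  set E1 := ∫⁻ φ in I, ∫⁻ θ in J, ENNReal.ofReal (p φ θ ^ 2 * Real.cos φ) with hE1
  set E2 := ∫⁻ φ in I, ∫⁻ θ in J, ENNReal.ofReal (q φ θ ^ 2 / Real.cos φ) with hE2
  change (∫⁻ φ in I, ENNReal.ofReal (3 / 4 * Real.cos φ) * T1 φ) ≤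
    (∫⁻ φ in I, ENNReal.ofReal (Real.cos φ) * T2 φ) + ENNReal.ofReal (4 * Real.pi) * E2 at step1
  have r1 : ENNReal.ofReal (4 * Real.pi) * (ENNReal.ofReal (3 / 4) * M) =
      (∫⁻ φ in I, ENNReal.ofReal (3 / 4 * Real.cos φ) * T1 φ) +
      ∫⁻ φ in I, ENNReal.ofReal (3 / 2 * (A φ ^ 2 * Real.cos φ)) := by
    rw [← lintegral_add_right _ (by fun_prop), ← mul_assoc, hM,
      ← lintegral_const_mul' _ _ (by finiteness)]
    refine lintegral_congr_ae ?_
    filter_upwards [fv] with φ hφ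
    have hc := hcos φ hφ.1
    obtain ⟨h1, h2⟩ := var_J (vm' φ) hφ.2
    change T1 φ + ENNReal.ofReal (2 * A φ ^ 2) = _ at h2
    rw [pullc v vm' φ hφ.1]
    calc _ = ENNReal.ofReal (3 / 4 * Real.cos φ) * (ENNReal.ofReal (4 * Real.pi) *
          ∫⁻ θ in J, ENNReal.ofReal (v φ θ ^ 2)) := by
          rw [ENNReal.ofReal_mul (p := 3 / 4) (by norm_num)]; ring
      _ = _ := by
          rw [← h2, mul_add, ← ENNReal.ofReal_mul (by positivity)]
          congr 2; ring
  have r2 : ENNReal.ofReal (4 * Real.pi) * E1 =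
      (∫⁻ φ in I, ENNReal.ofReal (Real.cos φ) * T2 φ) +
      2 * ∫⁻ φ in I, ENNReal.ofReal (B φ ^ 2 * Real.cos φ) := by
    have e2 : 2 * ∫⁻ φ in I, ENNReal.ofReal (B φ ^ 2 * Real.cos φ) =
        ∫⁻ φ in I, 2 * ENNReal.ofReal (B φ ^ 2 * Real.cos φ) :=
      (lintegral_const_mul _ (by fun_prop)).symm
    rw [e2, ← lintegral_add_right _ (by fun_prop), hE1,
      ← lintegral_const_mul' _ _ (by finiteness)]
    refine lintegral_congr_ae ?_
    filter_upwards [fp] with φ hφ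
    have hc := hcos φ hφ.1
    obtain ⟨h1, h2⟩ := var_J (pm' φ) hφ.2
    change T2 φ + ENNReal.ofReal (2 * B φ ^ 2) = _ at h2
    rw [pullc p pm' φ hφ.1]
    calc _ = ENNReal.ofReal (Real.cos φ) * (ENNReal.ofReal (4 * Real.pi) *
          ∫⁻ θ in J, ENNReal.ofReal (p φ θ ^ 2)) := by ring
      _ = _ := by
          rw [← h2, mul_add, ← ENNReal.ofReal_mul (by positivity),
            show (2:ℝ≥0∞) = ENNReal.ofReal 2 by simp, ← ENNReal.ofReal_mul (by norm_num)]
          congr 2; ring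
  have r3 : (∫⁻ φ in I, ENNReal.ofReal (3 / 2 * (A φ ^ 2 * Real.cos φ))) ≤
      2 * ∫⁻ φ in I, ENNReal.ofReal (B φ ^ 2 * Real.cos φ) := by
    calc _ ≤ ∫⁻ φ in I, 2 * ENNReal.ofReal (A φ ^ 2 * Real.cos φ) := by
          refine setLIntegral_mono_ae' measurableSet_Ioo (ae_of_all _ fun φ hφ => ?_)
          have hc := hcos φ hφ
          rw [show (2:ℝ≥0∞) = ENNReal.ofReal 2 by simp, ← ENNReal.ofReal_mul (by norm_num)]
          apply ENNReal.ofReal_le_ofReal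
          have : 0 ≤ A φ ^ 2 * Real.cos φ := by positivity
          linarith
      _ = 2 * ∫⁻ φ in I, ENNReal.ofReal (A φ ^ 2 * Real.cos φ) :=
          lintegral_const_mul _ (by fun_prop)
      _ ≤ _ := step2
      _ ≤ _ := by
          rw [two_mul]; exact le_self_add
  have fin4 : ENNReal.ofReal (4 * Real.pi) * (ENNReal.ofReal (3 / 4) * M) ≤
      ENNReal.ofReal (4 * Real.pi) * (E1 + E2) := by
    rw [r1, mul_add, r2]
    calc _ ≤ ((∫⁻ φ in I, ENNReal.ofReal (Real.cos φ) * T2 φ) + ENNReal.ofReal (4 * Real.pi) * E2) +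
          2 * ∫⁻ φ in I, ENNReal.ofReal (B φ ^ 2 * Real.cos φ) := add_le_add step1 r3
      _ = _ := by ring
  refine (ENNReal.mul_le_mul_iff_right ?_ (by finiteness)).1 fin4
  simpa using hpi


theorem uniq_pos {E : Type*} [MetricSpace E] [SecondCountableTopology E] [MeasurableSpace E]
    [BorelSpace E] {ν : Measure E} {S : Set E} (hS : ν Sᶜ = 0) (h0 : ν ≠ 0) {k : ℝ → ℝ≥0∞}
    (hk : ∀ r, ∀ x ∈ S, ν (ball x r) = k r) {r : ℝ} (hr : 0 < r) : k r ≠ 0 := by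
  intro hz
  have h1 : ν S = 0 := by
    refine measure_null_of_locally_null S fun x hx => ⟨ball x r, ?_, by rw [hk r x hx, hz]⟩
    exact mem_nhdsWithin_of_mem_nhds (ball_mem_nhds x hr)
  apply h0
  rw [← Measure.measure_univ_eq_zero, ← union_compl_self S]
  exact measure_union_null h1 hS

theorem uniq_le {E : Type*} [MetricSpace E] [SecondCountableTopology E] [MeasurableSpace E]
    [BorelSpace E] {μ ν : Measure E} [IsFiniteMeasure μ] [IsFiniteMeasure ν] {S : Set E}
    (hSm : MeasurableSet S)
    (hμS : μ Sᶜ = 0) (hνS : ν Sᶜ = 0) (hν0 : ν ≠ 0) {h k : ℝ → ℝ≥0∞}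
    (hh : ∀ r, ∀ x ∈ S, μ (ball x r) = h r) (hk : ∀ r, ∀ x ∈ S, ν (ball x r) = k r)
    {U : Set E} (hU : IsOpen U) : μ U * ν univ ≤ μ univ * ν U := by
  have aeμ : ∀ᵐ x ∂μ, x ∈ S := by rw [ae_iff]; exact hμS
  have aeν : ∀ᵐ x ∂ν, x ∈ S := by rw [ae_iff]; exact hνS
  have hSne : S.Nonempty := by
    by_contra hne
    rw [not_nonempty_iff_eq_empty] at hne
    rw [hne, compl_empty] at hνS
    exact hν0 (Measure.measure_univ_eq_zero.1 hνS)
  obtain ⟨s0, hs0⟩ := hSne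
  have ton : ∀ r : ℝ, ∀ V : Set E, IsOpen V →
      Measurable (fun x => ν (V ∩ ball x r)) ∧ ∫⁻ x, ν (V ∩ ball x r) ∂μ = h r * ν V := by
    intro r V hV
    have hs : MeasurableSet {z : E × E | z.2 ∈ V ∧ dist z.2 z.1 < r} := by
      apply IsOpen.measurableSet
      exact (hV.preimage continuous_snd).inter
        (isOpen_lt (continuous_snd.dist continuous_fst) continuous_const)
    have e1 : ∀ x, Prod.mk x ⁻¹' {z : E × E | z.2 ∈ V ∧ dist z.2 z.1 < r} = V ∩ ball x r := by
      intro x; ext y; simp [mem_ball]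
    have hm := measurable_measure_prodMk_left (ν := ν) hs
    simp only [e1] at hm
    refine ⟨hm, ?_⟩
    have h1 := Measure.prod_apply (μ := μ) (ν := ν) hs
    have h2 := Measure.prod_apply_symm (μ := μ) (ν := ν) hs
    rw [h1] at h2
    simp only [e1] at h2
    rw [h2]
    have e2 : ∀ᵐ y ∂ν, μ ((fun x => (x, y)) ⁻¹' {z : E × E | z.2 ∈ V ∧ dist z.2 z.1 < r}) =
        V.indicator (fun _ => h r) y := by
      filter_upwards [aeν] with y hy
      by_cases hyV : y ∈ V
      · rw [indicator_of_mem hyV, ← hh r y hy]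
        congr 1; ext x; simp [hyV, mem_ball, dist_comm]
      · rw [indicator_of_notMem hyV]
        simp [hyV]
    rw [lintegral_congr_ae e2, lintegral_indicator_const hV.measurableSet]
  have step : ∀ r : ℝ, 0 < r → μ {x | x ∈ S ∧ ball x r ⊆ U} * ν univ ≤ μ univ * ν U := by
    intro r hr
    have k0 : k r ≠ 0 := uniq_pos hνS hν0 hk hr
    have kt : k r ≠ ⊤ := by rw [← hk r s0 hs0]; finiteness
    have a1 : μ univ * k r = h r * ν univ := by
      rw [← (ton r univ isOpen_univ).2]
      simp only [univ_inter]
      rw [lintegral_congr_ae (g := fun _ => k r) (by filter_upwards [aeμ] with x hx using hk r x hx),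
        lintegral_const, mul_comm]
    have a2 : k r * μ {x | x ∈ S ∧ ball x r ⊆ U} ≤ h r * ν U := by
      obtain ⟨m, e⟩ := ton r U hU
      rw [← e]
      refine le_trans ?_ (mul_meas_ge_le_lintegral m (k r))
      gcongr
      intro hx
      rename_i x
      show k r ≤ ν (U ∩ ball x r)
      rw [inter_eq_self_of_subset_right hx.2, hk r x hx.1]
    have a3 : k r * (μ {x | x ∈ S ∧ ball x r ⊆ U} * ν univ) ≤ k r * (μ univ * ν U) := by
      calc _ = (k r * μ {x | x ∈ S ∧ ball x r ⊆ U}) * ν univ := by ring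
        _ ≤ (h r * ν U) * ν univ := by gcongr
        _ = (h r * ν univ) * ν U := by ring
        _ = _ := by rw [← a1]; ring
    exact (ENNReal.mul_le_mul_iff_right k0 kt).1 a3
  have hmono : Monotone (fun n : ℕ => {x | x ∈ S ∧ ball x (1 / ((n:ℝ) + 1)) ⊆ U}) := by
    intro m n hmn x hx
    refine ⟨hx.1, (ball_subset_ball ?_).trans hx.2⟩
    exact one_div_le_one_div_of_le (by positivity) (by gcongr)
  have hun : (⋃ n : ℕ, {x | x ∈ S ∧ ball x (1 / ((n:ℝ) + 1)) ⊆ U}) = S ∩ U := by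
    ext x
    simp only [mem_iUnion, mem_ofPred_eq, mem_inter_iff]
    constructor
    · rintro ⟨n, h1, h2⟩
      exact ⟨h1, h2 (mem_ball_self (by positivity))⟩
    · rintro ⟨h1, h2⟩
      obtain ⟨ε, hε, hb⟩ := Metric.isOpen_iff.1 hU x h2
      obtain ⟨n, hn⟩ := exists_nat_one_div_lt hε
      exact ⟨n, h1, (ball_subset_ball hn.le).trans hb⟩
  have hμU : μ U = μ (S ∩ U) := by
    apply measure_congr
    filter_upwards [aeμ] with x hx
    exact propext ⟨fun hxU => ⟨hx, hxU⟩, fun hxU => hxU.2⟩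
  rw [hμU, ← hun, hmono.measure_iUnion, ENNReal.iSup_mul]
  exact iSup_le fun n => step _ (by positivity)

theorem uniq_meas {E : Type*} [MetricSpace E] [SecondCountableTopology E] [MeasurableSpace E]
    [BorelSpace E] {μ ν : Measure E} [IsFiniteMeasure μ] [IsFiniteMeasure ν] {S : Set E}
    (hSm : MeasurableSet S)
    (hμS : μ Sᶜ = 0) (hνS : ν Sᶜ = 0) (hμ0 : μ ≠ 0) (hν0 : ν ≠ 0) {h k : ℝ → ℝ≥0∞}
    (hh : ∀ r, ∀ x ∈ S, μ (ball x r) = h r) (hk : ∀ r, ∀ x ∈ S, ν (ball x r) = k r) :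
    ∃ c : ℝ≥0∞, c ≠ 0 ∧ c ≠ ⊤ ∧ μ = c • ν := by
  have n0 : ν univ ≠ 0 := fun h => hν0 (Measure.measure_univ_eq_zero.1 h)
  have m0 : μ univ ≠ 0 := fun h => hμ0 (Measure.measure_univ_eq_zero.1 h)
  have nt : ν univ ≠ ⊤ := by finiteness
  have mt : μ univ ≠ ⊤ := by finiteness
  refine ⟨μ univ / ν univ, (ENNReal.div_pos m0 nt).ne', ENNReal.div_ne_top mt n0, ?_⟩
  have hop : ∀ U : Set E, IsOpen U → μ U = (μ univ / ν univ) * ν U := by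
    intro U hU
    have e : μ U * ν univ = μ univ * ν U := by
      refine le_antisymm (uniq_le hSm hμS hνS hν0 hh hk hU) ?_
      have := uniq_le hSm hνS hμS hμ0 hk hh hU
      rwa [mul_comm, mul_comm (ν univ)] at this
    rw [ENNReal.div_eq_inv_mul, mul_assoc, ← e, mul_comm, mul_assoc, ENNReal.mul_inv_cancel n0 nt,
      mul_one]
  refine ext_of_generate_finite {U : Set E | IsOpen U} (BorelSpace.measurable_eq) isPiSystem_isOpen
    (fun U hU => ?_) ?_
  · rw [hop U hU, Measure.smul_apply, smul_eq_mul]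
  · rw [Measure.smul_apply, smul_eq_mul]; exact hop univ isOpen_univ


theorem polar_it {f : ℝ → ℝ → ℝ≥0∞} (hf : Measurable (fun z : ℝ × ℝ => f z.1 z.2)) :
    ∫⁻ x, ∫⁻ y, f x y = ∫⁻ θ in Ioo (-Real.pi) Real.pi, ∫⁻ r in Ioi (0:ℝ),
      ENNReal.ofReal r * f (r * Real.cos θ) (r * Real.sin θ) := by
  have h1 := lintegral_comp_polarCoord_symm (fun z : ℝ × ℝ => f z.1 z.2)
  rw [Measure.volume_eq_prod, lintegral_prod _ hf.aemeasurable] at h1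
  rw [← h1, polarCoord_target, ← Measure.prod_restrict]
  simp only [polarCoord_symm_apply, smul_eq_mul]
  rw [lintegral_prod_symm]
  have : Measurable (fun p : ℝ × ℝ => f (p.1 * Real.cos p.2) (p.1 * Real.sin p.2)) :=
    hf.comp (by fun_prop : Measurable fun p : ℝ × ℝ => (p.1 * Real.cos p.2, p.1 * Real.sin p.2))
  fun_prop

theorem polar_half {g : ℝ → ℝ → ℝ≥0∞} (hg : Measurable (fun z : ℝ × ℝ => g z.1 z.2)) :
    ∫⁻ x in Ioi (0:ℝ), ∫⁻ y, g x y = ∫⁻ φ in Ioo (-(Real.pi / 2)) (Real.pi / 2), ∫⁻ r in Ioi (0:ℝ),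
      ENNReal.ofReal r * g (r * Real.cos φ) (r * Real.sin φ) := by
  have hpi := Real.pi_pos
  have h1 : ∫⁻ x in Ioi (0:ℝ), ∫⁻ y, g x y =
      ∫⁻ x, ∫⁻ y, (Ioi (0:ℝ)).indicator (fun x => g x y) x := by
    rw [← lintegral_indicator measurableSet_Ioi]
    refine lintegral_congr fun x => ?_
    by_cases hx : x ∈ Ioi (0:ℝ)
    · simp only [indicator_of_mem hx]
    · simp only [indicator_of_notMem hx, lintegral_zero]
  have hm : Measurable (fun z : ℝ × ℝ => (Ioi (0:ℝ)).indicator (fun x => g x z.2) z.1) := by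
    have : (fun z : ℝ × ℝ => (Ioi (0:ℝ)).indicator (fun x => g x z.2) z.1) =
        (Prod.fst ⁻¹' (Ioi (0:ℝ))).indicator (fun z : ℝ × ℝ => g z.1 z.2) := by
      ext z
      by_cases hz : z.1 ∈ Ioi (0:ℝ)
      · rw [indicator_of_mem hz, indicator_of_mem (by exact hz)]
      · rw [indicator_of_notMem hz, indicator_of_notMem (by exact hz)]
    rw [this]
    exact hg.indicator (measurable_fst measurableSet_Ioi)
  rw [h1, polar_it (f := fun x y => (Ioi (0:ℝ)).indicator (fun x => g x y) x) hm]
  have h2 : ∀ φ ∈ Ioo (-Real.pi) Real.pi, (∫⁻ r in Ioi (0:ℝ), ENNReal.ofReal r *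
      (Ioi (0:ℝ)).indicator (fun x => g x (r * Real.sin φ)) (r * Real.cos φ)) =
      (Ioo (-(Real.pi / 2)) (Real.pi / 2)).indicator (fun φ => ∫⁻ r in Ioi (0:ℝ),
        ENNReal.ofReal r * g (r * Real.cos φ) (r * Real.sin φ)) φ := by
    intro φ hφ
    by_cases h : φ ∈ Ioo (-(Real.pi / 2)) (Real.pi / 2)
    · rw [indicator_of_mem h]
      refine setLIntegral_congr_fun measurableSet_Ioi fun r hr => ?_
      have : r * Real.cos φ ∈ Ioi (0:ℝ) := mul_pos hr (Real.cos_pos_of_mem_Ioo h)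
      simp only [indicator_of_mem this]
    · rw [indicator_of_notMem h]
      rw [setLIntegral_congr_fun (g := fun _ => 0) measurableSet_Ioi]
      · simp
      intro r hr
      have hc : Real.cos φ ≤ 0 := by
        rcases le_or_gt (Real.pi / 2) φ with h3 | h3
        · exact Real.cos_nonpos_of_pi_div_two_le_of_le h3 (by linarith [hφ.2])
        · have h4 : φ ≤ -(Real.pi / 2) := by
            by_contra h5
            exact h ⟨not_le.1 h5, h3⟩
          rw [← Real.cos_neg]
          exact Real.cos_nonpos_of_pi_div_two_le_of_le (by linarith) (by linarith [hφ.1])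
      have : r * Real.cos φ ∉ Ioi (0:ℝ) := by
        rw [mem_Ioi, not_lt]
        exact mul_nonpos_of_nonneg_of_nonpos (le_of_lt hr) hc
      simp only [indicator_of_notMem this, mul_zero]
  rw [setLIntegral_congr_fun measurableSet_Ioo h2, lintegral_indicator measurableSet_Ioo,
    Measure.restrict_restrict measurableSet_Ioo, inter_eq_left.2]
  exact Ioo_subset_Ioo (by linarith) (by linarith)

theorem sph_coord {F : ℝ → ℝ → ℝ → ℝ≥0∞}
    (hF : Measurable (fun z : ℝ × ℝ × ℝ => F z.1 z.2.1 z.2.2)) :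
    ∫⁻ z, ∫⁻ x, ∫⁻ y, F x y z = ∫⁻ θ in Ioo (-Real.pi) Real.pi,
      ∫⁻ φ in Ioo (-(Real.pi / 2)) (Real.pi / 2), ∫⁻ r in Ioi (0:ℝ),
      ENNReal.ofReal r * (ENNReal.ofReal (r * Real.cos φ) *
        F (r * Real.cos φ * Real.cos θ) (r * Real.cos φ * Real.sin θ) (r * Real.sin φ)) := by
  have h1 : ∀ z, ∫⁻ x, ∫⁻ y, F x y z = ∫⁻ θ in Ioo (-Real.pi) Real.pi, ∫⁻ ρ in Ioi (0:ℝ),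
      ENNReal.ofReal ρ * F (ρ * Real.cos θ) (ρ * Real.sin θ) z := by
    intro z
    exact polar_it (f := fun x y => F x y z)
      (hF.comp (by fun_prop : Measurable fun p : ℝ × ℝ => (p.1, p.2, z)))
  simp only [h1]
  have m3 : Measurable (fun w : (ℝ × ℝ) × ℝ =>
      ENNReal.ofReal w.2 * F (w.2 * Real.cos w.1.2) (w.2 * Real.sin w.1.2) w.1.1) := by
    refine Measurable.mul (by fun_prop) (hF.comp (by fun_prop : Measurable
      fun w : (ℝ × ℝ) × ℝ => (w.2 * Real.cos w.1.2, w.2 * Real.sin w.1.2, w.1.1)))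
  rw [lintegral_lintegral_swap]
  swap
  · exact (Measurable.lintegral_prod_right' (ν := volume.restrict (Ioi (0:ℝ))) m3).aemeasurable
  refine lintegral_congr fun θ => ?_
  have m2 : Measurable (fun w : ℝ × ℝ =>
      ENNReal.ofReal w.1 * F (w.1 * Real.cos θ) (w.1 * Real.sin θ) w.2) := by
    refine Measurable.mul (by fun_prop) (hF.comp (by fun_prop : Measurable
      fun w : ℝ × ℝ => (w.1 * Real.cos θ, w.1 * Real.sin θ, w.2)))
  rw [lintegral_lintegral_swap]
  swap
  · exact (m2.comp measurable_swap).aemeasurable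
  exact polar_half (g := fun ρ z => ENNReal.ofReal ρ * F (ρ * Real.cos θ) (ρ * Real.sin θ) z) m2

theorem coord3 {G : Rn 3 → ℝ≥0∞} (hG : Measurable G) :
    ∫⁻ x, G x = ∫⁻ z : ℝ, ∫⁻ x : ℝ, ∫⁻ y : ℝ, G !₂[x, y, z] := by
  have a1 := (PiLp.volume_preserving_toLp (Fin 3)).lintegral_comp hG
  have a2 := ((volume_preserving_piFinSuccAbove (fun _ : Fin 3 => ℝ) 2).symm _).lintegral_comp
    (hG.comp (WithLp.measurable_toLp 2 (Fin 3 → ℝ)))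
  rw [← a1]
  simp only [Function.comp] at a2
  rw [← a2, Measure.volume_eq_prod, lintegral_prod]
  swap
  · exact (hG.comp ((WithLp.measurable_toLp 2 _).comp (MeasurableEquiv.measurable _))).aemeasurable
  refine lintegral_congr fun z => ?_
  have a3 := ((volume_preserving_finTwoArrow ℝ).symm _).lintegral_comp
    (f := fun w => G (WithLp.toLp 2 ((MeasurableEquiv.piFinSuccAbove (fun _ : Fin 3 => ℝ) 2).symm (z, w))))
    (hG.comp ((WithLp.measurable_toLp 2 _).comp ((MeasurableEquiv.measurable _).comp
      measurable_prodMk_left)))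
  rw [← a3, Measure.volume_eq_prod, lintegral_prod]
  swap
  · exact (hG.comp ((WithLp.measurable_toLp 2 _).comp ((MeasurableEquiv.measurable _).comp
      (measurable_prodMk_left.comp (MeasurableEquiv.measurable _))))).aemeasurable
  refine lintegral_congr fun x => lintegral_congr fun y => ?_
  congr 2
  ext i
  fin_cases i <;> rfl


def Xs (φ θ : ℝ) : Rn 3 :=
  !₂[Real.cos φ * Real.cos θ, Real.cos φ * Real.sin θ, Real.sin φ]

def IJ : Measure (ℝ × ℝ) := (volume.restrict (Ioo (-(Real.pi / 2)) (Real.pi / 2))).prod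
        (volume.restrict (Ioo (-Real.pi) Real.pi))

def sigS : Measure (Rn 3) := Measure.map (fun z : ℝ × ℝ => Xs z.1 z.2)
  (IJ.withDensity (fun z => ENNReal.ofReal (Real.cos z.1)))

theorem cont_Xs : Continuous (fun z : ℝ × ℝ => Xs z.1 z.2) := by
  unfold Xs
  apply (PiLp.continuous_toLp 2 _).comp
  refine continuous_pi fun i => ?_
  fin_cases i <;> simp <;> fun_prop

theorem norm_Xs (φ θ : ℝ) : ‖Xs φ θ‖ = 1 := by
  rw [EuclideanSpace.norm_eq, Real.sqrt_eq_one]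
  simp [Fin.sum_univ_three, Xs]
  nlinarith [Real.sin_sq_add_cos_sq φ, Real.sin_sq_add_cos_sq θ]

instance : SFinite IJ := by unfold IJ; infer_instance
instance : IsFiniteMeasure IJ := by unfold IJ; infer_instance

theorem lint_sigS {f : Rn 3 → ℝ≥0∞} (hf : Measurable f) :
    ∫⁻ y, f y ∂sigS = ∫⁻ φ in Ioo (-(Real.pi / 2)) (Real.pi / 2), ∫⁻ θ in Ioo (-Real.pi) Real.pi,
      ENNReal.ofReal (Real.cos φ) * f (Xs φ θ) := by
  have hm : Measurable (fun z : ℝ × ℝ => f (Xs z.1 z.2)) := hf.comp cont_Xs.measurable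
  unfold sigS
  rw [lintegral_map hf cont_Xs.measurable, lintegral_withDensity_eq_lintegral_mul _ (by fun_prop) hm]
  unfold IJ
  rw [lintegral_prod]
  · rfl
  · exact Measurable.aemeasurable (Measurable.mul (by fun_prop) hm)

theorem nu_eq : Measure.map (fun x : Rn 3 => ‖x‖⁻¹ • x) (volume.restrict (ball 0 1)) =
    (∫⁻ r in Ioo (0:ℝ) 1, ENNReal.ofReal r * ENNReal.ofReal r) • sigS := by
  have hn : Measurable (fun x : Rn 3 => ‖x‖⁻¹ • x) := by fun_prop
  refine Measure.ext_of_lintegral _ fun f hf => ?_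
  rw [lintegral_map hf hn, lintegral_smul_measure, lint_sigS hf, smul_eq_mul]
  have hfn : Measurable fun x : Rn 3 => f (‖x‖⁻¹ • x) := hf.comp hn
  rw [← lintegral_indicator measurableSet_ball, coord3 (hfn.indicator measurableSet_ball),
    sph_coord (F := fun x y z => (ball (0 : Rn 3) 1).indicator (fun x : Rn 3 => f (‖x‖⁻¹ • x)) !₂[x, y, z])]
  swap
  · refine (hfn.indicator measurableSet_ball).comp ?_
    apply (WithLp.measurable_toLp 2 _).comp
    refine measurable_pi_lambda _ fun i => ?_
    fin_cases i <;> simp <;> fun_prop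
  have hm : Measurable (fun z : ℝ × ℝ => f (Xs z.1 z.2)) := hf.comp cont_Xs.measurable
  have hm2 : Measurable (fun z : ℝ × ℝ => ENNReal.ofReal (Real.cos z.1) * f (Xs z.1 z.2)) :=
    Measurable.mul (by fun_prop) hm
  rw [lintegral_lintegral_swap (f := fun φ θ => ENNReal.ofReal (Real.cos φ) * f (Xs φ θ))
    hm2.aemeasurable, ← lintegral_const_mul]
  swap
  · refine Measurable.lintegral_prod_right' (f := fun z : ℝ × ℝ =>
      ENNReal.ofReal (Real.cos z.2) * f (Xs z.2 z.1))
      (ν := volume.restrict (Ioo (-(Real.pi / 2)) (Real.pi / 2))) ?_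
    exact (measurable_swap_iff.2 hm2 :)
  refine lintegral_congr fun θ => ?_
  rw [← lintegral_const_mul]
  swap
  · exact (hm2.comp (measurable_prodMk_right (y := θ)) :)
  refine setLIntegral_congr_fun measurableSet_Ioo fun φ hφ => ?_
  have hc := Real.cos_pos_of_mem_Ioo hφ
  rw [← lintegral_mul_const _ (by fun_prop), ← lintegral_indicator measurableSet_Ioo,
    ← lintegral_indicator measurableSet_Ioi]
  refine lintegral_congr fun r => ?_
  by_cases hr : 0 < r
  swap
  · rw [indicator_of_notMem (by simpa using hr), indicator_of_notMem (fun h => hr h.1)]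
  rw [indicator_of_mem (by simpa using hr)]
  have e : (!₂[r * Real.cos φ * Real.cos θ, r * Real.cos φ * Real.sin θ, r * Real.sin φ] : Rn 3) =
      r • Xs φ θ := by
    ext i; fin_cases i <;> simp [Xs] <;> ring
  have en : ‖r • Xs φ θ‖ = r := by rw [norm_smul, norm_Xs, mul_one, Real.norm_of_nonneg hr.le]
  rw [e]
  by_cases h1 : r < 1
  · rw [indicator_of_mem (by rw [mem_ball_zero_iff, en]; exact h1), indicator_of_mem (show r ∈ Ioo (0:ℝ) 1 from ⟨hr, h1⟩), en,
      inv_smul_smul₀ hr.ne', ENNReal.ofReal_mul hr.le]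
    ring
  · rw [indicator_of_notMem (by rw [mem_ball_zero_iff, en]; exact h1),
      indicator_of_notMem (fun h => h1 h.2)]
    simp


theorem ball_const {μ : Measure (Rn 3)} (h : ∀ L : Rn 3 ≃ₗᵢ[ℝ] Rn 3, μ.map L = μ) :
    ∃ k : ℝ → ℝ≥0∞, ∀ r, ∀ x ∈ S2, μ (ball x r) = k r := by
  refine ⟨fun r => μ (ball (Xs 0 0) r), fun r x hx => ?_⟩
  have hn : ‖x‖ = ‖Xs 0 0‖ := by
    rw [norm_Xs]; simpa [S2] using hx
  have hL := Submodule.reflection_sub hn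
  set L := (Submodule.span ℝ {x - Xs 0 0})ᗮ.reflection
  show μ (ball x r) = μ (ball (Xs 0 0) r)
  conv_rhs => rw [← h L]
  rw [Measure.map_apply L.continuous.measurable measurableSet_ball, ← hL]
  congr 1
  ext y
  simp [mem_ball]

theorem S2_meas : MeasurableSet S2 := isClosed_sphere.measurableSet

theorem S2_pre (L : Rn 3 ≃ₗᵢ[ℝ] Rn 3) : L ⁻¹' S2 = S2 := by
  ext x; simp [S2]

theorem haus_inv (L : Rn 3 ≃ₗᵢ[ℝ] Rn 3) :
    ((μH[(2:ℝ)] : Measure (Rn 3)).restrict S2).map L = (μH[(2:ℝ)] : Measure (Rn 3)).restrict S2 := by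
  have h : MeasurePreserving L (μH[(2:ℝ)] : Measure (Rn 3)) μH[(2:ℝ)] :=
    ⟨L.continuous.measurable, L.toIsometryEquiv.map_hausdorffMeasure 2⟩
  have := (h.restrict_preimage S2_meas).map_eq
  rwa [S2_pre] at this

theorem nu_inv (L : Rn 3 ≃ₗᵢ[ℝ] Rn 3) :
    (Measure.map (fun x : Rn 3 => ‖x‖⁻¹ • x) (volume.restrict (ball 0 1))).map L =
    Measure.map (fun x : Rn 3 => ‖x‖⁻¹ • x) (volume.restrict (ball 0 1)) := by
  have hn : Measurable (fun x : Rn 3 => ‖x‖⁻¹ • x) := by fun_prop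
  have h := (L.measurePreserving.restrict_preimage (s := ball (0 : Rn 3) 1) measurableSet_ball).map_eq
  rw [show L ⁻¹' ball (0 : Rn 3) 1 = ball 0 1 by ext x; simp] at h
  conv_rhs => rw [← h]
  rw [Measure.map_map L.continuous.measurable hn, Measure.map_map hn L.continuous.measurable]
  congr 1
  ext1 x
  simp

theorem S2_sub : S2 ⊆ (fun z : ℝ × ℝ => Xs z.1 z.2) '' (Icc (-(Real.pi / 2)) (Real.pi / 2) ×ˢ Icc (-Real.pi) Real.pi) := by
  intro x hx
  have hx1 : x 0 ^ 2 + x 1 ^ 2 + x 2 ^ 2 = 1 := by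
    have : ‖x‖ = 1 := by simpa [S2] using hx
    rw [EuclideanSpace.norm_eq, Real.sqrt_eq_one] at this
    simpa [Fin.sum_univ_three] using this
  have h2 : -1 ≤ x 2 ∧ x 2 ≤ 1 := by constructor <;> nlinarith [sq_nonneg (x 0), sq_nonneg (x 1)]
  refine ⟨(Real.arcsin (x 2), Complex.arg ⟨x 0, x 1⟩), ⟨Real.arcsin_mem_Icc _,
    (Complex.neg_pi_lt_arg _).le, Complex.arg_le_pi _⟩, ?_⟩
  have hs := Real.sin_arcsin h2.1 h2.2
  have hc : Real.cos (Real.arcsin (x 2)) = ‖(⟨x 0, x 1⟩ : ℂ)‖ := by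
    rw [Real.cos_arcsin, Complex.norm_eq_sqrt_sq_add_sq]
    congr 1; simp; linarith
  ext i
  fin_cases i
  · simp [Xs, hc, Complex.norm_mul_cos_arg]
  · simp [Xs, hc, Complex.norm_mul_sin_arg]
  · simp [Xs, hs]

theorem Xs_smooth : ContDiff ℝ 1 (fun z : ℝ × ℝ => Xs z.1 z.2) := by
  unfold Xs
  rw [contDiff_euclidean]
  intro i
  fin_cases i <;> simp <;> fun_prop

theorem haus_fin : (μH[(2:ℝ)] : Measure (Rn 3)) S2 < ⊤ := by
  have hK : IsCompact (Icc (-(Real.pi / 2)) (Real.pi / 2) ×ˢ Icc (-Real.pi) Real.pi) :=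
    isCompact_Icc.prod isCompact_Icc
  obtain ⟨K, hL⟩ := (Xs_smooth.locallyLipschitz.locallyLipschitzOn).exists_lipschitzOnWith_of_compact hK
  refine (measure_mono S2_sub).trans_lt ((hL.hausdorffMeasure_image_le (by norm_num)).trans_lt ?_)
  rw [hausdorffMeasure_prod_real]
  have := hK.measure_lt_top (μ := volume)
  exact ENNReal.mul_lt_top (by simp) this

theorem haus_pos : (μH[(2:ℝ)] : Measure (Rn 3)) S2 ≠ 0 := by
  intro h0
  have hl : LipschitzWith 1 (fun x : Rn 3 => (x 0, x 1)) := by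
    refine LipschitzWith.of_dist_le_mul fun x y => ?_
    rw [NNReal.coe_one, one_mul, Prod.dist_eq]
    refine max_le ?_ ?_
    · exact PiLp.dist_apply_le x y 0
    · exact PiLp.dist_apply_le x y 1
  have h1 := (hl.lipschitzOnWith (s := S2)).hausdorffMeasure_image_le (d := 2) (by norm_num)
  rw [h0, mul_zero, hausdorffMeasure_prod_real] at h1
  have h2 : ball (0 : ℝ × ℝ) (1 / 2) ⊆ (fun x : Rn 3 => (x 0, x 1)) '' S2 := by
    rintro ⟨a, b⟩ hab
    rw [mem_ball_zero_iff, Prod.norm_def, max_lt_iff] at hab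
    have ha := abs_lt.1 hab.1
    have hb := abs_lt.1 hab.2
    simp only at ha hb
    have hp : 0 ≤ 1 - a ^ 2 - b ^ 2 := by nlinarith
    refine ⟨!₂[a, b, Real.sqrt (1 - a ^ 2 - b ^ 2)], ?_, by simp⟩
    simp only [S2, mem_sphere_zero_iff_norm]
    rw [EuclideanSpace.norm_eq, Real.sqrt_eq_one]
    simp [Fin.sum_univ_three, Real.sq_sqrt hp]
  have h3 : volume (ball (0 : ℝ × ℝ) (1 / 2)) ≤ 0 := (measure_mono h2).trans h1
  exact absurd h3 (not_le.2 (measure_ball_pos _ _ (by norm_num)))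

theorem haus_eq : ∃ c : ℝ≥0∞, c ≠ 0 ∧ c ≠ ⊤ ∧ (μH[(2:ℝ)] : Measure (Rn 3)).restrict S2 = c • sigS := by
  have hn : Measurable (fun x : Rn 3 => ‖x‖⁻¹ • x) := by fun_prop
  set ν := Measure.map (fun x : Rn 3 => ‖x‖⁻¹ • x) (volume.restrict (ball 0 1)) with hν
  have : IsFiniteMeasure ((μH[(2:ℝ)] : Measure (Rn 3)).restrict S2) :=
    ⟨by rw [Measure.restrict_apply_univ]; exact haus_fin⟩
  have f0 : IsFiniteMeasure ((volume : Measure (Rn 3)).restrict (ball 0 1)) :=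
    ⟨by rw [Measure.restrict_apply_univ]; exact measure_ball_lt_top⟩
  have : IsFiniteMeasure ν := by rw [hν]; infer_instance
  obtain ⟨h, hh⟩ := ball_const haus_inv
  obtain ⟨k, hk⟩ := ball_const (μ := ν) nu_inv
  have huniv : ν univ ≠ 0 := by
    rw [hν, Measure.map_apply hn MeasurableSet.univ, preimage_univ, Measure.restrict_apply_univ]
    exact (measure_ball_pos _ _ one_pos).ne'
  obtain ⟨c, c0, ct, e⟩ := uniq_meas (μ := (μH[(2:ℝ)] : Measure (Rn 3)).restrict S2) (ν := ν)
    S2_meas (by rw [Measure.restrict_apply S2_meas.compl]; simp)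
    (by
      rw [hν, Measure.map_apply hn S2_meas.compl]
      refine measure_mono_null (t := {0}) ?_ (by simp)
      intro x hx
      by_contra hx0
      apply hx
      have : ‖x‖ ≠ 0 := norm_ne_zero_iff.2 hx0
      simp [S2, norm_smul, this])
    (fun h0 => haus_pos (by rw [← Measure.restrict_apply_univ, h0]; simp))
    (fun h0 => huniv (by rw [h0]; simp)) hh hk
  rw [hν, nu_eq, smul_smul] at e
  set c0' := (∫⁻ r in Ioo (0:ℝ) 1, ENNReal.ofReal r * ENNReal.ofReal r) with hc0'
  refine ⟨c * c0', mul_ne_zero c0 ?_, ENNReal.mul_ne_top ct ?_, e⟩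
  · intro hz
    apply huniv
    rw [hν, nu_eq, ← hc0', hz]; simp
  · rw [hc0']
    refine ((setLIntegral_mono (g := fun _ => 1) measurable_const fun r hr => ?_).trans_lt ?_).ne
    · have : ENNReal.ofReal r ≤ 1 := by simpa using hr.2.le
      exact mul_le_one' this this
    · simp


def CC : Set (Rn 3) := {x | 0 < x 0 ∨ x 1 ≠ 0}

theorem CC_open : IsOpen CC := by
  have h0 : Continuous fun x : Rn 3 => x 0 := by fun_prop
  have h1 : Continuous fun x : Rn 3 => x 1 := by fun_prop
  exact (isOpen_lt continuous_const h0).union (isOpen_ne_fun h1 continuous_const)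

theorem S2_iff (x : Rn 3) : x ∈ S2 ↔ x 0 ^ 2 + x 1 ^ 2 + x 2 ^ 2 = 1 := by
  simp only [S2, mem_sphere_zero_iff_norm]
  rw [EuclideanSpace.norm_eq, Real.sqrt_eq_one]
  simp [Fin.sum_univ_three]

theorem S2_diff : S2 \ halfCircle = S2 ∩ CC := by
  ext x
  simp only [Set.mem_sdiff, mem_inter_iff]
  refine and_congr_right fun hx => ?_
  rw [S2_iff] at hx
  have h2 : -1 ≤ x 2 ∧ x 2 ≤ 1 := by constructor <;> nlinarith [sq_nonneg (x 0), sq_nonneg (x 1)]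
  constructor
  · intro h
    by_contra hc
    have hc' : x 0 ≤ 0 ∧ x 1 = 0 := by
      have := not_or.1 hc
      exact ⟨not_lt.1 this.1, not_not.1 this.2⟩
    apply h
    refine ⟨Real.arcsin (x 2), Real.arcsin_mem_Icc _, ?_, hc'.2, (Real.sin_arcsin h2.1 h2.2).symm⟩
    rw [Real.cos_arcsin, show 1 - x 2 ^ 2 = (- x 0) ^ 2 by rw [hc'.2] at hx; linarith,
      Real.sqrt_sq (by linarith [hc'.1])]
    ring
  · rintro h ⟨φ, hφ, h0, h1, h2⟩
    have := Real.cos_nonneg_of_mem_Icc hφ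
    rcases h with h | h
    · linarith
    · exact h h1

theorem CC_smul {t : ℝ} (ht : 0 < t) {x : Rn 3} : t • x ∈ CC ↔ x ∈ CC := by
  simp [CC, ht, ht.ne']

theorem CC_ne {x : Rn 3} (hx : x ∈ CC) : x ≠ 0 := by
  rintro rfl
  simp [CC] at hx

theorem cone_eq : coneOver (S2 \ halfCircle) = CC := by
  rw [S2_diff]
  ext z
  constructor
  · rintro ⟨t, ht, y, hy, rfl⟩
    exact (CC_smul ht).2 hy.2
  · intro hz
    have h0 : 0 < ‖z‖ := norm_pos_iff.2 (CC_ne hz)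
    refine ⟨‖z‖, h0, ‖z‖⁻¹ • z, ⟨?_, (CC_smul (inv_pos.2 h0)).2 hz⟩, ?_⟩
    · simp [S2, norm_smul, h0.ne']
    · rw [smul_inv_smul₀ h0.ne']

theorem Xs_mem {φ θ : ℝ} (hφ : φ ∈ Ioo (-(Real.pi / 2)) (Real.pi / 2))
    (hθ : θ ∈ Ioo (-Real.pi) Real.pi) : Xs φ θ ∈ CC := by
  have hc := Real.cos_pos_of_mem_Ioo hφ
  by_cases hs : Real.sin θ = 0
  · have : θ = 0 := (Real.sin_eq_zero_iff_of_lt_of_lt hθ.1 hθ.2).1 hs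
    left
    simp [Xs, this, hc]
  · right
    simp [Xs, hc.ne', hs]

theorem Xs_S2 (φ θ : ℝ) : Xs φ θ ∈ S2 := by
  simp [S2, norm_Xs]

theorem ae_IJ : ∀ᵐ z ∂IJ, z.1 ∈ Ioo (-(Real.pi / 2)) (Real.pi / 2) ∧ z.2 ∈ Ioo (-Real.pi) Real.pi := by
  unfold IJ
  rw [Measure.prod_restrict]
  exact ae_restrict_mem (measurableSet_Ioo.prod measurableSet_Ioo)

theorem ae_sigS {P : Rn 3 → Prop} (hP : MeasurableSet {y | P y}) :
    (∀ᵐ y ∂sigS, P y) ↔ ∀ᵐ z ∂IJ, P (Xs z.1 z.2) := by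
  unfold sigS
  rw [ae_map_iff cont_Xs.measurable.aemeasurable hP, ae_withDensity_iff (by fun_prop)]
  constructor
  · intro h
    filter_upwards [h, ae_IJ] with z h1 h2
    refine h1 ?_
    simpa using Real.cos_pos_of_mem_Ioo h2.1
  · intro h
    filter_upwards [h] with z h1 _ using h1

theorem ae_CC : ∀ᵐ y ∂sigS, y ∈ CC :=
  (ae_sigS CC_open.measurableSet).2 (ae_IJ.mono fun _ hz => Xs_mem hz.1 hz.2)

theorem restr_diff : (μH[(2:ℝ)] : Measure (Rn 3)).restrict (S2 \ halfCircle) =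
    (μH[(2:ℝ)] : Measure (Rn 3)).restrict S2 := by
  obtain ⟨c, c0, ct, e⟩ := haus_eq
  rw [S2_diff, inter_comm, ← Measure.restrict_restrict CC_open.measurableSet]
  refine Measure.restrict_eq_self_of_ae_mem ?_
  rw [e]
  exact Measure.ae_smul_measure ae_CC c

theorem nu_null {N : Set (Rn 3)} (hN : MeasurableSet N) (h0 : volume N = 0)
    (hc : ∀ x : Rn 3, ∀ t : ℝ, 0 < t → t • x ∈ N → x ∈ N) (hz : (0 : Rn 3) ∉ N) : sigS N = 0 := by
  have hn : Measurable (fun x : Rn 3 => ‖x‖⁻¹ • x) := by fun_prop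
  have e := nu_eq
  set c0' := (∫⁻ r in Ioo (0:ℝ) 1, ENNReal.ofReal r * ENNReal.ofReal r) with hc0'
  have hne : c0' ≠ 0 := by
    intro h
    rw [h, zero_smul] at e
    have : (Measure.map (fun x : Rn 3 => ‖x‖⁻¹ • x) (volume.restrict (ball 0 1))) univ ≠ 0 := by
      rw [Measure.map_apply hn MeasurableSet.univ, preimage_univ, Measure.restrict_apply_univ]
      exact (measure_ball_pos _ _ one_pos).ne'
    rw [e] at this
    simp at this
  have h1 : (Measure.map (fun x : Rn 3 => ‖x‖⁻¹ • x) (volume.restrict (ball 0 1))) N = 0 := by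
    rw [Measure.map_apply hn hN]
    refine measure_mono_null (t := N) (fun x hx => ?_) ?_
    · have hx0 : x ≠ 0 := by
        rintro rfl
        apply hz
        simpa using hx
      exact hc x ‖x‖⁻¹ (inv_pos.2 (norm_pos_iff.2 hx0)) hx
    · exact le_antisymm ((Measure.restrict_apply_le _ _).trans h0.le) bot_le
  rw [e, Measure.smul_apply, smul_eq_mul, mul_eq_zero] at h1
  exact h1.resolve_left hne


def Xp (φ θ : ℝ) : Rn 3 :=
  !₂[-Real.sin φ * Real.cos θ, -Real.sin φ * Real.sin θ, Real.cos φ]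
def Xq (φ θ : ℝ) : Rn 3 :=
  !₂[-Real.cos φ * Real.sin θ, Real.cos φ * Real.cos θ, 0]

theorem cont_Xp : Continuous (fun z : ℝ × ℝ => Xp z.1 z.2) := by
  unfold Xp
  apply (PiLp.continuous_toLp 2 _).comp
  refine continuous_pi fun i => ?_
  fin_cases i <;> simp <;> fun_prop

theorem cont_Xq : Continuous (fun z : ℝ × ℝ => Xq z.1 z.2) := by
  unfold Xq
  apply (PiLp.continuous_toLp 2 _).comp
  refine continuous_pi fun i => ?_
  fin_cases i <;> simp <;> fun_prop

theorem deriv_Xp (φ θ : ℝ) : HasDerivAt (fun φ => Xs φ θ) (Xp φ θ) φ := by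
  have h : HasDerivAt (fun φ : ℝ => (![Real.cos φ * Real.cos θ, Real.cos φ * Real.sin θ, Real.sin φ] :
      Fin 3 → ℝ)) ![-Real.sin φ * Real.cos θ, -Real.sin φ * Real.sin θ, Real.cos φ] φ := by
    rw [hasDerivAt_pi]
    intro i
    fin_cases i
    · simpa using (Real.hasDerivAt_cos φ).mul_const (Real.cos θ)
    · simpa using (Real.hasDerivAt_cos φ).mul_const (Real.sin θ)
    · simpa using Real.hasDerivAt_sin φ
  exact (PiLp.hasFDerivAt_toLp (𝕜 := ℝ) 2 _).comp_hasDerivAt φ h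

theorem deriv_Xq (φ θ : ℝ) : HasDerivAt (fun θ => Xs φ θ) (Xq φ θ) θ := by
  have h : HasDerivAt (fun θ : ℝ => (![Real.cos φ * Real.cos θ, Real.cos φ * Real.sin θ, Real.sin φ] :
      Fin 3 → ℝ)) ![-Real.cos φ * Real.sin θ, Real.cos φ * Real.cos θ, 0] θ := by
    rw [hasDerivAt_pi]
    intro i
    fin_cases i
    · simpa using (Real.hasDerivAt_cos θ).const_mul (Real.cos φ)
    · simpa using (Real.hasDerivAt_sin θ).const_mul (Real.cos φ)
    · simpa using hasDerivAt_const θ (Real.sin φ)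
  exact (PiLp.hasFDerivAt_toLp (𝕜 := ℝ) 2 _).comp_hasDerivAt θ h

theorem frame (a : Rn 3) {φ : ℝ} (θ : ℝ) (hc : 0 < Real.cos φ) (h0 : inner ℝ a (Xs φ θ) = 0) :
    ‖a‖ ^ 2 * Real.cos φ = (inner ℝ a (Xp φ θ)) ^ 2 * Real.cos φ +
      (inner ℝ a (Xq φ θ)) ^ 2 / Real.cos φ := by
  rw [EuclideanSpace.norm_sq_eq]
  simp only [PiLp.inner_apply, Fin.sum_univ_three, Xs, Xp, Xq, RCLike.inner_apply, conj_trivial,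
    Real.norm_eq_abs, sq_abs] at h0 ⊢
  simp at h0 ⊢
  have e1 := Real.sin_sq_add_cos_sq φ
  have e2 := Real.sin_sq_add_cos_sq θ
  set c := Real.cos φ
  set s := Real.sin φ
  set C := Real.cos θ
  set S := Real.sin θ
  set x := a 0
  set y := a 1
  set z := a 2
  have h3 : (-(c * S * x) + c * C * y) ^ 2 / c = c * (-(S * x) + C * y) ^ 2 := by
    field_simp
  rw [h3]
  have key : x ^ 2 + y ^ 2 + z ^ 2 = (c * C * x + c * S * y + s * z) ^ 2 +
      (-(s * C * x) + -(s * S * y) + c * z) ^ 2 + (-(S * x) + C * y) ^ 2 := by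
    linear_combination (-((C * x + S * y) ^ 2 + z ^ 2)) * e1 - (x ^ 2 + y ^ 2) * e2
  rw [key, h0]; ring

theorem grad_meas (g : Rn 3 → ℝ) : Measurable (gradient g) := by
  unfold gradient
  exact (LinearIsometryEquiv.continuous _).measurable.comp (measurable_fderiv ℝ g)

theorem lip_curve {g : Rn 3 → ℝ} (hg : LocLipOn 3 g CC) {γ : ℝ → Rn 3} (hγ : ContDiff ℝ 1 γ)
    {a b : ℝ} (hab : ∀ t ∈ Icc a b, γ t ∈ CC) :
    ∃ K, LipschitzOnWith K (fun t => CC.indicator g (γ t)) (Icc a b) := by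
  refine LocallyLipschitzOn.exists_lipschitzOnWith_of_compact isCompact_Icc ?_
  intro t ht
  obtain ⟨u, hu, C, hC⟩ := hg (γ t) (hab t ht)
  rw [CC_open.nhdsWithin_eq (hab t ht)] at hu
  obtain ⟨K, w, hw, hK⟩ := hγ.locallyLipschitz t
  have hu2 : γ ⁻¹' (u ∩ CC) ∈ 𝓝 t := hγ.continuous.continuousAt.preimage_mem_nhds
    (inter_mem hu (CC_open.mem_nhds (hab t ht)))
  refine ⟨C * K, w ∩ γ ⁻¹' (u ∩ CC), mem_nhdsWithin_of_mem_nhds (inter_mem hw hu2), ?_⟩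
  have h1 : LipschitzOnWith (C * K) (g ∘ γ) (w ∩ γ ⁻¹' (u ∩ CC)) :=
    (hC.mono (fun _ h => h)).comp (hK.mono inter_subset_left) (fun x hx => hx.2.1)
  intro x hx y hy
  simp only [indicator_of_mem hx.2.2, indicator_of_mem hy.2.2]
  exact h1 hx hy

theorem ind_cont {g : Rn 3 → ℝ} (hg : LocLipOn 3 g CC) : ContinuousOn g CC := by
  intro x hx
  obtain ⟨u, hu, C, hC⟩ := hg x hx
  rw [CC_open.nhdsWithin_eq hx] at hu
  exact (hC.continuousOn.continuousAt hu).continuousWithinAt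

theorem ind_meas {g : Rn 3 → ℝ} (hg : LocLipOn 3 g CC) : Measurable (CC.indicator g) := by
  classical
  have := (ind_cont hg).measurable_piecewise (g := fun _ => (0:ℝ)) continuousOn_const CC_open.measurableSet
  rwa [← Set.piecewise_eq_indicator]

theorem diff_smul {g : Rn 3 → ℝ} (hh : ∀ (y : Rn 3) (t : ℝ), 0 < t → g (t • y) = g y) {t : ℝ}
    (ht : 0 < t) {x : Rn 3} (hd : DifferentiableAt ℝ g x) : DifferentiableAt ℝ g (t • x) := by
  have e : g = fun y => g (t⁻¹ • y) := by
    ext y; rw [hh y _ (inv_pos.2 ht)]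
  rw [e]
  have : DifferentiableAt ℝ g (t⁻¹ • (t • x)) := by rwa [inv_smul_smul₀ ht.ne']
  exact this.comp (f := fun y : Rn 3 => t⁻¹ • y) (t • x) (by fun_prop)

theorem ae_diff {g : Rn 3 → ℝ} (hg : LocLipOn 3 g CC)
    (hh : ∀ (y : Rn 3) (t : ℝ), 0 < t → g (t • y) = g y) :
    ∀ᵐ z ∂IJ, DifferentiableAt ℝ g (Xs z.1 z.2) := by
  have hm : MeasurableSet {x | DifferentiableAt ℝ g x} := measurableSet_of_differentiableAt ℝ g
  have hN : MeasurableSet (CC ∩ {x | ¬ DifferentiableAt ℝ g x}) :=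
    CC_open.measurableSet.inter hm.compl
  have h0 : volume (CC ∩ {x | ¬ DifferentiableAt ℝ g x}) = 0 := by
    refine measure_null_of_locally_null _ fun x hx => ?_
    obtain ⟨u, hu, C, hC⟩ := hg x hx.1
    rw [CC_open.nhdsWithin_eq hx.1] at hu
    obtain ⟨w, hwu, hwo, hxw⟩ := _root_.mem_nhds_iff.1 hu
    refine ⟨w ∩ {x | ¬ DifferentiableAt ℝ g x}, ?_, ?_⟩
    · refine inter_mem (mem_nhdsWithin_of_mem_nhds (hwo.mem_nhds hxw)) ?_
      exact mem_of_superset self_mem_nhdsWithin inter_subset_right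
    · have h1 := (hC.mono hwu).ae_differentiableWithinAt (μ := volume) hwo.measurableSet
      rw [ae_restrict_iff' hwo.measurableSet, ae_iff] at h1
      refine measure_mono_null (fun y hy => ?_) h1
      intro h2
      exact hy.2 ((h2 hy.1).differentiableAt (hwo.mem_nhds hy.1))
  have h1 := nu_null hN h0 (by
    intro x t ht hx
    refine ⟨(CC_smul ht).1 hx.1, fun hd => hx.2 (diff_smul hh ht hd)⟩) (fun h => CC_ne h.1 rfl)
  have h2 : ∀ᵐ y ∂sigS, y ∉ CC ∩ {x | ¬ DifferentiableAt ℝ g x} := by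
    exact measure_eq_zero_iff_ae_notMem.1 h1
  have h3 := (ae_sigS hN.compl).1 h2
  filter_upwards [h3, ae_IJ] with z hz hz2
  by_contra hd
  exact hz ⟨Xs_mem hz2.1 hz2.2, hd⟩

theorem grad_rad {g : Rn 3 → ℝ} (hh : ∀ (y : Rn 3) (t : ℝ), 0 < t → g (t • y) = g y) {x : Rn 3}
    (hd : DifferentiableAt ℝ g x) : inner ℝ (gradient g x) x = 0 := by
  have h1 : HasDerivAt (fun t : ℝ => t • x) x 1 := by
    simpa using (hasDerivAt_id (1:ℝ)).smul_const x
  have h2 : HasFDerivAt g (fderiv ℝ g x) ((1:ℝ) • x) := by rw [one_smul]; exact hd.hasFDerivAt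
  have h3 := h2.comp_hasDerivAt (1:ℝ) h1
  have h4 : HasDerivAt (g ∘ fun t : ℝ => t • x) 0 1 := by
    refine (hasDerivAt_const (1:ℝ) (g x)).congr_of_eventuallyEq ?_
    filter_upwards [Ioi_mem_nhds (one_pos : (0:ℝ) < 1)] with t ht
    exact hh x t ht
  have h5 := h3.unique h4
  rw [gradient, InnerProductSpace.toDual_symm_apply]
  exact h5

theorem deriv_curve {g : Rn 3 → ℝ} {γ : ℝ → Rn 3} {γ' : Rn 3} {t : ℝ} (ht : γ t ∈ CC)
    (hd : DifferentiableAt ℝ g (γ t)) (hγ : HasDerivAt γ γ' t) :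
    HasDerivAt (fun t => CC.indicator g (γ t)) (inner ℝ (gradient g (γ t)) γ') t := by
  rw [gradient, InnerProductSpace.toDual_symm_apply]
  refine (hd.hasFDerivAt.comp_hasDerivAt t hγ).congr_of_eventuallyEq ?_
  have : γ ⁻¹' CC ∈ 𝓝 t := hγ.continuousAt.preimage_mem_nhds (CC_open.mem_nhds ht)
  filter_upwards [this] with s hs
  exact indicator_of_mem (show γ s ∈ CC from hs) g


theorem haus_lint {c : ℝ≥0∞} (e : (μH[(2:ℝ)] : Measure (Rn 3)).restrict S2 = c • sigS)
    {f f' : Rn 3 → ℝ≥0∞} (hf : Measurable f') (h : ∀ y ∈ CC, f y = f' y) :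
    ∫⁻ y in S2, f y ∂μH[(2:ℝ)] = c * ∫⁻ φ in Ioo (-(Real.pi / 2)) (Real.pi / 2),
      ∫⁻ θ in Ioo (-Real.pi) Real.pi, ENNReal.ofReal (Real.cos φ) * f' (Xs φ θ) := by
  rw [e, lintegral_smul_measure, smul_eq_mul, ← lint_sigS hf]
  congr 1
  exact lintegral_congr_ae (ae_CC.mono fun y hy => h y hy)

theorem ae_IJ_l {P : ℝ → ℝ → Prop} (h : ∀ᵐ z ∂IJ, P z.1 z.2) :
    ∀ᵐ φ, φ ∈ Ioo (-(Real.pi / 2)) (Real.pi / 2) → ∀ᵐ θ, θ ∈ Ioo (-Real.pi) Real.pi → P φ θ := by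
  have h1 := Measure.ae_ae_of_ae_prod (by exact h)
  rw [ae_restrict_iff' measurableSet_Ioo] at h1
  filter_upwards [h1] with φ hφ hI
  exact (ae_restrict_iff' measurableSet_Ioo).1 (hφ hI)

theorem ae_IJ_r {P : ℝ → ℝ → Prop} (h : ∀ᵐ z ∂IJ, P z.1 z.2) :
    ∀ᵐ θ, θ ∈ Ioo (-Real.pi) Real.pi → ∀ᵐ φ, φ ∈ Ioo (-(Real.pi / 2)) (Real.pi / 2) → P φ θ := by
  have h0 : ∀ᵐ z ∂((volume.restrict (Ioo (-Real.pi) Real.pi)).prod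
      (volume.restrict (Ioo (-(Real.pi / 2)) (Real.pi / 2)))), P z.2 z.1 := by
    unfold IJ at h
    rw [← Measure.prod_swap] at h
    exact ae_of_ae_map measurable_swap.aemeasurable h
  have h1 := Measure.ae_ae_of_ae_prod h0
  rw [ae_restrict_iff' measurableSet_Ioo] at h1
  filter_upwards [h1] with φ hφ hI
  exact (ae_restrict_iff' measurableSet_Ioo).1 (hφ hI)

theorem lint_IJ {f : ℝ → ℝ → ℝ≥0∞} (hf : Measurable (fun z : ℝ × ℝ => f z.1 z.2)) :
    ∫⁻ φ in Ioo (-(Real.pi / 2)) (Real.pi / 2), ∫⁻ θ in Ioo (-Real.pi) Real.pi, f φ θ =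
      ∫⁻ z, f z.1 z.2 ∂IJ := by
  unfold IJ
  rw [lintegral_prod _ hf.aemeasurable]

theorem ofReal_cos {φ : ℝ} (hφ : φ ∈ Ioo (-(Real.pi / 2)) (Real.pi / 2)) (x : ℝ) :
    ENNReal.ofReal (x * Real.cos φ) = ENNReal.ofReal (Real.cos φ) * ENNReal.ofReal x := by
  rw [mul_comm, ENNReal.ofReal_mul (Real.cos_pos_of_mem_Ioo hφ).le]

set_option maxHeartbeats 4000000 in
theorem lower {g : Rn 3 → ℝ} (hg : SphAdmissible halfCircle g) :
    ENNReal.ofReal (3 / 4) * (∫⁻ y in S2, ENNReal.ofReal ((g y) ^ 2) ∂μH[(2 : ℝ)]) ≤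
        ∫⁻ y in S2 \ halfCircle, ENNReal.ofReal (‖gradient g y‖ ^ 2) ∂μH[(2 : ℝ)] := by
  obtain ⟨hh, hL, _, hfin, hE, hmean⟩ := hg
  rw [cone_eq] at hL
  rw [restr_diff] at hE ⊢
  obtain ⟨c, c0, ct, e⟩ := haus_eq
  have gm := ind_meas hL
  have Gm := grad_meas g
  have f1 := haus_lint e (f := fun y => ENNReal.ofReal ((g y) ^ 2))
    (f' := fun y => ENNReal.ofReal ((CC.indicator g y) ^ 2)) (by fun_prop)
    (fun y hy => by rw [indicator_of_mem hy])
  have f2 := haus_lint e (f := fun y => ENNReal.ofReal (‖gradient g y‖ ^ 2))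
    (f' := fun y => ENNReal.ofReal (‖gradient g y‖ ^ 2)) (by fun_prop) (fun y hy => rfl)
  have hX := cont_Xs.measurable
  have hXp := cont_Xp.measurable
  have hXq := cont_Xq.measurable
  have GX : Measurable fun z : ℝ × ℝ => gradient g (Xs z.1 z.2) := Gm.comp hX
  have vm : Measurable fun z : ℝ × ℝ => CC.indicator g (Xs z.1 z.2) := gm.comp hX
  have pm : Measurable fun z : ℝ × ℝ => (inner ℝ (gradient g (Xs z.1 z.2)) (Xp z.1 z.2) : ℝ) :=
    GX.inner hXp
  have qm : Measurable fun z : ℝ × ℝ => (inner ℝ (gradient g (Xs z.1 z.2)) (Xq z.1 z.2) : ℝ) :=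
    GX.inner hXq
  have hd := ae_diff hL hh
  -- rewrite weights
  have f1' : ∫⁻ y in S2, ENNReal.ofReal ((g y) ^ 2) ∂μH[(2:ℝ)] =
      c * ∫⁻ φ in Ioo (-(Real.pi / 2)) (Real.pi / 2), ∫⁻ θ in Ioo (-Real.pi) Real.pi,
        ENNReal.ofReal ((CC.indicator g (Xs φ θ)) ^ 2 * Real.cos φ) := by
    rw [f1]
    congr 1
    refine setLIntegral_congr_fun measurableSet_Ioo fun φ hφ => lintegral_congr fun θ => ?_
    rw [ofReal_cos hφ]
  have fr : ∀ᵐ z ∂IJ, ‖gradient g (Xs z.1 z.2)‖ ^ 2 * Real.cos z.1 =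
      (inner ℝ (gradient g (Xs z.1 z.2)) (Xp z.1 z.2)) ^ 2 * Real.cos z.1 +
      (inner ℝ (gradient g (Xs z.1 z.2)) (Xq z.1 z.2)) ^ 2 / Real.cos z.1 := by
    filter_upwards [hd, ae_IJ] with z h1 h2
    exact frame _ _ (Real.cos_pos_of_mem_Ioo h2.1) (grad_rad hh h1)
  have f2' : ∫⁻ y in S2, ENNReal.ofReal (‖gradient g y‖ ^ 2) ∂μH[(2:ℝ)] =
      c * ∫⁻ z, ENNReal.ofReal (‖gradient g (Xs z.1 z.2)‖ ^ 2 * Real.cos z.1) ∂IJ := by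
    rw [f2, ← lint_IJ (f := fun φ θ => ENNReal.ofReal (‖gradient g (Xs φ θ)‖ ^ 2 * Real.cos φ))
      (by fun_prop)]
    congr 1
    refine setLIntegral_congr_fun measurableSet_Ioo fun φ hφ => lintegral_congr fun θ => ?_
    rw [ofReal_cos hφ]
  have cosn : ∀ᵐ z ∂IJ, 0 ≤ Real.cos z.1 := by
    filter_upwards [ae_IJ] with z hz using (Real.cos_pos_of_mem_Ioo hz.1).le
  -- integrability
  have iv : Integrable (fun z : ℝ × ℝ => (CC.indicator g (Xs z.1 z.2)) ^ 2 * Real.cos z.1) IJ := by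
    rw [f1', lint_IJ (f := fun φ θ => ENNReal.ofReal ((CC.indicator g (Xs φ θ)) ^ 2 * Real.cos φ))
      (by fun_prop)] at hfin
    refine (lintegral_ofReal_ne_top_iff_integrable (by fun_prop : Measurable _).aestronglyMeasurable
      ?_).1 ?_
    · filter_upwards [cosn] with z hz
      simp only [Pi.zero_apply]; positivity
    · exact (ENNReal.lt_top_of_mul_ne_top_right hfin.ne c0).ne
  have iG : Integrable (fun z : ℝ × ℝ => ‖gradient g (Xs z.1 z.2)‖ ^ 2 * Real.cos z.1) IJ := by
    rw [f2'] at hE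
    refine (lintegral_ofReal_ne_top_iff_integrable (by fun_prop : Measurable _).aestronglyMeasurable
      ?_).1 ?_
    · filter_upwards [cosn] with z hz
      simp only [Pi.zero_apply]; positivity
    · exact (ENNReal.lt_top_of_mul_ne_top_right hE.ne c0).ne
  have ip : Integrable (fun z : ℝ × ℝ =>
      (inner ℝ (gradient g (Xs z.1 z.2)) (Xp z.1 z.2)) ^ 2 * Real.cos z.1) IJ := by
    refine Integrable.mono' iG (by fun_prop : Measurable _).aestronglyMeasurable ?_
    filter_upwards [fr, cosn] with z h1 h2
    rw [h1, Real.norm_of_nonneg (by positivity)]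
    have : 0 ≤ (inner ℝ (gradient g (Xs z.1 z.2)) (Xq z.1 z.2)) ^ 2 / Real.cos z.1 := by positivity
    linarith
  have iv1 : Integrable (fun z : ℝ × ℝ => CC.indicator g (Xs z.1 z.2) * Real.cos z.1) IJ := by
    refine Integrable.mono' (iv.add (integrable_const (1:ℝ)))
      (by fun_prop : Measurable _).aestronglyMeasurable ?_
    filter_upwards [cosn] with z h2
    simp only [Pi.add_apply]
    rw [norm_mul, Real.norm_eq_abs, Real.norm_of_nonneg h2]
    set w := CC.indicator g (Xs z.1 z.2)
    have h3 : |w| ≤ w ^ 2 + 1 := by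
      rw [← sq_abs]; nlinarith [sq_nonneg (|w| - 1), abs_nonneg w]
    calc |w| * Real.cos z.1 ≤ (w ^ 2 + 1) * Real.cos z.1 := by gcongr
      _ = w ^ 2 * Real.cos z.1 + Real.cos z.1 := by ring
      _ ≤ _ := by linarith [Real.cos_le_one z.1]
  have hm : ∫ φ in Ioo (-(Real.pi / 2)) (Real.pi / 2),
      (∫ θ in Ioo (-Real.pi) Real.pi, CC.indicator g (Xs φ θ)) * Real.cos φ = 0 := by
    rw [e, integral_smul_measure, smul_eq_zero, ENNReal.toReal_eq_zero_iff] at hmean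
    have h1 := hmean.resolve_left (by simp [c0, ct])
    rw [integral_congr_ae (g := CC.indicator g)
      (ae_CC.mono fun y hy => (indicator_of_mem hy g).symm)] at h1
    unfold sigS at h1
    rw [integral_map hX.aemeasurable gm.aestronglyMeasurable] at h1
    rw [show (fun z : ℝ × ℝ => ENNReal.ofReal (Real.cos z.1)) =
      fun z : ℝ × ℝ => ((Real.toNNReal (Real.cos z.1) : ℝ≥0) : ℝ≥0∞) from rfl,
      integral_withDensity_eq_integral_smul (by fun_prop)] at h1
    have h2 : ∫ z, CC.indicator g (Xs z.1 z.2) * Real.cos z.1 ∂IJ = 0 := by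
      rw [← h1]
      refine integral_congr_ae ?_
      filter_upwards [cosn] with z hz
      rw [NNReal.smul_def, Real.coe_toNNReal _ hz, smul_eq_mul, mul_comm]
    have h3 := integral_prod _ (by exact iv1)
    rw [← h2]
    refine Eq.trans ?_ h3.symm
    refine integral_congr_ae (ae_of_all _ fun φ => ?_)
    exact (integral_mul_const _ _).symm
  have key := two_d (v := fun φ θ => CC.indicator g (Xs φ θ))
    (p := fun φ θ => inner ℝ (gradient g (Xs φ θ)) (Xp φ θ))
    (q := fun φ θ => inner ℝ (gradient g (Xs φ θ)) (Xq φ θ)) vm pm qm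
    (fun θ hθ a b hab => lip_curve hL (γ := fun φ => Xs φ θ)
      (Xs_smooth.comp (by fun_prop : ContDiff ℝ 1 fun φ : ℝ => (φ, θ)))
      fun t ht => Xs_mem (hab ht) hθ)
    (fun φ hφ a b hab => lip_curve hL (γ := fun θ => Xs φ θ)
      (Xs_smooth.comp (by fun_prop : ContDiff ℝ 1 fun θ : ℝ => (φ, θ)))
      fun t ht => Xs_mem hφ (hab ht))
    (ae_IJ_r (P := fun φ θ => HasDerivAt (fun φ => CC.indicator g (Xs φ θ))
        (inner ℝ (gradient g (Xs φ θ)) (Xp φ θ)) φ) (by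
      filter_upwards [hd, ae_IJ] with z h1 h2
      exact deriv_curve (Xs_mem h2.1 h2.2) h1 (deriv_Xp _ _)))
    (ae_IJ_l (P := fun φ θ => HasDerivAt (fun θ => CC.indicator g (Xs φ θ))
        (inner ℝ (gradient g (Xs φ θ)) (Xq φ θ)) θ) (by
      filter_upwards [hd, ae_IJ] with z h1 h2
      exact deriv_curve (Xs_mem h2.1 h2.2) h1 (deriv_Xq _ _)))
    iv ip hm
  rw [f1', f2', mul_left_comm]
  gcongr
  refine key.trans (le_of_eq ?_)
  rw [lint_IJ (f := fun φ θ => ENNReal.ofReal ((inner ℝ (gradient g (Xs φ θ)) (Xp φ θ)) ^ 2 * Real.cos φ)) (by fun_prop),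
    lint_IJ (f := fun φ θ => ENNReal.ofReal ((inner ℝ (gradient g (Xs φ θ)) (Xq φ θ)) ^ 2 / Real.cos φ)) (by fun_prop),
    ← lintegral_add_right _ (by fun_prop)]
  refine lintegral_congr_ae ?_
  filter_upwards [fr, cosn] with z h1 h2
  rw [h1, ENNReal.ofReal_add (by positivity) (by positivity)]


theorem tip_X {φ θ : ℝ} (hφ : φ ∈ Ioo (-(Real.pi / 2)) (Real.pi / 2))
    (hθ : θ ∈ Ioo (-Real.pi) Real.pi) :
    cracktip0 (Xs φ θ) = √(Real.cos φ) * Real.sin (θ / 2) := by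
  have hc := Real.cos_pos_of_mem_Ioo hφ
  unfold cracktip0
  rw [norm_Xs, inv_one, one_smul]
  unfold cracktip
  have e : (((Xs φ θ) 0 : ℝ) : ℂ) + (((Xs φ θ) 1 : ℝ) : ℂ) * Complex.I =
      ((Real.cos φ : ℝ) : ℂ) * (Complex.cos θ + Complex.sin θ * Complex.I) := by
    simp [Xs]; ring
  have hn : ‖((Real.cos φ : ℝ) : ℂ) * (Complex.cos θ + Complex.sin θ * Complex.I)‖ = Real.cos φ := by
    rw [← Complex.exp_mul_I, norm_mul, Complex.norm_exp_ofReal_mul_I, mul_one, Complex.norm_real,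
      Real.norm_of_nonneg hc.le]
  rw [e, Complex.cpow_def_of_ne_zero (by rw [← norm_ne_zero_iff, hn]; exact hc.ne'), Complex.log, hn,
    Complex.arg_mul_cos_add_sin_mul_I hc ⟨hθ.1, hθ.2.le⟩, Complex.exp_im]
  have e1 : (((Real.log (Real.cos φ) : ℝ) : ℂ) + (θ : ℂ) * Complex.I) * (1 / 2) =
      ((Real.log (Real.cos φ) / 2 : ℝ) : ℂ) + ((θ / 2 : ℝ) : ℂ) * Complex.I := by
    push_cast; ring
  rw [e1]
  simp only [Complex.add_re, Complex.add_im, Complex.ofReal_re, Complex.ofReal_im, Complex.mul_re,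
    Complex.mul_im, Complex.I_re, Complex.I_im]
  rw [show Real.log (Real.cos φ) / 2 + (θ / 2 * 0 - 0 * 1) = Real.log (Real.cos φ) / 2 by ring,
    show (0:ℝ) + (θ / 2 * 1 + 0 * 0) = θ / 2 by ring, Real.exp_half, Real.exp_log hc]

theorem tip_hom (y : Rn 3) (t : ℝ) (ht : 0 < t) : cracktip0 (t • y) = cracktip0 y := by
  unfold cracktip0
  congr 1
  rw [norm_smul, Real.norm_of_nonneg ht.le, smul_smul]
  congr 1
  field_simp

theorem tip_smooth {x : Rn 3} (hx : x ∈ CC) : ContDiffAt ℝ 1 cracktip0 x := by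
  have hn : ContDiffAt ℝ 1 (fun y : Rn 3 => ‖y‖⁻¹) x :=
    (contDiffAt_norm ℝ (CC_ne hx)).inv (norm_ne_zero_iff.2 (CC_ne hx))
  have hN : ContDiffAt ℝ 1 (fun y : Rn 3 => ‖y‖⁻¹ • y) x := hn.smul contDiffAt_id
  have h0 : ContDiffAt ℝ 1 (fun y : Rn 3 => (‖y‖⁻¹ • y) 0) x :=
    (EuclideanSpace.proj (𝕜 := ℝ) (0 : Fin 3)).contDiff.contDiffAt.comp x hN
  have h1 : ContDiffAt ℝ 1 (fun y : Rn 3 => (‖y‖⁻¹ • y) 1) x :=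
    (EuclideanSpace.proj (𝕜 := ℝ) (1 : Fin 3)).contDiff.contDiffAt.comp x hN
  have h0' : ContDiffAt ℝ 1 (fun y : Rn 3 => (((‖y‖⁻¹ • y) 0 : ℝ) : ℂ)) x :=
    Complex.ofRealCLM.contDiff.contDiffAt.comp x h0
  have h1' : ContDiffAt ℝ 1 (fun y : Rn 3 => (((‖y‖⁻¹ • y) 1 : ℝ) : ℂ)) x :=
    Complex.ofRealCLM.contDiff.contDiffAt.comp x h1
  have hw : ContDiffAt ℝ 1 (fun y : Rn 3 => (((‖y‖⁻¹ • y) 0 : ℝ) : ℂ) +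
      (((‖y‖⁻¹ • y) 1 : ℝ) : ℂ) * Complex.I) x := h0'.add (h1'.mul contDiffAt_const)
  have hs : (((‖x‖⁻¹ • x) 0 : ℝ) : ℂ) + (((‖x‖⁻¹ • x) 1 : ℝ) : ℂ) * Complex.I ∈ Complex.slitPlane := by
    have : ‖x‖⁻¹ • x ∈ CC := (CC_smul (inv_pos.2 (norm_pos_iff.2 (CC_ne hx)))).2 hx
    rw [Complex.mem_slitPlane_iff]
    rcases this with h | h
    · left; simpa using h
    · right; simpa using h
  have hp : ContDiffAt ℝ 1 (fun w : ℂ => w ^ ((1:ℂ) / 2)) ((((‖x‖⁻¹ • x) 0 : ℝ) : ℂ) +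
      (((‖x‖⁻¹ • x) 1 : ℝ) : ℂ) * Complex.I) := by
    have : AnalyticAt ℂ (fun w : ℂ => w ^ ((1:ℂ) / 2)) _ := analyticAt_id.cpow analyticAt_const hs
    exact this.contDiffAt.restrict_scalars ℝ
  have h3 : ContDiffAt ℝ 1 (fun y : Rn 3 => ((((‖y‖⁻¹ • y) 0 : ℝ) : ℂ) +
      (((‖y‖⁻¹ • y) 1 : ℝ) : ℂ) * Complex.I) ^ ((1:ℂ) / 2)) x :=
    ContDiffAt.comp (g := fun w : ℂ => w ^ ((1:ℂ) / 2)) x hp hw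
  exact Complex.imCLM.contDiff.contDiffAt.comp x h3

theorem tip_lip : LocLipOn 3 cracktip0 CC := by
  intro x hx
  obtain ⟨K, t, ht, h⟩ := (tip_smooth hx).exists_lipschitzOnWith
  exact ⟨t, mem_nhdsWithin_of_mem_nhds ht, K, h⟩

theorem tip_p {φ θ : ℝ} (hφ : φ ∈ Ioo (-(Real.pi / 2)) (Real.pi / 2))
    (hθ : θ ∈ Ioo (-Real.pi) Real.pi) :
    inner ℝ (gradient cracktip0 (Xs φ θ)) (Xp φ θ) =
      -Real.sin φ / (2 * √(Real.cos φ)) * Real.sin (θ / 2) := by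
  have hc := Real.cos_pos_of_mem_Ioo hφ
  have hX := Xs_mem hφ hθ
  have h1 := deriv_curve (γ := fun φ => Xs φ θ) hX ((tip_smooth hX).differentiableAt one_ne_zero)
    (deriv_Xp φ θ)
  have h2 : HasDerivAt (fun φ => √(Real.cos φ) * Real.sin (θ / 2))
      (-Real.sin φ / (2 * √(Real.cos φ)) * Real.sin (θ / 2)) φ :=
    ((Real.hasDerivAt_cos φ).sqrt hc.ne').mul_const _
  refine h1.unique (h2.congr_of_eventuallyEq ?_)
  filter_upwards [isOpen_Ioo.mem_nhds hφ] with s hs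
  rw [indicator_of_mem (Xs_mem hs hθ), tip_X hs hθ]

theorem tip_q {φ θ : ℝ} (hφ : φ ∈ Ioo (-(Real.pi / 2)) (Real.pi / 2))
    (hθ : θ ∈ Ioo (-Real.pi) Real.pi) :
    inner ℝ (gradient cracktip0 (Xs φ θ)) (Xq φ θ) =
      √(Real.cos φ) * (Real.cos (θ / 2) * (1 / 2)) := by
  have hX := Xs_mem hφ hθ
  have h1 := deriv_curve (γ := fun θ => Xs φ θ) hX ((tip_smooth hX).differentiableAt one_ne_zero)
    (deriv_Xq φ θ)
  have h2 : HasDerivAt (fun θ : ℝ => √(Real.cos φ) * Real.sin (θ / 2))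
      (√(Real.cos φ) * (Real.cos (θ / 2) * (1 / 2))) θ :=
    (((hasDerivAt_id θ).div_const 2).sin).const_mul _
  refine h1.unique (h2.congr_of_eventuallyEq ?_)
  filter_upwards [isOpen_Ioo.mem_nhds hθ] with s hs
  rw [indicator_of_mem (Xs_mem hφ hs), tip_X hφ hs]

theorem tip_grad {φ θ : ℝ} (hφ : φ ∈ Ioo (-(Real.pi / 2)) (Real.pi / 2))
    (hθ : θ ∈ Ioo (-Real.pi) Real.pi) :
    ‖gradient cracktip0 (Xs φ θ)‖ ^ 2 * Real.cos φ =
      1 / 4 * (Real.sin φ ^ 2 * Real.sin (θ / 2) ^ 2 + Real.cos (θ / 2) ^ 2) := by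
  have hc := Real.cos_pos_of_mem_Ioo hφ
  have hX := Xs_mem hφ hθ
  rw [frame _ θ hc (grad_rad tip_hom ((tip_smooth hX).differentiableAt one_ne_zero)),
    tip_p hφ hθ, tip_q hφ hθ]
  have hs : √(Real.cos φ) ≠ 0 := (Real.sqrt_pos.2 hc).ne'
  have h2 := Real.sq_sqrt hc.le
  set s := √(Real.cos φ)
  rw [← h2]
  field_simp
  ring

theorem i_sin2 : ∫ θ in Ioo (-Real.pi) Real.pi, Real.sin (θ / 2) ^ 2 = Real.pi := by
  rw [← integral_Ioc_eq_integral_Ioo, ← intervalIntegral.integral_of_le (by linarith [Real.pi_pos]),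
    intervalIntegral.integral_comp_div (fun x => Real.sin x ^ 2) two_ne_zero, integral_sin_sq]
  simp [neg_div]; ring

theorem i_cos2 : ∫ θ in Ioo (-Real.pi) Real.pi, Real.cos (θ / 2) ^ 2 = Real.pi := by
  rw [← integral_Ioc_eq_integral_Ioo, ← intervalIntegral.integral_of_le (by linarith [Real.pi_pos]),
    intervalIntegral.integral_comp_div (fun x => Real.cos x ^ 2) two_ne_zero, integral_cos_sq]
  simp [neg_div]; ring

theorem i_sin : ∫ θ in Ioo (-Real.pi) Real.pi, Real.sin (θ / 2) = 0 := by
  rw [← integral_Ioc_eq_integral_Ioo, ← intervalIntegral.integral_of_le (by linarith [Real.pi_pos]),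
    intervalIntegral.integral_comp_div (fun x => Real.sin x) two_ne_zero, integral_sin]
  simp [neg_div]

theorem j_sin2 : ∫ φ in Ioo (-(Real.pi / 2)) (Real.pi / 2), Real.sin φ ^ 2 = Real.pi / 2 := by
  rw [← integral_Ioc_eq_integral_Ioo, ← intervalIntegral.integral_of_le (by linarith [Real.pi_pos]),
    integral_sin_sq]
  simp

theorem j_cos2 : ∫ φ in Ioo (-(Real.pi / 2)) (Real.pi / 2), Real.cos φ ^ 2 = Real.pi / 2 := by
  rw [← integral_Ioc_eq_integral_Ioo, ← intervalIntegral.integral_of_le (by linarith [Real.pi_pos]),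
    integral_cos_sq]
  simp

theorem int_b {f : ℝ × ℝ → ℝ} (hf : Measurable f) {C : ℝ} (h : ∀ z, ‖f z‖ ≤ C) : Integrable f IJ :=
  Integrable.of_bound hf.aestronglyMeasurable C (ae_of_all _ h)

theorem pr (f g : ℝ → ℝ) : ∫ z, f z.1 * g z.2 ∂IJ =
    (∫ φ in Ioo (-(Real.pi / 2)) (Real.pi / 2), f φ) * ∫ θ in Ioo (-Real.pi) Real.pi, g θ := by
  unfold IJ
  exact integral_prod_mul f g

theorem sq_b1 (x : ℝ) : Real.sin x ^ 2 ≤ 1 := by nlinarith [Real.sin_sq_add_cos_sq x, sq_nonneg (Real.cos x)]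
theorem sq_b2 (x : ℝ) : Real.cos x ^ 2 ≤ 1 := by nlinarith [Real.sin_sq_add_cos_sq x, sq_nonneg (Real.sin x)]

theorem lint_tip : ∫⁻ z, ENNReal.ofReal (Real.cos z.1 ^ 2 * Real.sin (z.2 / 2) ^ 2) ∂IJ =
    ENNReal.ofReal (Real.pi ^ 2 / 2) := by
  rw [← ofReal_integral_eq_lintegral_ofReal, pr (fun φ => Real.cos φ ^ 2) (fun θ => Real.sin (θ / 2) ^ 2),
    j_cos2, i_sin2]
  · congr 1; ring
  · refine int_b (C := 1) (by fun_prop) fun z => ?_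
    rw [Real.norm_of_nonneg (by positivity)]
    exact mul_le_one₀ (sq_b2 _) (sq_nonneg _) (sq_b1 _)
  · exact ae_of_all _ fun z => by simp only [Pi.zero_apply]; positivity

theorem lint_grad : ∫⁻ z, ENNReal.ofReal
    (1 / 4 * (Real.sin z.1 ^ 2 * Real.sin (z.2 / 2) ^ 2 + Real.cos (z.2 / 2) ^ 2)) ∂IJ =
    ENNReal.ofReal (3 / 4 * (Real.pi ^ 2 / 2)) := by
  have ia : Integrable (fun z : ℝ × ℝ => Real.sin z.1 ^ 2 * Real.sin (z.2 / 2) ^ 2) IJ := by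
    refine int_b (C := 1) (by fun_prop) fun z => ?_
    rw [Real.norm_of_nonneg (by positivity)]
    exact mul_le_one₀ (sq_b1 _) (sq_nonneg _) (sq_b1 _)
  have ib : Integrable (fun z : ℝ × ℝ => Real.cos (z.2 / 2) ^ 2) IJ := by
    refine int_b (C := 1) (by fun_prop) fun z => ?_
    rw [Real.norm_of_nonneg (by positivity)]
    exact sq_b2 _
  have eb : ∫ z, Real.cos (z.2 / 2) ^ 2 ∂IJ = Real.pi * Real.pi := by
    have := pr (fun _ => 1) (fun θ => Real.cos (θ / 2) ^ 2)
    simp only [one_mul] at this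
    rw [this, i_cos2]
    congr 1
    simp [Real.pi_pos.le]
  have ic : Integrable (fun z : ℝ × ℝ => 1 / 4 * (Real.sin z.1 ^ 2 * Real.sin (z.2 / 2) ^ 2 +
      Real.cos (z.2 / 2) ^ 2)) IJ := (ia.add ib).const_mul _
  rw [← ofReal_integral_eq_lintegral_ofReal ic, integral_const_mul,
    integral_add ia ib, eb, pr (fun φ => Real.sin φ ^ 2) (fun θ => Real.sin (θ / 2) ^ 2),
    j_sin2, i_sin2]
  · congr 1; ring
  · exact ae_of_all _ fun z => by simp only [Pi.zero_apply]; positivity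

theorem tip_sq {c : ℝ≥0∞} (e : (μH[(2:ℝ)] : Measure (Rn 3)).restrict S2 = c • sigS) :
    ∫⁻ y in S2, ENNReal.ofReal ((cracktip0 y) ^ 2) ∂μH[(2 : ℝ)] =
      c * ENNReal.ofReal (Real.pi ^ 2 / 2) := by
  have gm := ind_meas tip_lip
  rw [haus_lint e (f := fun y => ENNReal.ofReal ((cracktip0 y) ^ 2))
    (f' := fun y => ENNReal.ofReal ((CC.indicator cracktip0 y) ^ 2)) (by fun_prop)
    (fun y hy => by rw [indicator_of_mem hy]), ← lint_tip,
    ← lint_IJ (f := fun φ θ => ENNReal.ofReal (Real.cos φ ^ 2 * Real.sin (θ / 2) ^ 2)) (by fun_prop)]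
  congr 1
  refine setLIntegral_congr_fun measurableSet_Ioo fun φ hφ =>
    setLIntegral_congr_fun measurableSet_Ioo fun θ hθ => ?_
  have hc := Real.cos_pos_of_mem_Ioo hφ
  rw [← ofReal_cos hφ, indicator_of_mem (Xs_mem hφ hθ), tip_X hφ hθ, mul_pow, Real.sq_sqrt hc.le]
  congr 1; ring

theorem tip_en {c : ℝ≥0∞} (e : (μH[(2:ℝ)] : Measure (Rn 3)).restrict S2 = c • sigS) :
    ∫⁻ y in S2 \ halfCircle, ENNReal.ofReal (‖gradient cracktip0 y‖ ^ 2) ∂μH[(2 : ℝ)] =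
      c * ENNReal.ofReal (3 / 4 * (Real.pi ^ 2 / 2)) := by
  have Gm := grad_meas cracktip0
  rw [restr_diff, haus_lint e (f := fun y => ENNReal.ofReal (‖gradient cracktip0 y‖ ^ 2))
    (f' := fun y => ENNReal.ofReal (‖gradient cracktip0 y‖ ^ 2)) (by fun_prop) (fun y hy => rfl),
    ← lint_grad,
    ← lint_IJ (f := fun φ θ => ENNReal.ofReal
      (1 / 4 * (Real.sin φ ^ 2 * Real.sin (θ / 2) ^ 2 + Real.cos (θ / 2) ^ 2))) (by fun_prop)]
  congr 1
  refine setLIntegral_congr_fun measurableSet_Ioo fun φ hφ =>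
    setLIntegral_congr_fun measurableSet_Ioo fun θ hθ => ?_
  rw [← ofReal_cos hφ, tip_grad hφ hθ]

theorem tip_mean : ∫ y in S2, cracktip0 y ∂μH[(2 : ℝ)] = 0 := by
  obtain ⟨c, c0, ct, e⟩ := haus_eq
  have gm := ind_meas tip_lip
  have hX := cont_Xs.measurable
  rw [e, integral_smul_measure, integral_congr_ae (g := CC.indicator cracktip0)
      (ae_CC.mono fun y hy => (indicator_of_mem hy cracktip0).symm)]
  unfold sigS
  rw [integral_map hX.aemeasurable gm.aestronglyMeasurable]
  rw [show (fun z : ℝ × ℝ => ENNReal.ofReal (Real.cos z.1)) =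
      fun z : ℝ × ℝ => ((Real.toNNReal (Real.cos z.1) : ℝ≥0) : ℝ≥0∞) from rfl,
      integral_withDensity_eq_integral_smul (by fun_prop)]
  have h2 := pr (fun φ => Real.cos φ * √(Real.cos φ)) (fun θ => Real.sin (θ / 2))
  rw [i_sin, mul_zero] at h2
  rw [smul_eq_zero]; right
  rw [← h2]
  refine integral_congr_ae ?_
  filter_upwards [ae_IJ] with z hz
  rw [NNReal.smul_def, Real.coe_toNNReal _ (Real.cos_pos_of_mem_Ioo hz.1).le, smul_eq_mul,
    indicator_of_mem (Xs_mem hz.1 hz.2), tip_X hz.1 hz.2, mul_assoc]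

theorem tip_adm : SphAdmissible halfCircle cracktip0 := by
  obtain ⟨c, c0, ct, e⟩ := haus_eq
  refine ⟨tip_hom, by rw [cone_eq]; exact tip_lip, ?_, ?_, ?_, tip_mean⟩
  · rw [tip_sq e]
    exact ENNReal.mul_pos c0 (ENNReal.ofReal_pos.2 (by positivity)).ne'
  · rw [tip_sq e]
    exact ENNReal.mul_lt_top ct.lt_top ENNReal.ofReal_lt_top
  · rw [tip_en e]
    exact ENNReal.mul_lt_top ct.lt_top ENNReal.ofReal_lt_top

theorem tip_eq : (∫⁻ y in S2 \ halfCircle, ENNReal.ofReal (‖gradient cracktip0 y‖ ^ 2) ∂μH[(2 : ℝ)]) =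
      ENNReal.ofReal (3 / 4) *
        (∫⁻ y in S2, ENNReal.ofReal ((cracktip0 y) ^ 2) ∂μH[(2 : ℝ)]) := by
  obtain ⟨c, c0, ct, e⟩ := haus_eq
  rw [tip_en e, tip_sq e, ENNReal.ofReal_mul (by norm_num), mul_left_comm]

theorem lam_eq : Lam halfCircle = ENNReal.ofReal (3 / 4) := by
  refine le_antisymm (sInf_le ⟨cracktip0, tip_adm, ?_⟩) (le_sInf ?_)
  · rw [tip_eq, ENNReal.mul_div_cancel_right tip_adm.2.2.1.ne' tip_adm.2.2.2.1.ne]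
  · rintro q ⟨g, hg, rfl⟩
    rw [ENNReal.le_div_iff_mul_le (Or.inl hg.2.2.1.ne') (Or.inl hg.2.2.2.1.ne)]
    exact lower hg


/-- `Λ(E₀) = 3/4`, and the infimum is attained by the restriction to
`S² ∖ E₀` of the cracktip function `f = Im √(x+iy)`: its (0-homogeneous) representative
is admissible (zero mean, `0 < ∫ f² < ∞`, finite tangential energy) and satisfies
`∫_{S² ∖ E₀} |∇_τ f|² = (3/4) ∫_{S²} f²`, while every admissible `u` satisfies
`(3/4) ∫_{S²} u² ≤ ∫_{S² ∖ E₀} |∇_τ u|²`. -/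
theorem statement7 :
    Lam halfCircle = ENNReal.ofReal (3 / 4) ∧
    SphAdmissible halfCircle cracktip0 ∧
    (∫⁻ y in S2 \ halfCircle, ENNReal.ofReal (‖gradient cracktip0 y‖ ^ 2) ∂μH[(2 : ℝ)]) =
      ENNReal.ofReal (3 / 4) *
        (∫⁻ y in S2, ENNReal.ofReal ((cracktip0 y) ^ 2) ∂μH[(2 : ℝ)]) ∧
    ∀ g : Rn 3 → ℝ, SphAdmissible halfCircle g →
      ENNReal.ofReal (3 / 4) * (∫⁻ y in S2, ENNReal.ofReal ((g y) ^ 2) ∂μH[(2 : ℝ)]) ≤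
        ∫⁻ y in S2 \ halfCircle, ENNReal.ofReal (‖gradient g y‖ ^ 2) ∂μH[(2 : ℝ)] := by
  exact ⟨lam_eq, tip_adm, tip_eq, fun g hg => lower hg⟩
end
end

section
/- Let (u,K) be a global Mumford–Shah minimizer in ℝ^N. Then for every r > 0, ∫_{B_r ∖ K} |∇u|² dx ≤ ω_N r^{N−1}, where ω_N = H^{N-1}(S^{N-1}) is the area of the unit sphere. -/
open MeasureTheory Metric Set Filter
open scoped ENNReal NNReal Topology

noncomputable section

/-- An admissible pair `(u, K)`: `K ⊆ ℝ^N` closed, `u` locally Lipschitz on `ℝ^N ∖ K`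
with `∫_{B_R ∖ K} (u² + |∇u|²) < ∞` for every `R > 0`. -/
structure MSPair (N : ℕ) where
  K : Set (Rn N)
  u : Rn N → ℝ
  closed : IsClosed K
  lip : LocLipOn N u Kᶜ
  integ : ∀ R : ℝ, 0 < R →
    IntegrableOn (fun x => (u x) ^ 2 + ‖gradient u x‖ ^ 2) (ball 0 R \ K) volume

/-- The Mumford–Shah energy `∫_{B ∖ K} |∇u|² + H^{N-1}(K ∩ B)` of a pair in a set `B`. -/
def MSEnergy (N : ℕ) (P : MSPair N) (B : Set (Rn N)) : ℝ≥0∞ :=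
  (∫⁻ x in B \ P.K, ENNReal.ofReal (‖gradient P.u x‖ ^ 2)) + μH[(N : ℝ) - 1] (P.K ∩ B)

/-- `Q = (v, L)` is a competitor for `P = (u, K)` in the open ball `B`:
`L ∖ B = K ∖ B`, `v = u` outside `B ∪ K ∪ L`, and the topological separation condition. -/
def Competitor (N : ℕ) (P Q : MSPair N) (B : Set (Rn N)) : Prop :=
  Q.K \ B = P.K \ B ∧
  (∀ x, x ∉ B ∪ P.K ∪ Q.K → Q.u x = P.u x) ∧
  ∀ x, x ∉ B ∪ P.K → ∀ y, y ∉ B ∪ P.K →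
    connectedComponentIn P.Kᶜ x ≠ connectedComponentIn P.Kᶜ y →
    connectedComponentIn Q.Kᶜ x ≠ connectedComponentIn Q.Kᶜ y

/-- Global Mumford–Shah minimizer in `ℝ^N`. -/
def IsGlobalMin (N : ℕ) (P : MSPair N) : Prop :=
  ∀ (c : Rn N) (R : ℝ), 0 < R → ∀ Q : MSPair N,
    Competitor N P Q (ball c R) → MSEnergy N P (ball c R) ≤ MSEnergy N Q (ball c R)

/-- Reduced global minimizer: no competitor with smaller singular set and the same
function off `K` exists. -/
def MSIsReduced (N : ℕ) (P : MSPair N) : Prop :=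
  ∀ (c : Rn N) (R : ℝ), 0 < R → ∀ Q : MSPair N,
    Competitor N P Q (ball c R) → Q.K ⊆ P.K →
    (∀ x, x ∉ P.K → Q.u x = P.u x) → Q.K = P.K

section Helpers

def hf (N : ℕ) (P : MSPair N) (r c : ℝ) (x : Rn N) : ℝ :=
  ‖x‖ + c * infDist x (insert 0 P.K) - r

lemma hf_cont (N : ℕ) (P : MSPair N) (r c : ℝ) : Continuous (hf N P r c) := by
  unfold hf
  have := continuous_infDist_pt (insert (0 : Rn N) P.K)
  fun_prop

def Uf (N : ℕ) (P : MSPair N) (r c : ℝ) : Set (Rn N) := {x | 0 < hf N P r c x}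
def Gf (N : ℕ) (P : MSPair N) (r c : ℝ) : Set (Rn N) := {x | hf N P r c x = 0}

lemma Uf_open (N : ℕ) (P : MSPair N) (r c : ℝ) : IsOpen (Uf N P r c) :=
  isOpen_lt continuous_const (hf_cont N P r c)

lemma Vf_open (N : ℕ) (P : MSPair N) (r c : ℝ) : IsOpen {x | hf N P r c x < 0} :=
  isOpen_lt (hf_cont N P r c) continuous_const

lemma infDist_K (N : ℕ) (P : MSPair N) {x : Rn N} (hx : x ∈ P.K) :
    infDist x (insert 0 P.K) = 0 := infDist_zero_of_mem (mem_insert_of_mem _ hx)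

lemma Uf_K (N : ℕ) (P : MSPair N) {r c : ℝ} {x : Rn N} (hU : x ∈ Uf N P r c)
    (hx : x ∈ ball 0 r) : x ∉ P.K := by
  intro hK
  have h0 := infDist_K N P hK
  simp only [Uf, hf, mem_setOf_eq, h0, mem_ball_zero_iff] at hU hx
  linarith

lemma Gf_K (N : ℕ) (P : MSPair N) {r c : ℝ} (hr : 0 < r) (hc : 0 < c) {x : Rn N}
    (hG : x ∈ Gf N P r c) (hx : x ∉ ball 0 r) : x ∈ P.K := by
  have h0 : 0 ≤ infDist x (insert 0 P.K) := infDist_nonneg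
  simp only [Gf, hf, mem_setOf_eq, mem_ball_zero_iff, not_lt] at hG hx
  have h1 : infDist x (insert 0 P.K) = 0 := by
    have : 0 ≤ c * infDist x (insert 0 P.K) := by positivity
    have h2 : c * infDist x (insert 0 P.K) = 0 := by linarith
    rcases mul_eq_zero.1 h2 with h | h
    · exact absurd h hc.ne'
    · exact h
  have hcl : IsClosed (insert (0 : Rn N) P.K) := by
    rw [insert_eq]; exact isClosed_singleton.union P.closed
  have h3 := (hcl.mem_iff_infDist_zero ⟨0, mem_insert _ _⟩).2 h1
  rcases h3 with h | h
  · subst h; simp at hx; linarith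
  · exact h

def Lf (N : ℕ) (P : MSPair N) (r c : ℝ) : Set (Rn N) := (P.K \ ball 0 r) ∪ Gf N P r c

lemma Lf_compl (N : ℕ) (P : MSPair N) {r c : ℝ} {x : Rn N}
    (hx : x ∉ Lf N P r c) : (x ∈ Uf N P r c ∧ x ∉ P.K) ∨ hf N P r c x < 0 := by
  simp only [Lf, mem_union, not_or] at hx
  rcases lt_trichotomy (hf N P r c x) 0 with h | h | h
  · exact Or.inr h
  · exact absurd h hx.2
  · left
    refine ⟨h, fun hK => ?_⟩
    by_cases hb : x ∈ ball 0 r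
    · exact Uf_K N P h hb hK
    · exact hx.1 ⟨hK, hb⟩

lemma grad_U (N : ℕ) (P : MSPair N) {r c : ℝ} {x : Rn N} (hx : x ∈ Uf N P r c) :
    gradient ((Uf N P r c).indicator P.u) x = gradient P.u x := by
  unfold gradient
  rw [Filter.EventuallyEq.fderiv_eq]
  filter_upwards [(Uf_open N P r c).mem_nhds hx] with y hy
  simp [hy]

lemma ind_V (N : ℕ) (P : MSPair N) {r c : ℝ} {x : Rn N} (hx : hf N P r c x < 0) :
    (Uf N P r c).indicator P.u x = 0 := by
  apply indicator_of_notMem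
  simp only [Uf, mem_setOf_eq, not_lt]; exact hx.le

lemma grad_V (N : ℕ) (P : MSPair N) {r c : ℝ} {x : Rn N} (hx : hf N P r c x < 0) :
    gradient ((Uf N P r c).indicator P.u) x = 0 := by
  have : (Uf N P r c).indicator P.u =ᶠ[𝓝 x] fun _ => (0 : ℝ) := by
    filter_upwards [(Vf_open N P r c).mem_nhds hx] with y hy
    exact ind_V N P hy
  unfold gradient
  rw [this.fderiv_eq]; simp

def Qf (N : ℕ) (P : MSPair N) (r c : ℝ) : MSPair N where
  K := Lf N P r c
  u := (Uf N P r c).indicator P.u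
  closed := by
    refine IsClosed.union (P.closed.sdiff isOpen_ball) ?_
    exact isClosed_eq (hf_cont N P r c) continuous_const
  lip := by
    intro x hx
    rcases Lf_compl N P hx with ⟨hU, hK⟩ | hV
    · obtain ⟨t, ht, C, hC⟩ := P.lip x hK
      rw [P.closed.isOpen_compl.nhdsWithin_eq hK] at ht
      refine ⟨t ∩ Uf N P r c, mem_nhdsWithin_of_mem_nhds
        (inter_mem ht ((Uf_open N P r c).mem_nhds hU)), C, ?_⟩
      intro y hy z hz
      rw [indicator_of_mem hy.2, indicator_of_mem hz.2]
      exact hC hy.1 hz.1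
    · refine ⟨_, mem_nhdsWithin_of_mem_nhds ((Vf_open N P r c).mem_nhds hV), 0, ?_⟩
      intro y hy z hz
      rw [ind_V N P hy, ind_V N P hz]; simp
  integ := by
    intro R hR
    have hLc : IsClosed (Lf N P r c) := by
      refine IsClosed.union (P.closed.sdiff isOpen_ball) ?_
      exact isClosed_eq (hf_cont N P r c) continuous_const
    have h1 := P.integ R hR
    have h2 : IntegrableOn ((Uf N P r c).indicator
        (fun x => (P.u x) ^ 2 + ‖gradient P.u x‖ ^ 2)) (ball 0 R \ Lf N P r c) volume := by
      rw [IntegrableOn, integrable_indicator_iff (Uf_open N P r c).measurableSet, IntegrableOn,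
        Measure.restrict_restrict (Uf_open N P r c).measurableSet]
      refine h1.mono_set ?_
      rintro x ⟨hU, hb, hL⟩
      refine ⟨hb, ?_⟩
      rcases Lf_compl N P hL with h | h
      · exact h.2
      · exact absurd h (not_lt.2 (le_of_lt hU))
    refine h2.congr_fun ?_ (measurableSet_ball.diff hLc.measurableSet)
    rintro x ⟨hb, hL⟩
    rcases Lf_compl N P hL with ⟨h, -⟩ | h
    · simp only [indicator_of_mem h, grad_U N P h]
    · have : x ∉ Uf N P r c := fun h' => absurd h (not_lt.2 (le_of_lt h'))
      simp only [indicator_of_notMem this, grad_V N P h]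
      simp

lemma Qf_comp (N : ℕ) (P : MSPair N) {r c : ℝ} (hr : 0 < r) (hc : 0 < c) :
    Competitor N P (Qf N P r c) (ball 0 r) := by
  have hout : ∀ x, x ∉ ball (0 : Rn N) r → x ∉ Lf N P r c → x ∈ Uf N P r c := by
    intro x hx hL
    rcases Lf_compl N P hL with h | h
    · exact h.1
    · exfalso
      have h0 : 0 ≤ c * infDist x (insert 0 P.K) := mul_nonneg hc.le infDist_nonneg
      simp only [hf, mem_ball_zero_iff, not_lt] at h hx
      linarith
  have hLK : Lf N P r c \ ball 0 r = P.K \ ball 0 r := by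
    ext x
    constructor
    · rintro ⟨h | h, hb⟩
      · exact h
      · exact ⟨Gf_K N P hr hc h hb, hb⟩
    · intro h
      exact ⟨Or.inl h, h.2⟩
  have hnL : ∀ x, x ∉ ball (0 : Rn N) r ∪ P.K → x ∉ Lf N P r c := by
    intro x hx hL
    have : x ∈ P.K \ ball 0 r := hLK ▸ ⟨hL, fun h => hx (Or.inl h)⟩
    exact hx (Or.inr this.1)
  refine ⟨hLK, ?_, ?_⟩
  · intro x hx
    exact indicator_of_mem (hout x (fun h => hx (Or.inl (Or.inl h))) (fun h => hx (Or.inr h))) _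
  · intro x hx y hy hne heq
    apply hne
    change connectedComponentIn (Lf N P r c)ᶜ x = connectedComponentIn (Lf N P r c)ᶜ y at heq
    have hxL := hnL x hx
    have hyL := hnL y hy
    have hCx : x ∈ connectedComponentIn (Lf N P r c)ᶜ x := mem_connectedComponentIn hxL
    have hCy : y ∈ connectedComponentIn (Lf N P r c)ᶜ x := heq ▸ mem_connectedComponentIn hyL
    have hpre : IsPreconnected (connectedComponentIn (Lf N P r c)ᶜ x) :=
      isPreconnected_connectedComponentIn
    have hsub := connectedComponentIn_subset (Lf N P r c)ᶜ x
    have hCU : connectedComponentIn (Lf N P r c)ᶜ x ⊆ Uf N P r c := by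
      refine hpre.subset_left_of_subset_union (Uf_open N P r c) (Vf_open N P r c) ?_ ?_ ?_
      · rw [Set.disjoint_left]
        intro z hz hz'
        exact absurd (show hf N P r c z < 0 from hz') (not_lt.2 (le_of_lt hz))
      · intro z hz
        rcases Lf_compl N P (hsub hz) with h | h
        · exact Or.inl h.1
        · exact Or.inr h
      · exact ⟨x, hCx, hout x (fun h => hx (Or.inl h)) hxL⟩
    have hCK : connectedComponentIn (Lf N P r c)ᶜ x ⊆ P.Kᶜ := by
      intro z hz
      rcases Lf_compl N P (hsub hz) with h | h
      · exact h.2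
      · exact absurd h (not_lt.2 (le_of_lt (hCU hz)))
    exact connectedComponentIn_eq (hpre.subset_connectedComponentIn hCx hCK hCy)

lemma Gf_anti (N : ℕ) (P : MSPair N) {r c : ℝ} (hr : 0 < r) (hc : 0 < c) (hc1 : c < 1)
    {x y : Rn N} (hx : x ∈ Gf N P r c) (hy : y ∈ Gf N P r c) :
    x ≠ 0 ∧ dist x y ≤ r / (1 - c) * dist (‖x‖⁻¹ • x) (‖y‖⁻¹ • y) := by
  have hne : ∀ x ∈ Gf N P r c, x ≠ 0 := by
    rintro x hx rfl
    have : infDist (0 : Rn N) (insert 0 P.K) = 0 := infDist_zero_of_mem (mem_insert _ _)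
    simp [Gf, hf, this] at hx
    linarith
  have hx0 := hne x hx
  have hy0 := hne y hy
  refine ⟨hx0, ?_⟩
  have hd0 : 0 ≤ c * infDist x (insert 0 P.K) := mul_nonneg hc.le infDist_nonneg
  have hd1 : infDist x (insert 0 P.K) ≤ infDist y (insert 0 P.K) + dist x y :=
    infDist_le_infDist_add_dist
  have hd2 : infDist y (insert 0 P.K) ≤ infDist x (insert 0 P.K) + dist y x :=
    infDist_le_infDist_add_dist
  rw [dist_comm y x] at hd2
  simp only [Gf, hf, mem_setOf_eq] at hx hy
  have hxr : ‖x‖ ≤ r := by linarith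
  have hab : |‖x‖ - ‖y‖| ≤ c * dist x y := by
    rw [abs_le]; constructor <;> nlinarith
  have hxn : 0 < ‖x‖ := norm_pos_iff.2 hx0
  have hyn : 0 < ‖y‖ := norm_pos_iff.2 hy0
  have key : x - y = ‖x‖ • (‖x‖⁻¹ • x - ‖y‖⁻¹ • y) + (‖x‖ - ‖y‖) • (‖y‖⁻¹ • y) := by
    rw [smul_sub, sub_smul, smul_smul, smul_smul, smul_smul, mul_inv_cancel₀ hxn.ne',
      mul_inv_cancel₀ hyn.ne']
    simp
  have h1 : dist x y ≤ ‖x‖ * dist (‖x‖⁻¹ • x) (‖y‖⁻¹ • y) + |‖x‖ - ‖y‖| := by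
    rw [dist_eq_norm, dist_eq_norm]
    conv_lhs => rw [key]
    refine (norm_add_le _ _).trans ?_
    rw [norm_smul, norm_smul, norm_smul, norm_inv, norm_norm, norm_norm, Real.norm_eq_abs,
      inv_mul_cancel₀ hyn.ne', mul_one]
  have h2 : ‖x‖ * dist (‖x‖⁻¹ • x) (‖y‖⁻¹ • y) ≤ r * dist (‖x‖⁻¹ • x) (‖y‖⁻¹ • y) :=
    mul_le_mul_of_nonneg_right hxr dist_nonneg
  rw [div_mul_eq_mul_div, le_div_iff₀ (by linarith)]
  linarith

lemma Gf_meas (N : ℕ) (hN : 1 ≤ N) (P : MSPair N) {r c : ℝ} (hr : 0 < r) (hc : 0 < c)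
    (hc1 : c < 1) :
    μH[(N : ℝ) - 1] (Gf N P r c) ≤
      ENNReal.ofReal ((r / (1 - c)) ^ (N - 1)) * μH[(N : ℝ) - 1] (sphere (0 : Rn N) 1) := by
  have hpos : 0 ≤ r / (1 - c) := div_nonneg hr.le (by linarith)
  set π : Rn N → Rn N := fun x => ‖x‖⁻¹ • x with hπ
  have hinj : InjOn π (Gf N P r c) := by
    intro x hx y hy hxy
    have := (Gf_anti N P hr hc hc1 hx hy).2
    change π x = π y at hxy
    change dist x y ≤ _ * dist (π x) (π y) at this
    rw [hxy, dist_self, mul_zero] at this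
    exact dist_le_zero.1 this
  have hleft := hinj.leftInvOn_invFunOn
  set Ψ := Function.invFunOn π (Gf N P r c)
  have himg : Ψ '' (π '' Gf N P r c) = Gf N P r c := hleft.image_image
  have hlip : LipschitzOnWith (Real.toNNReal (r / (1 - c))) Ψ (π '' Gf N P r c) := by
    apply LipschitzOnWith.of_dist_le_mul
    rintro _ ⟨x, hx, rfl⟩ _ ⟨y, hy, rfl⟩
    rw [hleft hx, hleft hy, Real.coe_toNNReal _ hpos]
    exact (Gf_anti N P hr hc hc1 hx hy).2
  have hN' : ((N : ℝ) - 1) = ((N - 1 : ℕ) : ℝ) := by push_cast [hN]; rfl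
  have hd : (0 : ℝ) ≤ (N : ℝ) - 1 := by rw [hN']; positivity
  have h := hlip.hausdorffMeasure_image_le hd
  rw [himg] at h
  refine h.trans ?_
  have e : ((Real.toNNReal (r / (1 - c)) : ℝ≥0) : ℝ≥0∞) ^ ((N : ℝ) - 1)
      = ENNReal.ofReal ((r / (1 - c)) ^ (N - 1)) := by
    rw [hN', ENNReal.rpow_natCast, ENNReal.ofReal_pow hpos]; rfl
  rw [e]
  gcongr
  rintro _ ⟨x, hx, rfl⟩
  have hx0 := (Gf_anti N P hr hc hc1 hx hx).1
  simp [hπ, norm_smul, hx0]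

lemma main_step (N : ℕ) (hN : 1 ≤ N) (P : MSPair N) (hmin : IsGlobalMin N P) {r c : ℝ}
    (hr : 0 < r) (hc : 0 < c) (hc1 : c < 1) :
    (∫⁻ x in ball (0 : Rn N) r \ P.K, ENNReal.ofReal (‖gradient P.u x‖ ^ 2)) ≤
      (∫⁻ x in {x : Rn N | r - c * r < ‖x‖} ∩ (ball (0 : Rn N) r \ P.K),
        ENNReal.ofReal (‖gradient P.u x‖ ^ 2)) +
      ENNReal.ofReal ((r / (1 - c)) ^ (N - 1)) * μH[(N : ℝ) - 1] (sphere (0 : Rn N) 1) := by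
  have h := hmin 0 r hr (Qf N P r c) (Qf_comp N P hr hc)
  unfold MSEnergy at h
  refine (le_self_add.trans h).trans ?_
  refine add_le_add ?_ ?_
  · change (∫⁻ x in ball (0 : Rn N) r \ Lf N P r c,
      ENNReal.ofReal (‖gradient ((Uf N P r c).indicator P.u) x‖ ^ 2)) ≤ _
    have hLc : IsClosed (Lf N P r c) := (Qf N P r c).closed
    have hm : MeasurableSet (ball (0 : Rn N) r \ Lf N P r c) :=
      measurableSet_ball.diff hLc.measurableSet
    calc _ ≤ ∫⁻ x in ball (0 : Rn N) r \ Lf N P r c,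
          (Uf N P r c).indicator (fun x => ENNReal.ofReal (‖gradient P.u x‖ ^ 2)) x := by
          refine setLIntegral_mono' hm ?_
          rintro x ⟨hb, hL⟩
          rcases Lf_compl N P hL with ⟨h, -⟩ | h
          · rw [indicator_of_mem h, grad_U N P h]
          · rw [grad_V N P h]; simp
      _ = ∫⁻ x in Uf N P r c ∩ (ball (0 : Rn N) r \ Lf N P r c),
          ENNReal.ofReal (‖gradient P.u x‖ ^ 2) := by
          rw [lintegral_indicator (Uf_open N P r c).measurableSet,
            Measure.restrict_restrict (Uf_open N P r c).measurableSet]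
      _ ≤ _ := by
          apply lintegral_mono_set
          rintro x ⟨hU, hb, -⟩
          refine ⟨?_, hb, Uf_K N P hU hb⟩
          have h1 : infDist x (insert 0 P.K) ≤ ‖x‖ := by
            simpa using infDist_le_dist_of_mem (x := x) (mem_insert (0 : Rn N) P.K)
          simp only [Uf, hf, mem_setOf_eq, mem_ball_zero_iff] at hU hb ⊢
          nlinarith
  · refine (measure_mono ?_).trans (Gf_meas N hN P hr hc hc1)
    rintro x ⟨h | h, hb⟩
    · exact absurd hb h.2
    · exact h

lemma tail_tendsto (N : ℕ) (P : MSPair N) {r : ℝ} (hr : 0 < r) :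
    Tendsto (fun n : ℕ => ∫⁻ x in {x : Rn N | r - (1 / ((n : ℝ) + 2)) * r < ‖x‖} ∩
      (ball (0 : Rn N) r \ P.K), ENNReal.ofReal (‖gradient P.u x‖ ^ 2)) atTop (𝓝 0) := by
  have hmeas : ∀ a : ℝ, MeasurableSet {x : Rn N | a < ‖x‖} := fun a =>
    (isOpen_lt continuous_const continuous_norm).measurableSet
  set ν := (volume.restrict (ball (0 : Rn N) r \ P.K)).withDensity
    (fun x => ENNReal.ofReal (‖gradient P.u x‖ ^ 2)) with hν
  have hfin : ν univ ≠ ∞ := by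
    rw [hν, withDensity_apply _ MeasurableSet.univ, Measure.restrict_univ]
    have := (P.integ r hr).lintegral_lt_top
    refine (lt_of_le_of_lt (lintegral_mono fun x => ?_) this).ne
    exact ENNReal.ofReal_le_ofReal (by nlinarith [sq_nonneg (P.u x)])
  have hB : ν (ball 0 r)ᶜ = 0 := by
    rw [hν, withDensity_apply _ measurableSet_ball.compl,
      Measure.restrict_restrict measurableSet_ball.compl]
    have : (ball (0 : Rn N) r)ᶜ ∩ (ball 0 r \ P.K) = ∅ := by
      ext x; simp; intro h1 h2; linarith
    rw [this]; simp
  have hanti : Antitone (fun n : ℕ => {x : Rn N | r - (1 / ((n : ℝ) + 2)) * r < ‖x‖}) := by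
    intro m n hmn x hx
    simp only [mem_setOf_eq] at hx ⊢
    have : 1 / ((n : ℝ) + 2) ≤ 1 / ((m : ℝ) + 2) := by gcongr
    nlinarith
  have ht := tendsto_measure_iInter_atTop (μ := ν)
    (fun n : ℕ => (hmeas (r - (1 / ((n : ℝ) + 2)) * r)).nullMeasurableSet) hanti
    ⟨0, ne_top_of_le_ne_top hfin (measure_mono (subset_univ _))⟩
  have hI : ν (⋂ n : ℕ, {x : Rn N | r - (1 / ((n : ℝ) + 2)) * r < ‖x‖}) = 0 := by
    refine measure_mono_null ?_ hB
    intro x hx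
    simp only [mem_iInter, mem_setOf_eq] at hx
    simp only [mem_compl_iff, mem_ball_zero_iff, not_lt]
    have hl : Tendsto (fun n : ℕ => r - (1 / ((n : ℝ) + 2)) * r) atTop (𝓝 (r - 0 * r)) := by
      refine tendsto_const_nhds.sub (Tendsto.mul_const r ?_)
      exact tendsto_const_nhds.div_atTop
        (tendsto_atTop_add_const_right _ _ tendsto_natCast_atTop_atTop)
    have := le_of_tendsto' hl (fun n => (hx n).le)
    simpa using this
  rw [hI] at ht
  refine ht.congr fun n => ?_
  simp only [Function.comp, hν]
  rw [withDensity_apply _ (hmeas _), Measure.restrict_restrict (hmeas _)]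

end Helpers

/-- elementary energy estimate. For every global Mumford–Shah
minimizer `(u, K)` in `ℝ^N` and every `r > 0`,
`∫_{B_r ∖ K} |∇u|² dx ≤ ω_N r^{N-1}`, where `ω_N = H^{N-1}(S^{N-1})`. -/
theorem statement14 {N : ℕ} (P : MSPair N) (hmin : IsGlobalMin N P) :
    ∀ r : ℝ, 0 < r →
      (∫⁻ x in ball (0 : Rn N) r \ P.K, ENNReal.ofReal (‖gradient P.u x‖ ^ 2)) ≤
        μH[(N : ℝ) - 1] (sphere (0 : Rn N) 1) * ENNReal.ofReal (r ^ (N - 1)) := by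
  intro r hr
  rcases Nat.eq_zero_or_pos N with h0 | hN
  · subst h0
    have : ∀ x : Rn 0, ENNReal.ofReal (‖gradient P.u x‖ ^ 2) = 0 := by
      intro x
      rw [Subsingleton.elim (gradient P.u x) 0]; simp
    simp [this]
  · have h2 : Tendsto (fun n : ℕ => ENNReal.ofReal ((r / (1 - 1 / ((n : ℝ) + 2))) ^ (N - 1)))
        atTop (𝓝 (ENNReal.ofReal (r ^ (N - 1)))) := by
      apply ENNReal.tendsto_ofReal
      have hl : Tendsto (fun n : ℕ => 1 / ((n : ℝ) + 2)) atTop (𝓝 0) :=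
        tendsto_const_nhds.div_atTop
          (tendsto_atTop_add_const_right _ _ tendsto_natCast_atTop_atTop)
      have h3 : Tendsto (fun n : ℕ => r / (1 - 1 / ((n : ℝ) + 2))) atTop (𝓝 (r / (1 - 0))) :=
        tendsto_const_nhds.div (tendsto_const_nhds.sub hl) (by norm_num)
      simpa using h3.pow (N - 1)
    have h4 := ENNReal.Tendsto.mul_const (b := μH[(N : ℝ) - 1] (sphere (0 : Rn N) 1)) h2
      (Or.inl (by simpa using pow_pos hr (N - 1)))
    have h5 := (tail_tendsto N P hr).add h4
    rw [zero_add, mul_comm] at h5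
    refine ge_of_tendsto' h5 fun n => ?_
    refine main_step N hN P hmin hr (by positivity) ?_
    rw [div_lt_one (by positivity)]
    have : (0 : ℝ) ≤ n := n.cast_nonneg
    linarith
end
end
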